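/- For every ρ > 0 there exists c = c(ρ) > 0 such that for every n ≥ 1 and every even domain D containing Λ_{ρn,n}, φ_D^0[H_{h≥0}(Λ_{ρn,n})] ≥ c. -/

import Mathlib

open scoped BigOperators

namespace SquareIce

/-- Vertices of the square lattice `ℤ²`. -/
abbrev V : Type := ℤ × ℤ

/-- Nearest-neighbour adjacency: Euclidean distance 1. -/
def adj (u v : V) : Prop := (u.1 - v.1).natAbs + (u.2 - v.2).natAbs = 1

/-- Diagonal (`×`) adjacency: Euclidean distance `√2`. -/
def xadj (u v : V) : Prop := (u.1 - v.1).natAbs = 1 ∧ (u.2 - v.2).natAbs = 1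

/-- `*`-adjacency: graph distance exactly 2 in `ℤ²`. -/
def starAdj (u v : V) : Prop := (u.1 - v.1).natAbs + (u.2 - v.2).natAbs = 2

/-- A vertex is even when the sum of its coordinates is even. -/
def IsEvenV (v : V) : Prop := Even (v.1 + v.2)

/-- Squared Euclidean distance between two vertices. -/
def distSq (u v : V) : ℤ := (u.1 - v.1) ^ 2 + (u.2 - v.2) ^ 2

/-- Sup-norm of a vertex. -/
def infNorm (v : V) : ℤ := max |v.1| |v.2|

/-- `h` is a height function on `D` (normalised to vanish outside `D`):
increments of absolute value one along edges of `D`, and even values on even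
vertices (equivalently, `h v` has the parity of `v.1 + v.2`). -/
def IsHeightFn (D : Set V) (h : V → ℤ) : Prop :=
  (∀ u v, u ∈ D → v ∈ D → adj u v → |h u - h v| = 1) ∧
  (∀ v ∈ D, Even (h v + v.1 + v.2)) ∧ (∀ v, v ∉ D → h v = 0)

/-- Boundary of `D`: vertices of `D` with a nearest neighbour outside `D`. -/
def bdry (D : Set V) : Set V := {v | v ∈ D ∧ ∃ u, u ∉ D ∧ adj u v}

/-- `A` and `B` are joined by a `rel`-path all of whose vertices lie in `S`. -/
def Connected (rel : V → V → Prop) (S A B : Set V) : Prop :=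
  ∃ p : List V, ∃ hp : p ≠ [], List.Chain' rel p ∧ (∀ v ∈ p, v ∈ S) ∧
    p.head hp ∈ A ∧ p.getLast hp ∈ B

/-- `S` is the vertex set of a closed `×`-path. -/
def IsXCircuit (S : Set V) : Prop :=
  ∃ p : List V, ∃ hp : p ≠ [], List.Chain' xadj p ∧ p.head hp = p.getLast hp ∧
    {v | v ∈ p} = S

/-- A domain: a finite set whose boundary is a `×`-circuit. -/
def IsDomain (D : Set V) : Prop := D.Finite ∧ IsXCircuit (bdry D)

/-- An even domain: a domain whose boundary consists of even vertices. -/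
def IsEvenDomain (D : Set V) : Prop := IsDomain D ∧ ∀ v ∈ bdry D, IsEvenV v

/-- Height functions on `D` whose value at every `v ∈ B` lies in `κ v`. -/
def HomSet (D B : Set V) (κ : V → Set ℤ) : Set (V → ℤ) :=
  {h | IsHeightFn D h ∧ ∀ v ∈ B, h v ∈ κ v}

/-- Height functions on `D` with prescribed boundary values `κ` on `∂D`. -/
def HomBC (D : Set V) (κ : V → ℤ) : Set (V → ℤ) :=
  {h | IsHeightFn D h ∧ ∀ v ∈ bdry D, h v = κ v}

/-- Height functions on `D` vanishing on `∂D`. -/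
def Hom0 (D : Set V) : Set (V → ℤ) := HomBC D (fun _ => 0)

/-- Probability of `A` under the uniform measure on the finite set `S`. -/
noncomputable def pr {α : Type*} (S A : Set α) : ℝ :=
  (Nat.card (S ∩ A : Set α) : ℝ) / (Nat.card S : ℝ)

/-- Expectation of `f` under the uniform measure on the finite set `S`. -/
noncomputable def expec {α : Type*} (S : Set α) (f : α → ℝ) : ℝ :=
  (∑ᶠ x ∈ S, f x) / (Nat.card S : ℝ)

/-- The box `Λ_{a,b} = ([-a,a] × [-b,b]) ∩ ℤ²`. -/
def Lam2 (a b : ℤ) : Set V := {v | |v.1| ≤ a ∧ |v.2| ≤ b}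

/-- The box `Λ_a`. -/
def Lam (a : ℤ) : Set V := Lam2 a a

def leftSide (a b : ℤ) : Set V := {v | v.1 = -a ∧ |v.2| ≤ b}
def rightSide (a b : ℤ) : Set V := {v | v.1 = a ∧ |v.2| ≤ b}
def topSide (a b : ℤ) : Set V := {v | |v.1| ≤ a ∧ v.2 = b}
def botSide (a b : ℤ) : Set V := {v | |v.1| ≤ a ∧ v.2 = -b}

/-- Horizontal crossing of `Λ_{a,b}` by a `rel`-path of vertices satisfying `P`. -/
def HCross (rel : V → V → Prop) (a b : ℤ) (P : V → Prop) : Prop :=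
  Connected rel {v | v ∈ Lam2 a b ∧ P v} (leftSide a b) (rightSide a b)

/-- Vertical crossing of `Λ_{a,b}` by a `rel`-path of vertices satisfying `P`. -/
def VCross (rel : V → V → Prop) (a b : ℤ) (P : V → Prop) : Prop :=
  Connected rel {v | v ∈ Lam2 a b ∧ P v} (topSide a b) (botSide a b)

/-- `F` is increasing with respect to the pointwise order on `D`. -/
def IncreasingOn (D : Set V) (F : (V → ℤ) → ℝ) : Prop :=
  ∀ h h' : V → ℤ, (∀ v ∈ D, h v ≤ h' v) → F h ≤ F h'

/-- The even box `Λ_m^even`: everything inside or on the even `×`-circuit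
surrounding the origin contained in `Λ_{m+1} ∖ Λ_{m-1}`. -/
def LamEven (m : ℤ) : Set V := Lam m ∪ {v | infNorm v = m + 1 ∧ IsEvenV v}

/-- A quad: a domain `D` together with an enumeration `p` of its boundary
`×`-circuit (closed: first vertex repeated at the end) and marked points
`a = p[0]`, `b = p[ib]`, `c = p[ic]`, `d = p[idx]` in cyclic order. -/
structure Quad where
  D : Set V
  p : List V
  hp : p ≠ []
  hchain : List.Chain' xadj p
  hclosed : p.head hp = p.getLast hp
  hbd : {v | v ∈ p} = bdry D
  hfin : D.Finite
  ib : ℕ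
  ic : ℕ
  idx : ℕ
  h0b : 0 < ib
  hbc : ib < ic
  hcd : ic < idx
  hdlen : idx + 1 < p.length

namespace Quad

def ptA (q : Quad) : V := q.p.head q.hp
def ptB (q : Quad) : V := q.p.getD q.ib ((0 : ℤ), (0 : ℤ))
def ptC (q : Quad) : V := q.p.getD q.ic ((0 : ℤ), (0 : ℤ))
def ptD (q : Quad) : V := q.p.getD q.idx ((0 : ℤ), (0 : ℤ))

/-- The (closed) arc `[ab]` of the boundary of a quad. -/
def arcAB (q : Quad) : Set V := {v | v ∈ q.p.take (q.ib + 1)}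

/-- The (closed) arc `[bc]` of the boundary of a quad. -/
def arcBC (q : Quad) : Set V := {v | v ∈ (q.p.drop q.ib).take (q.ic - q.ib + 1)}

/-- The (closed) arc `[cd]` of the boundary of a quad. -/
def arcCD (q : Quad) : Set V := {v | v ∈ (q.p.drop q.ic).take (q.idx - q.ic + 1)}

/-- The (closed) arc `[da]` of the boundary of a quad. -/
def arcDA (q : Quad) : Set V := {v | v ∈ q.p.drop q.idx}

/-- The open arc `(bc)` (excluding the endpoints `b` and `c`). -/
def openBC (q : Quad) : Set V :=
  {v | v ∈ (((q.p.drop q.ib).take (q.ic - q.ib + 1)).drop 1).dropLast}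

/-- The open arc `(da)` (excluding the endpoints `d` and `a`). -/
def openDA (q : Quad) : Set V := {v | v ∈ ((q.p.drop q.idx).drop 1).dropLast}

end Quad

/-!
Put `g = h + 1` and extend it to the plane. Then `g` is odd on even sites, so its zeros lie on odd
sites, and a nearest-neighbour path without zeros of `g` has constant sign, which is positive with
probability at least `1/4` once we condition on `|g|`. It therefore suffices that `|g|` has no
vertical `×`-path of zeros in the rectangle, with probability bounded below. Events increasing in
`|g|` are positively correlated: `|g|` satisfies the lattice condition of the four functions
theorem, because the sign changes compatible with `|g|` form a group whose size is supermodular in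
`|g|`.

The symmetry `g ↦ 2 - g` on the inner vertices turns zeros into twos. So if zero paths of a given
type are likely, so are walls of nonzero sites of that type. Explore the outermost walls from two
opposite sides of a region with a reflection symmetry. Given these walls, the reflection and planar
duality link them to each other by nonzero sites with probability at least `1/8`, and then no zero
path gets through. With the diagonal reflection of a square this excludes vertical crossings of the
square, and with the reflection of a rectangle in a column it excludes zero paths that start to the
left of the column and reach it. A vertical crossing of a rectangle of aspect ratio `ρ` has to cross
a square or reach one of `O(ρ)` columns, and the positive correlation combines these estimates.
-/

/-- Sites with odd coordinate sum, in a form `omega` reads. -/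
def OddSite (v : V) : Prop := (v.1 + v.2) % 2 = 1

/-- Sites with even coordinate sum, in a form `omega` reads. -/
def EvenSite (v : V) : Prop := (v.1 + v.2) % 2 = 0

lemma evenSite_or_oddSite (v : V) : EvenSite v ∨ OddSite v := by
  unfold EvenSite OddSite; omega

lemma not_oddSite {v : V} : ¬OddSite v ↔ EvenSite v := by unfold EvenSite OddSite; omega

lemma not_evenSite {v : V} : ¬EvenSite v ↔ OddSite v := by unfold EvenSite OddSite; omega

lemma adj.symm {u v : V} (h : adj u v) : adj v u := by unfold adj at *; omega

lemma xadj.symm {u v : V} (h : xadj u v) : xadj v u := by unfold xadj at *; omega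

lemma adj.evenSite_iff {u v : V} (h : adj u v) : EvenSite u ↔ OddSite v := by
  unfold adj EvenSite OddSite at *; omega

lemma adj.oddSite_iff {u v : V} (h : adj u v) : OddSite u ↔ EvenSite v := by
  unfold adj EvenSite OddSite at *; omega

lemma xadj.oddSite_iff {u v : V} (h : xadj u v) : OddSite u ↔ OddSite v := by
  unfold xadj OddSite at *; omega

/-- The smallest non-negative shifted height function: `1` on even sites, `0` on odd sites. It is
the boundary condition `0` after the shift `g = h + 1`. -/
def baseHeight (v : V) : ℤ := 1 - (v.1 + v.2) % 2

lemma baseHeight_of_evenSite {v : V} (h : EvenSite v) : baseHeight v = 1 := by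
  unfold baseHeight EvenSite at *; omega

lemma baseHeight_of_oddSite {v : V} (h : OddSite v) : baseHeight v = 0 := by
  unfold baseHeight OddSite at *; omega

/-- Shifted height functions `g = h + 1` on the whole plane: odd values on even sites, even values
on odd sites. The shift confines the zeros to the odd sites. -/
structure IsHeight (g : V → ℤ) : Prop where
  abs_sub : ∀ ⦃u v⦄, adj u v → |g u - g v| = 1
  parity : ∀ v, (g v + v.1 + v.2) % 2 = 1

namespace IsHeight

variable {f g : V → ℤ} {u v : V}

lemma sub_eq (h : IsHeight g) (huv : adj u v) : g u - g v = 1 ∨ g u - g v = -1 :=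
  (abs_eq zero_le_one).1 (h.abs_sub huv)

lemma even_of_oddSite (h : IsHeight g) (hv : OddSite v) : g v % 2 = 0 := by
  have := h.parity v; unfold OddSite at hv; omega

lemma odd_of_evenSite (h : IsHeight g) (hv : EvenSite v) : g v % 2 = 1 := by
  have := h.parity v; unfold EvenSite at hv; omega

lemma oddSite_of_eq_zero (h : IsHeight g) (h0 : g v = 0) : OddSite v := by
  have := h.parity v; unfold OddSite; omega

lemma of_evenSite (hpar : ∀ v, (g v + v.1 + v.2) % 2 = 1)
    (hsub : ∀ u v, adj u v → EvenSite u → OddSite v → g u - g v = 1 ∨ g u - g v = -1) :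
    IsHeight g := by
  refine ⟨fun u v huv => (abs_eq zero_le_one).2 ?_, hpar⟩
  rcases evenSite_or_oddSite u with hu | hu
  · exact hsub u v huv hu (huv.evenSite_iff.1 hu)
  · have := hsub v u huv.symm (huv.oddSite_iff.1 hu) hu
    omega

lemma inf (hf : IsHeight f) (hg : IsHeight g) : IsHeight (f ⊓ g) := by
  refine ⟨fun u v huv => (abs_eq zero_le_one).2 ?_, fun v => ?_⟩ <;> simp only [Pi.inf_apply]
  · have := hf.sub_eq huv
    have := hg.sub_eq huv
    have := hf.parity u
    have := hg.parity u
    omega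
  · have := hf.parity v
    have := hg.parity v
    omega

lemma sup (hf : IsHeight f) (hg : IsHeight g) : IsHeight (f ⊔ g) := by
  refine ⟨fun u v huv => (abs_eq zero_le_one).2 ?_, fun v => ?_⟩ <;> simp only [Pi.sup_apply]
  · have := hf.sub_eq huv
    have := hg.sub_eq huv
    have := hf.parity u
    have := hg.parity u
    omega
  · have := hf.parity v
    have := hg.parity v
    omega

lemma abs (hg : IsHeight g) : IsHeight |g| := by
  refine ⟨fun u v huv => (abs_eq zero_le_one).2 ?_, fun v => ?_⟩ <;> simp only [Pi.abs_apply]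
  · have := hg.sub_eq huv
    have := hg.parity u
    rcases abs_cases (g u) with h | h <;> rcases abs_cases (g v) with h' | h' <;> omega
  · have := hg.parity v
    rcases abs_cases (g v) with h | h <;> omega

/-- Next to a nonzero odd site, where `|g| ≥ 2`, all heights have the same sign. -/
lemma pos_iff_of_adj (hg : IsHeight g) (huv : adj u v) (hv : OddSite v) (h0 : g v ≠ 0) :
    0 < g u ↔ 0 < g v := by
  have := hg.sub_eq huv
  have := hg.even_of_oddSite hv
  omega

lemma abs_sub_right_le (hg : IsHeight g) (x y : ℤ) (k : ℕ) :
    |g (x, y) - g (x + k, y)| ≤ k := by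
  induction k with
  | zero => simp
  | succ k ih =>
    have := hg.sub_eq (u := (x + k, y)) (v := (x + (k + 1 : ℕ), y)) (by simp [adj])
    rw [abs_le] at *
    omega

end IsHeight

lemma isHeight_baseHeight : IsHeight baseHeight := by
  refine .of_evenSite (fun v => by unfold baseHeight; omega) fun u v _ hu hv => ?_
  rw [baseHeight_of_evenSite hu, baseHeight_of_oddSite hv]
  omega

/-- Shifted height functions equal to `τ` off `F`. -/
def Heights (F : Set V) (τ : V → ℤ) : Set (V → ℤ) := {g | IsHeight g ∧ ∀ v ∉ F, g v = τ v}

section Heights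

variable {F : Set V} {τ τ' f g : V → ℤ}

lemma inf_mem_heights (hf : f ∈ Heights F τ) (hg : g ∈ Heights F τ') :
    f ⊓ g ∈ Heights F (τ ⊓ τ') :=
  ⟨hf.1.inf hg.1, fun v hv => by simp [hf.2 v hv, hg.2 v hv]⟩

lemma sup_mem_heights (hf : f ∈ Heights F τ) (hg : g ∈ Heights F τ') :
    f ⊔ g ∈ Heights F (τ ⊔ τ') :=
  ⟨hf.1.sup hg.1, fun v hv => by simp [hf.2 v hv, hg.2 v hv]⟩

lemma abs_mem_heights (hg : g ∈ Heights F baseHeight) : |g| ∈ Heights F baseHeight :=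
  ⟨hg.1.abs, fun v hv => by
    rw [Pi.abs_apply, hg.2 v hv]
    exact abs_of_nonneg (by unfold baseHeight; omega)⟩

lemma abs_apply_le_of_mem_heights {M : ℤ} (hM : ∀ v ∈ F, v.1 < M) (hg : g ∈ Heights F τ) {v : V}
    (hv : v ∈ F) : |g v| ≤ |τ (M, v.2)| + (M - v.1) := by
  have hlt := hM v hv
  have hrow := hg.1.abs_sub_right_le v.1 v.2 (M - v.1).toNat
  have hcast : ((M - v.1).toNat : ℤ) = M - v.1 := by omega
  have hout : ((M, v.2) : V) ∉ F := fun h => lt_irrefl M (hM _ h)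
  rw [hcast, add_sub_cancel, hg.2 _ hout] at hrow
  linarith [abs_sub_abs_le_abs_sub (g v) (τ (M, v.2))]

lemma finite_heights (hF : F.Finite) (τ : V → ℤ) : (Heights F τ).Finite := by
  obtain ⟨M, hM⟩ : ∃ M : ℤ, ∀ v ∈ F, v.1 < M := by
    obtain ⟨M, hM⟩ := (hF.image Prod.fst).bddAbove
    exact ⟨M + 1, fun v hv => Int.lt_add_one_of_le (hM ⟨v, hv, rfl⟩)⟩
  have : Finite F := hF
  refine Set.Finite.of_finite_image (f := fun g (v : F) => g v) ?_ ?_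
  · refine (Set.Finite.pi' fun v : F => Set.finite_Icc (-(|τ (M, v.1.2)| + (M - v.1.1)))
      (|τ (M, v.1.2)| + (M - v.1.1))).subset ?_
    rintro _ ⟨g, hg, rfl⟩ v
    exact abs_le.1 (abs_apply_le_of_mem_heights hM hg v.2)
  · intro g hg g' hg' h
    funext v
    by_cases hv : v ∈ F
    · exact congrFun h ⟨v, hv⟩
    · rw [hg.2 v hv, hg'.2 v hv]

end Heights

/-! ### Positive correlation of absolute values -/

/-- The even site that carries the sign of `v`: `v` itself or its right neighbour. -/
def signSite (v : V) : V := if (v.1 + v.2) % 2 = 0 then v else (v.1 + 1, v.2)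

lemma signSite_of_evenSite {v : V} (h : EvenSite v) : signSite v = v := if_pos h

lemma adj_signSite {v : V} (h : OddSite v) : adj (signSite v) v := by
  unfold signSite OddSite at *
  rw [if_neg (by omega)]
  simp [adj]

/-- The sign changes of a non-negative `f` that preserve height functions: signs on the even sites,
trivial off `F`, agreeing around every odd site at which `f` does not vanish. -/
def signGroup (F : Set V) (f : V → ℤ) : Subgroup (V → ℤˣ) where
  carrier := {ε | (∀ v, OddSite v → ε v = 1) ∧ (∀ v ∉ F, ε v = 1) ∧
    ∀ v, OddSite v → f v ≠ 0 → ∀ u w, adj u v → adj w v → ε u = ε w}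
  mul_mem' := by
    rintro ε δ ⟨hε, hεF, hεf⟩ ⟨hδ, hδF, hδf⟩
    refine ⟨fun v hv => by simp [hε v hv, hδ v hv], fun v hv => by simp [hεF v hv, hδF v hv], ?_⟩
    intro v hv hf u w hu hw
    simp [hεf v hv hf u w hu hw, hδf v hv hf u w hu hw]
  one_mem' := by simp
  inv_mem' := by
    rintro ε ⟨hε, hεF, hεf⟩
    refine ⟨fun v hv => by simp [hε v hv], fun v hv => by simp [hεF v hv], ?_⟩
    intro v hv hf u w hu hw
    simp [hεf v hv hf u w hu hw]

/-- The function `f` with the sign of every site read off at its `signSite`. -/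
def applySigns (f : V → ℤ) (ε : V → ℤˣ) : V → ℤ := fun v => ε (signSite v) * f v

/-- The height functions with absolute value `f`. -/
def withAbs (F : Set V) (f : V → ℤ) : Set (V → ℤ) := {g | g ∈ Heights F baseHeight ∧ |g| = f}

section Signs

variable {F : Set V} {f f' g : V → ℤ}

lemma applySigns_eq_or_neg (f : V → ℤ) (ε : V → ℤˣ) (v : V) :
    applySigns f ε v = f v ∨ applySigns f ε v = -f v := by
  rcases Int.units_eq_one_or (ε (signSite v)) with h | h <;> simp [applySigns, h]

lemma abs_applySigns (h0 : 0 ≤ f) (ε : V → ℤˣ) : |applySigns f ε| = f := by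
  funext v
  rw [Pi.abs_apply]
  rcases applySigns_eq_or_neg f ε v with h | h
  · rw [h, abs_of_nonneg (h0 v)]
  · rw [h, abs_neg, abs_of_nonneg (h0 v)]

lemma applySigns_mem_withAbs (hf : f ∈ Heights F baseHeight) (h0 : 0 ≤ f) {ε : V → ℤˣ}
    (hε : ε ∈ signGroup F f) : applySigns f ε ∈ withAbs F f := by
  obtain ⟨-, hεF, hεf⟩ := hε
  refine ⟨⟨.of_evenSite (fun v => ?_) fun u v huv hu hv => ?_, fun v hv => ?_⟩,
    abs_applySigns h0 ε⟩
  · have := hf.1.parity v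
    rcases applySigns_eq_or_neg f ε v with h | h <;> omega
  · have hsub := hf.1.sub_eq huv
    have hu0 := h0 u
    have hv0 := h0 v
    simp only [Pi.zero_apply] at hu0 hv0
    by_cases hfv : f v = 0
    · rcases applySigns_eq_or_neg f ε v with h | h <;>
        rcases applySigns_eq_or_neg f ε u with h' | h' <;> omega
    · have hsign : ε (signSite u) = ε (signSite v) := by
        rw [signSite_of_evenSite hu]
        exact hεf v hv hfv _ _ huv (adj_signSite hv)
      unfold applySigns
      rw [hsign]
      rcases Int.units_eq_one_or (ε (signSite v)) with h | h <;> rw [h] <;> push_cast <;> omega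
  · rcases evenSite_or_oddSite v with h | h
    · simp [applySigns, signSite_of_evenSite h, hεF v hv, hf.2 v hv]
    · simp [applySigns, hf.2 v hv, baseHeight_of_oddSite h]

lemma injOn_applySigns (hf : f ∈ Heights F baseHeight) :
    Set.InjOn (applySigns f) (signGroup F f) := by
  intro ε hε δ hδ h
  funext v
  rcases evenSite_or_oddSite v with hv | hv
  · have hfv : f v ≠ 0 := by have := hf.1.odd_of_evenSite hv; omega
    have hv' := congrFun h v
    simp only [applySigns, signSite_of_evenSite hv] at hv'
    exact Units.ext (mul_right_cancel₀ hfv hv')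
  · rw [hε.1 v hv, hδ.1 v hv]

/-- The signs of `g` on even sites, and `1` on odd sites. -/
noncomputable def evenSigns (g : V → ℤ) : V → ℤˣ :=
  open Classical in fun v => if OddSite v ∨ 0 < g v then 1 else -1

lemma evenSigns_mem_signGroup (hg : g ∈ Heights F baseHeight) : evenSigns g ∈ signGroup F |g| := by
  refine ⟨fun v hv => if_pos (.inl hv), fun v hv => if_pos ?_, fun v hv h0 u w hu hw => ?_⟩
  · rw [hg.2 v hv]
    rcases evenSite_or_oddSite v with h | h
    · exact .inr (by simp [baseHeight_of_evenSite h])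
    · exact .inl h
  · have h0' : g v ≠ 0 := by simpa using h0
    have hodd {x : V} (hx : adj x v) : ¬OddSite x := not_oddSite.2 (hx.evenSite_iff.2 hv)
    simp [evenSigns, hodd hu, hodd hw, hg.1.pos_iff_of_adj hu hv h0',
      hg.1.pos_iff_of_adj hw hv h0']

lemma evenSigns_mul_abs (hg : IsHeight g) (v : V) : evenSigns g (signSite v) * |g v| = g v := by
  by_cases h0 : g v = 0
  · simp [h0]
  have hsign : ¬OddSite (signSite v) ∧ (0 < g (signSite v) ↔ 0 < g v) := by
    rcases evenSite_or_oddSite v with h | h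
    · rw [signSite_of_evenSite h]
      exact ⟨not_oddSite.2 h, Iff.rfl⟩
    · exact ⟨not_oddSite.2 ((adj_signSite h).evenSite_iff.2 h),
        hg.pos_iff_of_adj (adj_signSite h) h h0⟩
  rcases lt_or_ge 0 (g v) with hpos | hneg
  · simp [evenSigns, hsign, hpos, abs_of_pos]
  · simp [evenSigns, hsign, hneg.not_gt, abs_of_nonpos hneg]

lemma applySigns_image (hf : f ∈ Heights F baseHeight) (h0 : 0 ≤ f) :
    applySigns f '' (signGroup F f) = withAbs F f := by
  ext g
  constructor
  · rintro ⟨ε, hε, rfl⟩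
    exact applySigns_mem_withAbs hf h0 hε
  · rintro ⟨hg, rfl⟩
    exact ⟨evenSigns g, evenSigns_mem_signGroup hg, funext (evenSigns_mul_abs hg.1)⟩

lemma finite_withAbs (hF : F.Finite) (f : V → ℤ) : (withAbs F f).Finite :=
  (finite_heights hF baseHeight).subset fun _ h => h.1

lemma finite_signGroup (hF : F.Finite) (hf : f ∈ Heights F baseHeight) (h0 : 0 ≤ f) :
    (signGroup F f : Set (V → ℤˣ)).Finite :=
  .of_finite_image (by rw [applySigns_image hf h0]; exact finite_withAbs hF f)
    (injOn_applySigns hf)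

lemma card_signGroup (hf : f ∈ Heights F baseHeight) (h0 : 0 ≤ f) :
    Nat.card (signGroup F f) = (withAbs F f).ncard := by
  rw [← applySigns_image hf h0, (injOn_applySigns hf).ncard_image]
  rfl

lemma signGroup_sup (h0 : 0 ≤ f) (h0' : 0 ≤ f') :
    signGroup F (f ⊔ f') = signGroup F f ⊓ signGroup F f' := by
  have hne (v : V) : (f ⊔ f') v ≠ 0 ↔ f v ≠ 0 ∨ f' v ≠ 0 := by
    have := h0 v
    have := h0' v
    simp only [Pi.sup_apply, Pi.zero_apply] at *
    omega
  ext ε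
  constructor
  · rintro ⟨hε, hεF, hεf⟩
    exact ⟨⟨hε, hεF, fun v hv h => hεf v hv ((hne v).2 (.inl h))⟩,
      ⟨hε, hεF, fun v hv h => hεf v hv ((hne v).2 (.inr h))⟩⟩
  · rintro ⟨⟨hε, hεF, hεf⟩, ⟨-, -, hεf'⟩⟩
    exact ⟨hε, hεF, fun v hv h => ((hne v).1 h).elim (hεf v hv) (hεf' v hv)⟩

lemma signGroup_anti (h0 : 0 ≤ f) (h : f ≤ f') : signGroup F f' ≤ signGroup F f := by
  rw [← sup_eq_right.2 h, signGroup_sup h0 (h0.trans h)]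
  exact inf_le_left

lemma card_mul_card_le_card_mul_card_inf {G : Type*} [Group G] {H K L : Subgroup G}
    [Finite L] (hH : H ≤ L) (hK : K ≤ L) :
    Nat.card H * Nat.card K ≤ Nat.card L * Nat.card (H ⊓ K : Subgroup G) := by
  have hindex : K.relIndex H ≤ K.relIndex L :=
    Subgroup.relIndex_le_of_le_right hH Subgroup.index_ne_zero_of_finite
  have hcard (A B : Subgroup G) (hAB : A ≤ B) : Nat.card A * A.relIndex B = Nat.card B := by
    rw [← Subgroup.card_mul_index (A.subgroupOf B), Subgroup.relIndex,
      Nat.card_congr (Subgroup.subgroupOfEquivOfLe hAB).toEquiv]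
  calc Nat.card H * Nat.card K
      = Nat.card (H ⊓ K : Subgroup G) * K.relIndex H * Nat.card K := by
        rw [← Subgroup.inf_relIndex_left, hcard _ _ inf_le_left]
    _ ≤ Nat.card (H ⊓ K : Subgroup G) * K.relIndex L * Nat.card K := by gcongr
    _ = Nat.card L * Nat.card (H ⊓ K : Subgroup G) := by rw [← hcard K L hK]; ring

lemma withAbs_eq_empty_or (F : Set V) (f : V → ℤ) :
    withAbs F f = ∅ ∨ f ∈ Heights F baseHeight ∧ 0 ≤ f := by
  refine (withAbs F f).eq_empty_or_nonempty.imp_right ?_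
  rintro ⟨g, hg, rfl⟩
  exact ⟨abs_mem_heights hg, abs_nonneg g⟩

/-- The sign groups of `f` and `f'` both lie in that of `f ⊓ f'` and meet in that of `f ⊔ f'`. -/
lemma ncard_withAbs_mul_le (hF : F.Finite) (f f' : V → ℤ) :
    (withAbs F f).ncard * (withAbs F f').ncard ≤
      (withAbs F (f ⊓ f')).ncard * (withAbs F (f ⊔ f')).ncard := by
  rcases withAbs_eq_empty_or F f with h | ⟨hf, h0⟩
  · simp [h]
  rcases withAbs_eq_empty_or F f' with h | ⟨hf', h0'⟩
  · simp [h]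
  have hi := inf_mem_heights hf hf'
  have hs := sup_mem_heights hf hf'
  rw [inf_idem] at hi
  rw [sup_idem] at hs
  have hi0 : 0 ≤ f ⊓ f' := le_inf h0 h0'
  rw [← card_signGroup hf h0, ← card_signGroup hf' h0', ← card_signGroup hi hi0,
    ← card_signGroup hs (h0.trans le_sup_left), signGroup_sup h0 h0']
  have : Finite (signGroup F (f ⊓ f')) := finite_signGroup hF hi hi0
  exact card_mul_card_le_card_mul_card_inf (signGroup_anti hi0 inf_le_left)
    (signGroup_anti hi0 inf_le_right)

end Signs

section Fibers

variable {α β : Type*} {s t : Set α}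

lemma ncard_eq_sum_ncard_fiber (hs : s.Finite) (k : α → β) (b : Finset β) (hb : ∀ a ∈ s, k a ∈ b) :
    s.ncard = ∑ i ∈ b, {a | a ∈ s ∧ k a = i}.ncard := by
  classical
  rw [Set.ncard_eq_toFinset_card _ hs, Finset.card_eq_sum_card_fiberwise (f := k) (t := b)
    fun a ha => hb a (by simpa using ha)]
  refine Finset.sum_congr rfl fun i _ => ?_
  rw [← Set.ncard_coe_finset]
  congr 1
  ext a
  simp

lemma ncard_le_mul_of_fiber_le (hs : s.Finite) (k : α → β) (c : ℕ) (hts : t ⊆ s)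
    (h : ∀ a ∈ s, {x | x ∈ s ∧ k x = k a}.ncard ≤ c * {x | x ∈ t ∧ k x = k a}.ncard) :
    s.ncard ≤ c * t.ncard := by
  have hb : ∀ a ∈ s, k a ∈ (hs.image k).toFinset := fun a ha => by
    rw [Set.Finite.mem_toFinset]
    exact ⟨a, ha, rfl⟩
  rw [ncard_eq_sum_ncard_fiber hs k _ hb,
    ncard_eq_sum_ncard_fiber (hs.subset hts) k _ fun a ha => hb a (hts ha), Finset.mul_sum]
  refine Finset.sum_le_sum fun i hi => ?_
  obtain ⟨a, ha, rfl⟩ := (Set.Finite.mem_toFinset _).1 hi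
  exact h a ha

end Fibers

/-- The number of height functions `g` whose absolute value satisfies `A`; the uniform law of `|g|`
up to normalisation. -/
noncomputable def absCount (F : Set V) (A : (V → ℤ) → Prop) : ℕ :=
  {g | g ∈ Heights F baseHeight ∧ A |g|}.ncard

section FKG

variable {F : Set V} {A A₁ A₂ A₃ A₄ : (V → ℤ) → Prop}

open Classical in
lemma absCount_eq_sum (hF : F.Finite) (A : (V → ℤ) → Prop) :
    absCount F A =
      ∑ f ∈ ((finite_heights hF baseHeight).image fun g => |g|).toFinset.filter A,
        (withAbs F f).ncard := by
  unfold absCount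
  rw [ncard_eq_sum_ncard_fiber ((finite_heights hF baseHeight).subset fun g hg => hg.1)
    (fun g => |g|)]
  · refine Finset.sum_congr rfl fun f hf => congrArg Set.ncard (Set.ext fun g => ?_)
    have hA := (Finset.mem_filter.1 hf).2
    constructor
    · rintro ⟨⟨hg, -⟩, hgf⟩
      exact ⟨hg, hgf⟩
    · rintro ⟨hg, hgf⟩
      exact ⟨⟨hg, hgf.symm ▸ hA⟩, hgf⟩
  · rintro g ⟨hg, hA⟩
    simp only [Finset.mem_filter, Set.Finite.mem_toFinset]
    exact ⟨⟨g, hg, rfl⟩, hA⟩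

/-- The FKG lattice condition for `|g|` in four-functions form. -/
lemma absCount_mul_le (hF : F.Finite)
    (h : ∀ f f', 0 ≤ f → 0 ≤ f' → A₁ f → A₂ f' → A₃ (f ⊓ f') ∧ A₄ (f ⊔ f')) :
    absCount F A₁ * absCount F A₂ ≤ absCount F A₃ * absCount F A₄ := by
  classical
  set Φ := ((finite_heights hF baseHeight).image fun g => |g|).toFinset with hΦ
  have mem_of_ne {f : V → ℤ} (hf : (withAbs F f).ncard ≠ 0) : f ∈ Φ := by
    obtain ⟨g, hg, rfl⟩ := Set.nonempty_of_ncard_ne_zero hf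
    rw [hΦ, Set.Finite.mem_toFinset]
    exact ⟨g, hg, rfl⟩
  have nonneg {f : V → ℤ} (hf : f ∈ Φ) : 0 ≤ f := by
    obtain ⟨g, -, rfl⟩ := (Set.Finite.mem_toFinset _).1 hf
    exact abs_nonneg g
  simp only [absCount_eq_sum hF]
  have four := four_functions_theorem (β := ℕ) (fun f => (withAbs F f).ncard)
    (fun f => (withAbs F f).ncard) (fun f => (withAbs F f).ncard) (fun f => (withAbs F f).ncard)
    (fun _ => Nat.zero_le _) (fun _ => Nat.zero_le _) (fun _ => Nat.zero_le _)
    (fun _ => Nat.zero_le _) (fun f f' => ncard_withAbs_mul_le hF f f')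
    (Φ.filter A₁) (Φ.filter A₂)
  refine four.trans (Nat.mul_le_mul (Finset.sum_le_sum_of_ne_zero ?_)
    (Finset.sum_le_sum_of_ne_zero ?_))
  · intro _ hx hne
    obtain ⟨f, hf, f', hf', rfl⟩ := Finset.mem_infs.1 hx
    rw [Finset.mem_filter] at *
    exact ⟨mem_of_ne hne, (h f f' (nonneg hf.1) (nonneg hf'.1) hf.2 hf'.2).1⟩
  · intro _ hx hne
    obtain ⟨f, hf, f', hf', rfl⟩ := Finset.mem_sups.1 hx
    rw [Finset.mem_filter] at *
    exact ⟨mem_of_ne hne, (h f f' (nonneg hf.1) (nonneg hf'.1) hf.2 hf'.2).2⟩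

lemma absCount_mono (hF : F.Finite) (h : ∀ f, IsHeight f → A₁ f → A₂ f) :
    absCount F A₁ ≤ absCount F A₂ :=
  Set.ncard_le_ncard (fun _ hg => ⟨hg.1, h _ hg.1.1.abs hg.2⟩)
    ((finite_heights hF baseHeight).subset fun _ hg => hg.1)

/-- The signs at `a` and `b` define a homomorphism from the sign group to `ℤˣ × ℤˣ`, whose kernel
has index at most `4`. -/
lemma ncard_withAbs_le_four_mul (hF : F.Finite) {f : V → ℤ} (hf : f ∈ Heights F baseHeight)
    (h0 : 0 ≤ f) {a b : V} (ha : f a ≠ 0) (hb : f b ≠ 0) :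
    (withAbs F f).ncard ≤ 4 * {g | g ∈ withAbs F f ∧ 0 < g a ∧ 0 < g b}.ncard := by
  have : Finite (signGroup F f) := finite_signGroup hF hf h0
  let χ : signGroup F f →* ℤˣ × ℤˣ :=
    { toFun := fun ε => (ε.1 (signSite a), ε.1 (signSite b))
      map_one' := rfl
      map_mul' := fun _ _ => rfl }
  have hindex : χ.ker.index ≤ 4 := by
    rw [Subgroup.index_ker]
    refine (Nat.card_le_card_of_injective _ Subtype.val_injective).trans ?_
    rw [Nat.card_eq_fintype_card]
    decide
  have hker : Nat.card χ.ker ≤ {g | g ∈ withAbs F f ∧ 0 < g a ∧ 0 < g b}.ncard := by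
    have : Finite {g | g ∈ withAbs F f ∧ 0 < g a ∧ 0 < g b} :=
      (finite_withAbs hF f).subset fun _ h => h.1
    have hmem (ε : χ.ker) :
        applySigns f ε.1.1 ∈ {g | g ∈ withAbs F f ∧ 0 < g a ∧ 0 < g b} := by
      have hχ : χ ε.1 = 1 := ε.2
      have hεa : ε.1.1 (signSite a) = 1 := congrArg Prod.fst hχ
      have hεb : ε.1.1 (signSite b) = 1 := congrArg Prod.snd hχ
      refine ⟨applySigns_mem_withAbs hf h0 ε.1.2, ?_, ?_⟩
      · simpa [applySigns, hεa] using (h0 a).lt_of_ne' ha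
      · simpa [applySigns, hεb] using (h0 b).lt_of_ne' hb
    refine Nat.card_le_card_of_injective (fun ε => (⟨_, hmem ε⟩ : Set.Elem _)) fun ε δ h => ?_
    exact Subtype.ext (Subtype.ext (injOn_applySigns hf ε.1.2 δ.1.2 (congrArg Subtype.val h)))
  calc (withAbs F f).ncard = Nat.card χ.ker * χ.ker.index := by
        rw [Subgroup.card_mul_index, card_signGroup hf h0]
    _ ≤ {g | g ∈ withAbs F f ∧ 0 < g a ∧ 0 < g b}.ncard * 4 := Nat.mul_le_mul hker hindex
    _ = _ := mul_comm _ _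

lemma absCount_le_four_mul (hF : F.Finite) {a b : (V → ℤ) → V} (ha : ∀ f, A f → f (a f) ≠ 0)
    (hb : ∀ f, A f → f (b f) ≠ 0) :
    absCount F A ≤
      4 * {g | g ∈ Heights F baseHeight ∧ A |g| ∧ 0 < g (a |g|) ∧ 0 < g (b |g|)}.ncard := by
  refine ncard_le_mul_of_fiber_le ((finite_heights hF baseHeight).subset fun _ h => h.1)
    (fun g => |g|) 4 (fun g hg => ⟨hg.1, hg.2.1⟩) ?_
  rintro g ⟨hg, hA⟩
  convert ncard_withAbs_le_four_mul hF (abs_mem_heights hg) (abs_nonneg g) (ha _ hA) (hb _ hA)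
    using 3
  · ext x
    constructor
    · rintro ⟨⟨hx, -⟩, hxg⟩
      exact ⟨hx, hxg⟩
    · rintro ⟨hx, hxg⟩
      exact ⟨⟨hx, hxg ▸ hA⟩, hxg⟩
  · ext x
    constructor
    · rintro ⟨⟨hx, -, hpos⟩, hxg⟩
      exact ⟨⟨hx, hxg⟩, hxg ▸ hpos⟩
    · rintro ⟨⟨hx, hxg⟩, hpos⟩
      exact ⟨⟨hx, hxg ▸ hA, hxg.symm ▸ hpos⟩, hxg⟩

end FKG

/-! ### Linking two walls by reflection -/

/-- Odd sites with a common even neighbour: equal, or at graph distance two. -/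
def StarNear (a b : V) : Prop := ∃ u, EvenSite u ∧ adj u a ∧ adj u b

lemma StarNear.symm {a b : V} (h : StarNear a b) : StarNear b a :=
  let ⟨u, hu, ha, hb⟩ := h
  ⟨u, hu, hb, ha⟩

/-- The sites that a path of `StarNear` steps reaches from `G` with all later sites in `S`. -/
inductive StarReach (S G : Set V) : V → Prop
  | base (a : V) : a ∈ G → StarReach S G a
  | step (a b : V) : StarReach S G a → StarNear a b → b ∈ S → StarReach S G b

/-- A path of `StarNear` steps joins `G₁` to `G₂` with all its intermediate sites in `S`. -/
def StarLinked (S G₁ G₂ : Set V) : Prop := ∃ a, StarReach S G₁ a ∧ ∃ b ∈ G₂, StarNear a b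

/-- All of `Γ` is reached from one of its sites by `StarNear` steps inside `Γ`. -/
def StarConnected (Γ : Set V) : Prop :=
  ∃ a ∈ Γ, ∀ v ∈ Γ, Relation.ReflTransGen (fun a b => StarNear a b ∧ b ∈ Γ) a v

lemma StarReach.mono {S S' G : Set V} (h : S ⊆ S') {a : V} (ha : StarReach S G a) :
    StarReach S' G a := by
  induction ha with
  | base a ha => exact .base a ha
  | step a b _ hab hb ih => exact .step a b ih hab (h hb)

lemma StarLinked.mono {S S' G₁ G₂ : Set V} (h : S ⊆ S') (hl : StarLinked S G₁ G₂) :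
    StarLinked S' G₁ G₂ :=
  let ⟨a, ha, hb⟩ := hl
  ⟨a, ha.mono h, hb⟩

/-- Involutive automorphisms of the lattice that preserve the parity of sites. -/
structure IsMirror (σ : V → V) : Prop where
  involutive : Function.Involutive σ
  map_adj : ∀ ⦃u v⦄, adj u v → adj (σ u) (σ v)
  oddSite_map : ∀ v, OddSite (σ v) ↔ OddSite v

namespace IsMirror

variable {σ : V → V} {S G G₁ G₂ N : Set V}

lemma evenSite_map (hσ : IsMirror σ) (v : V) : EvenSite (σ v) ↔ EvenSite v := by
  rw [← not_oddSite, ← not_oddSite, hσ.oddSite_map]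

lemma starNear_map (hσ : IsMirror σ) {a b : V} (h : StarNear a b) : StarNear (σ a) (σ b) :=
  let ⟨u, hu, ha, hb⟩ := h
  ⟨σ u, (hσ.evenSite_map u).2 hu, hσ.map_adj ha, hσ.map_adj hb⟩

lemma starReach_preimage (hσ : IsMirror σ) {a : V} (h : StarReach (σ ⁻¹' S) (σ ⁻¹' G) a) :
    StarReach S G (σ a) := by
  induction h with
  | base a ha => exact .base _ ha
  | step a b _ hab hb ih => exact .step _ _ ih (hσ.starNear_map hab) hb

lemma starLinked_preimage (hσ : IsMirror σ)
    (h : StarLinked (σ ⁻¹' S) (σ ⁻¹' G₁) (σ ⁻¹' G₂)) : StarLinked S G₁ G₂ :=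
  let ⟨a, ha, b, hb, hab⟩ := h
  ⟨σ a, hσ.starReach_preimage ha, σ b, hb, hσ.starNear_map hab⟩

end IsMirror

/-- `N` together with its nearest neighbours. -/
def thicken (N : Set V) : Set V := {w | w ∈ N ∨ ∃ v ∈ N, adj w v}

section Thicken

variable {N : Set V}

lemma subset_thicken (N : Set V) : N ⊆ thicken N := fun _ => .inl

lemma mem_of_mem_thicken (hN : ∀ v ∈ N, OddSite v) {v : V} (hv : v ∈ thicken N)
    (ho : OddSite v) : v ∈ N := by
  rcases hv with hv | ⟨w, hw, hvw⟩
  · exact hv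
  · exact absurd (hvw.oddSite_iff.1 ho) (not_evenSite.2 (hN w hw))

lemma IsMirror.map_mem_thicken {σ : V → V} (hσ : IsMirror σ) (hN : ∀ v ∈ N, σ v ∈ N) {v : V}
    (hv : v ∈ thicken N) : σ v ∈ thicken N := by
  rcases hv with hv | ⟨w, hw, hvw⟩
  · exact .inl (hN v hv)
  · exact .inr ⟨σ w, hN w hw, hσ.map_adj hvw⟩

end Thicken

/-- The height function equal to `2` on the odd sites of `P`, to `0` on the other odd sites and to
`1` on the even sites. -/
noncomputable def levelHeight (P : Set V) (v : V) : ℤ :=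
  open Classical in if EvenSite v then 1 else if v ∈ P then 2 else 0

section LevelHeight

variable {P : Set V} {v : V}

lemma levelHeight_of_evenSite (h : EvenSite v) : levelHeight P v = 1 := if_pos h

lemma levelHeight_of_mem (h : OddSite v) (hP : v ∈ P) : levelHeight P v = 2 := by
  rw [levelHeight, if_neg (not_evenSite.2 h), if_pos hP]

lemma levelHeight_of_notMem (h : OddSite v) (hP : v ∉ P) : levelHeight P v = 0 := by
  rw [levelHeight, if_neg (not_evenSite.2 h), if_neg hP]

lemma isHeight_levelHeight (P : Set V) : IsHeight (levelHeight P) := by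
  refine .of_evenSite (fun v => ?_) fun u v _ hu hv => ?_
  · unfold levelHeight EvenSite
    split_ifs <;> omega
  · rw [levelHeight_of_evenSite hu]
    by_cases hP : v ∈ P
    · rw [levelHeight_of_mem hv hP]; omega
    · rw [levelHeight_of_notMem hv hP]; omega

lemma baseHeight_le_levelHeight (P : Set V) : baseHeight ≤ levelHeight P := by
  intro v
  rcases evenSite_or_oddSite v with h | h
  · rw [baseHeight_of_evenSite h, levelHeight_of_evenSite h]
  · rw [baseHeight_of_oddSite h, levelHeight]
    split_ifs <;> norm_num

lemma levelHeight_mono {P' : Set V} (h : P ⊆ P') : levelHeight P ≤ levelHeight P' := by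
  intro v
  by_cases hv : v ∈ P
  · simp [levelHeight, hv, h hv]
  · unfold levelHeight
    split_ifs <;> norm_num

end LevelHeight

/-- The image of `g` under the mirror `σ` and the height reflection `x ↦ 2 - x`. -/
def reflect (σ : V → V) (g : V → ℤ) : V → ℤ := fun v => 2 - g (σ v)

section Reflect

variable {σ : V → V} {M : Set V} {τ g : V → ℤ}

lemma IsMirror.reflect_involutive (hσ : IsMirror σ) : Function.Involutive (reflect σ) := fun g => by
  funext v
  simp [reflect, hσ.involutive v]

lemma IsMirror.isHeight_reflect (hσ : IsMirror σ) (hg : IsHeight g) : IsHeight (reflect σ g) := by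
  refine ⟨fun u v huv => ?_, fun v => ?_⟩
  · rw [← hg.abs_sub (hσ.map_adj huv), ← abs_neg, reflect, reflect]
    congr 1
    ring
  · have hpar := hg.parity (σ v)
    have := hσ.oddSite_map v
    have := hσ.evenSite_map v
    simp only [OddSite, EvenSite, reflect] at *
    omega

lemma IsMirror.reflect_mem_heights (hσ : IsMirror σ) (hM : ∀ v ∈ M, σ v ∈ M)
    (hg : g ∈ Heights M τ) : reflect σ g ∈ Heights M (reflect σ τ) := by
  refine ⟨hσ.isHeight_reflect hg.1, fun v hv => ?_⟩
  rw [reflect, reflect, hg.2 (σ v) fun h => hv (hσ.involutive v ▸ hM _ h)]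

lemma IsMirror.ncard_heights_reflect_le (hσ : IsMirror σ) (hM : ∀ v ∈ M, σ v ∈ M) (hMf : M.Finite)
    (τ : V → ℤ) : (Heights M (reflect σ τ)).ncard ≤ (Heights M τ).ncard :=
  Set.ncard_le_ncard_of_injOn (reflect σ)
    (fun g hg => by simpa only [hσ.reflect_involutive τ] using hσ.reflect_mem_heights hM hg)
    hσ.reflect_involutive.injective.injOn (finite_heights hMf τ)

end Reflect

/-- Raising the boundary condition raises the probability of increasing events. -/
lemma ncard_sep_heights_mul_le {M : Set V} (hM : M.Finite) {τ τ' : V → ℤ} (hτ : τ ≤ τ')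
    {A : (V → ℤ) → Prop} (hA : ∀ f g, f ≤ g → A f → A g) :
    {g | g ∈ Heights M τ ∧ A g}.ncard * (Heights M τ').ncard ≤
      (Heights M τ).ncard * {g | g ∈ Heights M τ' ∧ A g}.ncard := by
  classical
  have fin := finite_heights hM τ
  have fin' := finite_heights hM τ'
  have finA : {g | g ∈ Heights M τ ∧ A g}.Finite := fin.subset fun _ h => h.1
  have finA' : {g | g ∈ Heights M τ' ∧ A g}.Finite := fin'.subset fun _ h => h.1
  rw [Set.ncard_eq_toFinset_card _ finA, Set.ncard_eq_toFinset_card _ finA',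
    Set.ncard_eq_toFinset_card _ fin, Set.ncard_eq_toFinset_card _ fin']
  refine (Finset.le_card_infs_mul_card_sups _ _).trans
    (Nat.mul_le_mul (Finset.card_le_card ?_) (Finset.card_le_card ?_))
  · intro _ hx
    obtain ⟨f, hf, g, hg, rfl⟩ := Finset.mem_infs.1 hx
    simp only [Set.Finite.mem_toFinset] at *
    simpa only [inf_eq_left.2 hτ] using inf_mem_heights hf.1 hg
  · intro _ hx
    obtain ⟨f, hf, g, hg, rfl⟩ := Finset.mem_sups.1 hx
    simp only [Set.Finite.mem_toFinset] at *
    exact ⟨by simpa only [sup_eq_right.2 hτ] using sup_mem_heights hf.1 hg,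
      hA _ _ le_sup_left hf.2⟩

/-- Two explored walls `Γ₁, Γ₂` and a mirror-symmetric unexplored region `N`. The set `W` consists
of the explored sites and `K` of their zeros. Every odd site next to `N` lies in `N`, on a wall, or
is an unexplored mirror image of a wall, and by planar duality either a set `S ⊆ N` links the walls
or its complement links their mirror images. -/
structure LinkSetup (F : Set V) (σ : V → V) (N W K Γ₁ Γ₂ : Set V) : Prop where
  finite : F.Finite
  mem_of_nbrs : ∀ u, EvenSite u → (∀ s, adj u s → s ∈ F) → u ∈ F
  mirror : IsMirror σ
  free_odd : ∀ v ∈ N, OddSite v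
  explored_odd : ∀ v ∈ W, OddSite v
  wall_subset : Γ₁ ∪ Γ₂ ⊆ W \ K
  frontier : ∀ v ∈ N, ∀ u, adj u v → ∀ s, adj u s →
    s ∈ F ∧ (s ∈ N ∨ s ∈ Γ₁ ∪ Γ₂ ∨ σ s ∈ Γ₁ ∪ Γ₂ ∧ s ∉ W)
  free_map : ∀ v ∈ N, σ v ∈ N
  free_disjoint : Disjoint N W
  connected₁ : StarConnected Γ₁
  connected₂ : StarConnected Γ₂
  dual : ∀ S ⊆ N, StarLinked S Γ₁ Γ₂ ∨ StarLinked (N \ S) (σ ⁻¹' Γ₁) (σ ⁻¹' Γ₂)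

/-- The odd sites of `N` at which `g` is at least `2`. -/
def highSites (N : Set V) (g : V → ℤ) : Set V := {v | v ∈ N ∧ 2 ≤ g v}

/-- The boundary condition `2`, except `0` on the mirror image of `Γ` off `Γ`. -/
noncomputable def wallHeight (σ : V → V) (Γ : Set V) : V → ℤ :=
  levelHeight {v | σ v ∈ Γ → v ∈ Γ}

lemma wallHeight_of_mem {σ : V → V} {Γ : Set V} {v : V} (h : OddSite v) (hv : v ∈ Γ) :
    wallHeight σ Γ v = 2 :=
  levelHeight_of_mem (P := {v | σ v ∈ Γ → v ∈ Γ}) h fun _ => hv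

lemma wallHeight_of_map_mem {σ : V → V} {Γ : Set V} {v : V} (h : OddSite v) (hσv : σ v ∈ Γ)
    (hv : v ∉ Γ) : wallHeight σ Γ v = 0 :=
  levelHeight_of_notMem (P := {v | σ v ∈ Γ → v ∈ Γ}) h fun hP => hv (hP hσv)

lemma IsMirror.reflect_wallHeight {σ : V → V} (hσ : IsMirror σ) (Γ : Set V) :
    reflect σ (wallHeight σ Γ) = levelHeight {v | v ∈ Γ ∧ σ v ∉ Γ} := by
  funext v
  have heven := hσ.evenSite_map v
  have hinv := hσ.involutive v
  by_cases h : EvenSite v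
  · simp [reflect, wallHeight, levelHeight, h, heven]
  · by_cases hv : v ∈ Γ <;> by_cases hσv : σ v ∈ Γ <;>
      simp [reflect, wallHeight, levelHeight, h, heven, hinv, hv, hσv]

lemma IsHeight.exchange {A : Set V} {g k : V → ℤ} [DecidablePred (· ∈ A)] (hg : IsHeight g)
    (hk : IsHeight k) (h : ∀ u v, adj u v → EvenSite u → OddSite v → ¬(u ∈ A ↔ v ∈ A) →
      u ∈ A ∧ v ∉ A ∧ g v = k v) :
    IsHeight fun v => if v ∈ A then k v else g v := by
  refine .of_evenSite (fun v => ?_) fun u v huv hu hv => ?_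
  · split_ifs
    · exact hk.parity v
    · exact hg.parity v
  · by_cases hA : u ∈ A ↔ v ∈ A
    · by_cases huA : u ∈ A
      · simp only [if_pos huA, if_pos (hA.1 huA)]
        exact hk.sub_eq huv
      · simp only [if_neg huA, if_neg (huA ∘ hA.2)]
        exact hg.sub_eq huv
    · obtain ⟨huA, hvA, hgk⟩ := h u v huv hu hv hA
      simp only [if_pos huA, if_neg hvA, hgk]
      exact hk.sub_eq huv

namespace LinkSetup

variable {F : Set V} {σ : V → V} {N W K Γ₁ Γ₂ : Set V}

lemma thicken_subset (H : LinkSetup F σ N W K Γ₁ Γ₂) : thicken N ⊆ F := by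
  rintro w (hw | ⟨v, hv, hwv⟩)
  · exact (H.frontier w hw (w.1 + 1, w.2) (by simp [adj]) w (by simp [adj])).1
  · exact H.mem_of_nbrs w (hwv.evenSite_iff.2 (H.free_odd v hv))
      fun s hs => (H.frontier v hv w hwv s hs).1

lemma finite_thicken (H : LinkSetup F σ N W K Γ₁ Γ₂) : (thicken N).Finite :=
  H.finite.subset H.thicken_subset

lemma map_mem_thicken (H : LinkSetup F σ N W K Γ₁ Γ₂) : ∀ v ∈ thicken N, σ v ∈ thicken N :=
  fun _ => H.mirror.map_mem_thicken H.free_map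

lemma notMem_thicken (H : LinkSetup F σ N W K Γ₁ Γ₂) {v : V} (hv : v ∈ W) : v ∉ thicken N :=
  fun h => H.free_disjoint.notMem_of_mem_left
    (mem_of_mem_thicken H.free_odd h (H.explored_odd v hv)) hv

lemma frontier_of_boundary_edge (H : LinkSetup F σ N W K Γ₁ Γ₂) {u v : V} (huv : adj u v)
    (hu : EvenSite u) (hv : OddSite v) (h : ¬(u ∈ thicken N ↔ v ∈ thicken N)) :
    u ∈ thicken N ∧ v ∉ thicken N ∧ (v ∈ Γ₁ ∪ Γ₂ ∨ σ v ∈ Γ₁ ∪ Γ₂ ∧ v ∉ W) := by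
  have hvN : v ∉ thicken N := fun hvN =>
    h ⟨fun _ => hvN, fun _ => .inr ⟨v, mem_of_mem_thicken H.free_odd hvN hv, huv⟩⟩
  have huN : u ∈ thicken N := not_not.1 fun huN => h (iff_of_false huN hvN)
  refine ⟨huN, hvN, ?_⟩
  rcases huN with hu' | ⟨w, hw, huw⟩
  · exact absurd hu (not_evenSite.2 (H.free_odd u hu'))
  · exact (H.frontier w hw u huw v huv).2.resolve_left fun hv' => hvN (subset_thicken N hv')

lemma starLinked_reflect (H : LinkSetup F σ N W K Γ₁ Γ₂) {g : V → ℤ} (hg : IsHeight g)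
    (hl : ¬StarLinked (highSites N g) Γ₁ Γ₂) :
    StarLinked (highSites N (reflect σ g)) Γ₁ Γ₂ := by
  refine H.mirror.starLinked_preimage
    (((H.dual (highSites N g) fun v hv => hv.1).resolve_left hl).mono ?_)
  rintro v ⟨hvN, hv⟩
  refine ⟨H.free_map v hvN, ?_⟩
  have heven := hg.even_of_oddSite (H.free_odd v hvN)
  have hlow : ¬2 ≤ g v := fun h => hv ⟨hvN, h⟩
  simp only [reflect, H.mirror.involutive v]
  omega

/-- With boundary condition `2` on the walls, the high sites of `N` link the walls with probability
at least `1/2`: otherwise the low sites link their mirror images, and reflecting turns this into a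
link by high sites under a smaller boundary condition. -/
lemma ncard_heights_le_two_mul (H : LinkSetup F σ N W K Γ₁ Γ₂) :
    (Heights (thicken N) (wallHeight σ (Γ₁ ∪ Γ₂))).ncard ≤
      2 * {g | g ∈ Heights (thicken N) (wallHeight σ (Γ₁ ∪ Γ₂)) ∧
        StarLinked (highSites N g) Γ₁ Γ₂}.ncard := by
  set τ := wallHeight σ (Γ₁ ∪ Γ₂)
  set T := Heights (thicken N) τ with hT
  set T' := Heights (thicken N) (reflect σ τ) with hT'
  have finT : T.Finite := finite_heights H.finite_thicken τ
  have finT' : T'.Finite := finite_heights H.finite_thicken _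
  have hle : reflect σ τ ≤ τ := by
    rw [H.mirror.reflect_wallHeight]
    exact levelHeight_mono fun v hv _ => hv.1
  have hcard : T'.ncard = T.ncard := by
    refine (H.mirror.ncard_heights_reflect_le H.map_mem_thicken H.finite_thicken τ).antisymm ?_
    simpa only [H.mirror.reflect_involutive τ] using
      H.mirror.ncard_heights_reflect_le H.map_mem_thicken H.finite_thicken (reflect σ τ)
  have hreflect : {g | g ∈ T ∧ ¬StarLinked (highSites N g) Γ₁ Γ₂}.ncard ≤
      {g | g ∈ T' ∧ StarLinked (highSites N g) Γ₁ Γ₂}.ncard :=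
    Set.ncard_le_ncard_of_injOn (reflect σ)
      (fun g hg => ⟨H.mirror.reflect_mem_heights H.map_mem_thicken hg.1,
        H.starLinked_reflect hg.1.1 hg.2⟩)
      H.mirror.reflect_involutive.injective.injOn (finT'.subset fun _ h => h.1)
  have hmono := ncard_sep_heights_mul_le H.finite_thicken hle
    (A := fun g => StarLinked (highSites N g) Γ₁ Γ₂)
    fun f g hfg => .mono fun v hv => ⟨hv.1, hv.2.trans (hfg v)⟩
  rw [← hT, ← hT', hcard, mul_comm] at hmono
  have hpos : 0 < T.ncard :=
    (Set.ncard_pos finT).2 ⟨τ, isHeight_levelHeight _, fun _ _ => rfl⟩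
  have hsplit : T.ncard ≤ {g | g ∈ T ∧ StarLinked (highSites N g) Γ₁ Γ₂}.ncard +
      {g | g ∈ T ∧ ¬StarLinked (highSites N g) Γ₁ Γ₂}.ncard := by
    refine le_trans (Set.ncard_le_ncard (fun g hg => ?_) ?_) (Set.ncard_union_le _ _)
    · exact (em _).imp (And.intro hg) (And.intro hg)
    · exact (finT.subset fun _ h => h.1).union (finT.subset fun _ h => h.1)
  have := Nat.le_of_mul_le_mul_left hmono hpos
  omega

end LinkSetup

/-- On the explored set `W`, the zeros of `f` are exactly the sites of `K`. -/
def ZerosAre (W K : Set V) (f : V → ℤ) : Prop := ∀ v ∈ W, (f v = 0 ↔ v ∈ K)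

/-- The zeros on `W` are those of `K`, and off the unexplored region `f` takes its smallest values
compatible with this. -/
def MinimalOff (N W K : Set V) (f : V → ℤ) : Prop :=
  ZerosAre W K f ∧ ∀ v ∉ thicken N, f v ≤ levelHeight (W \ K) v

/-- Height functions that are minimal off the unexplored region and positive on the walls. -/
def wallHeights (F N W K Γ : Set V) : Set (V → ℤ) :=
  {g | g ∈ Heights F baseHeight ∧ MinimalOff N W K |g| ∧ ∀ v ∈ Γ, g v = 2}

lemma ZerosAre.inf {W K : Set V} {f f' : V → ℤ} (h0 : 0 ≤ f) (h0' : 0 ≤ f') (hf : ZerosAre W K f)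
    (hf' : ZerosAre W K f') : ZerosAre W K (f ⊓ f') := by
  intro v hv
  have hfv := h0 v
  have hfv' := h0' v
  simp only [Pi.inf_apply, Pi.zero_apply, ← hf v hv] at *
  have := (hf v hv).trans (hf' v hv).symm
  omega

lemma ZerosAre.sup {W K : Set V} {f f' : V → ℤ} (h0 : 0 ≤ f) (h0' : 0 ≤ f') (hf : ZerosAre W K f)
    (hf' : ZerosAre W K f') : ZerosAre W K (f ⊔ f') := by
  intro v hv
  have hfv := h0 v
  have hfv' := h0' v
  simp only [Pi.sup_apply, Pi.zero_apply, ← hf v hv] at *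
  have := (hf v hv).trans (hf' v hv).symm
  omega

namespace LinkSetup

variable {F : Set V} {σ : V → V} {N W K Γ₁ Γ₂ : Set V}

lemma absCount_minimalOff_fkg (H : LinkSetup F σ N W K Γ₁ Γ₂) :
    absCount F (fun f => StarLinked {v | v ∈ N ∧ f v ≠ 0} Γ₁ Γ₂ ∧ MinimalOff N W K f) *
        absCount F (ZerosAre W K) ≤
      absCount F (MinimalOff N W K) *
        absCount F (fun f => ZerosAre W K f ∧ StarLinked {v | v ∈ N ∧ f v ≠ 0} Γ₁ Γ₂) := by
  refine absCount_mul_le H.finite ?_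
  rintro f f' h0 h0' ⟨hl, hmin⟩ hf'
  refine ⟨⟨hmin.1.inf h0 h0' hf', fun v hv => inf_le_left.trans (hmin.2 v hv)⟩,
    hmin.1.sup h0 h0' hf', hl.mono fun v hv => ⟨hv.1, ?_⟩⟩
  have hpos : 0 < f v := (h0 v).lt_of_ne' hv.2
  exact (hpos.trans_le le_sup_left).ne'

lemma abs_eq_two (H : LinkSetup F σ N W K Γ₁ Γ₂) {g : V → ℤ} (hg : IsHeight g)
    (hmin : MinimalOff N W K |g|) {v : V} (hv : v ∈ Γ₁ ∪ Γ₂) : |g v| = 2 := by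
  obtain ⟨hW, hK⟩ := H.wall_subset hv
  have hle := hmin.2 v (H.notMem_thicken hW)
  have hne : |g v| ≠ 0 := fun h => hK ((hmin.1 v hW).1 h)
  have heven := hg.abs.even_of_oddSite (H.explored_odd v hW)
  rw [levelHeight_of_mem (P := W \ K) (H.explored_odd v hW) ⟨hW, hK⟩] at hle
  have h0 := abs_nonneg (g v)
  simp only [Pi.abs_apply] at hle heven
  omega

/-- Since `|g| = 2` on a wall, `g` has constant sign along it. -/
lemma eq_two_of_starConnected (H : LinkSetup F σ N W K Γ₁ Γ₂) {Γ : Set V} (hΓ : Γ ⊆ Γ₁ ∪ Γ₂)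
    {g : V → ℤ} (hg : IsHeight g) (hmin : MinimalOff N W K |g|) {a v : V} (ha : a ∈ Γ)
    (hpos : 0 < g a) (hav : Relation.ReflTransGen (fun a b => StarNear a b ∧ b ∈ Γ) a v) :
    v ∈ Γ ∧ g v = 2 := by
  have key {v : V} (hv : v ∈ Γ) : g v = 2 ∨ g v = -2 :=
    (abs_eq zero_le_two).1 (H.abs_eq_two hg hmin (hΓ hv))
  induction hav with
  | refl => exact ⟨ha, by have := key ha; omega⟩
  | @tail b c _ hbc ih =>
    obtain ⟨⟨u, -, hub, huc⟩, hc⟩ := hbc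
    have := hg.sub_eq hub
    have := hg.sub_eq huc
    have := key hc
    exact ⟨hc, by omega⟩

lemma absCount_minimalOff_le (H : LinkSetup F σ N W K Γ₁ Γ₂) :
    absCount F (MinimalOff N W K) ≤ 4 * (wallHeights F N W K (Γ₁ ∪ Γ₂)).ncard := by
  obtain ⟨a, ha, hcon₁⟩ := H.connected₁
  obtain ⟨b, hb, hcon₂⟩ := H.connected₂
  have hne {v : V} (hv : v ∈ Γ₁ ∪ Γ₂) (f : V → ℤ) (hf : MinimalOff N W K f) : f v ≠ 0 :=
    fun h0 => (H.wall_subset hv).2 ((hf.1 v (H.wall_subset hv).1).1 h0)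
  refine (absCount_le_four_mul H.finite (a := fun _ => a) (b := fun _ => b) (hne (.inl ha))
    (hne (.inr hb))).trans
    (Nat.mul_le_mul_left 4 (Set.ncard_le_ncard ?_
      ((finite_heights H.finite baseHeight).subset fun _ h => h.1)))
  rintro g ⟨hg, hmin, hga, hgb⟩
  refine ⟨hg, hmin, fun v hv => ?_⟩
  rcases hv with hv | hv
  · exact (H.eq_two_of_starConnected Set.subset_union_left hg.1 hmin ha hga (hcon₁ v hv)).2
  · exact (H.eq_two_of_starConnected Set.subset_union_right hg.1 hmin hb hgb (hcon₂ v hv)).2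

/-- Across the boundary of the unexplored region, positive minimal configurations agree with the
boundary condition `wallHeight`. -/
lemma wallHeights_agree (H : LinkSetup F σ N W K Γ₁ Γ₂) {g k : V → ℤ}
    (hg : g ∈ wallHeights F N W K (Γ₁ ∪ Γ₂))
    (hk : k ∈ Heights (thicken N) (wallHeight σ (Γ₁ ∪ Γ₂))) {u v : V} (huv : adj u v)
    (hu : EvenSite u) (hv : OddSite v) (h : ¬(u ∈ thicken N ↔ v ∈ thicken N)) :
    u ∈ thicken N ∧ v ∉ thicken N ∧ g v = k v := by
  obtain ⟨huN, hvN, hfr⟩ := H.frontier_of_boundary_edge huv hu hv h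
  refine ⟨huN, hvN, ?_⟩
  rw [hk.2 v hvN]
  rcases hfr with hΓ | ⟨hσ, hW⟩
  · rw [hg.2.2 v hΓ, wallHeight_of_mem hv hΓ]
  · have hle := (hg.2.1.2 v hvN).trans_eq (levelHeight_of_notMem hv fun h => hW h.1)
    rw [wallHeight_of_map_mem hv hσ fun h => hW (H.wall_subset h).1]
    exact abs_nonpos_iff.1 hle

open Classical in
lemma exchange_mem_wallHeights (H : LinkSetup F σ N W K Γ₁ Γ₂) {g k : V → ℤ}
    (hg : g ∈ wallHeights F N W K (Γ₁ ∪ Γ₂))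
    (hk : k ∈ Heights (thicken N) (wallHeight σ (Γ₁ ∪ Γ₂))) :
    (fun v => if v ∈ thicken N then k v else g v) ∈ wallHeights F N W K (Γ₁ ∪ Γ₂) := by
  refine ⟨⟨hg.1.1.exchange hk.1 fun u v => H.wallHeights_agree hg hk, fun v hv => ?_⟩,
    ⟨fun v hv => ?_, fun v hv => ?_⟩, fun v hv => ?_⟩
  · exact (if_neg fun h => hv (H.thicken_subset h)).trans (hg.1.2 v hv)
  · rw [Pi.abs_apply, if_neg (H.notMem_thicken hv)]
    exact hg.2.1.1 v hv
  · rw [Pi.abs_apply, if_neg hv]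
    exact hg.2.1.2 v hv
  · exact (if_neg (H.notMem_thicken (H.wall_subset hv).1)).trans (hg.2.2 v hv)

open Classical in
lemma exchange_mem_heights (H : LinkSetup F σ N W K Γ₁ Γ₂) {g k : V → ℤ}
    (hg : g ∈ wallHeights F N W K (Γ₁ ∪ Γ₂))
    (hk : k ∈ Heights (thicken N) (wallHeight σ (Γ₁ ∪ Γ₂))) :
    (fun v => if v ∈ thicken N then g v else k v) ∈
      Heights (thicken N) (wallHeight σ (Γ₁ ∪ Γ₂)) := by
  refine ⟨hk.1.exchange hg.1.1 fun u v huv hu hv h => ?_, fun v hv => ?_⟩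
  · obtain ⟨huN, hvN, heq⟩ := H.wallHeights_agree hg hk huv hu hv h
    exact ⟨huN, hvN, heq.symm⟩
  · exact (if_neg hv).trans (hk.2 v hv)

lemma finite_wallHeights (H : LinkSetup F σ N W K Γ₁ Γ₂) :
    (wallHeights F N W K (Γ₁ ∪ Γ₂)).Finite :=
  (finite_heights H.finite baseHeight).subset fun _ h => h.1

/-- Exchanging two configurations on `thicken N` shows that, given the walls, the configuration in
the unexplored region has boundary condition `wallHeight`. -/
lemma ncard_wallHeights_mul_le (H : LinkSetup F σ N W K Γ₁ Γ₂) :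
    (wallHeights F N W K (Γ₁ ∪ Γ₂)).ncard *
        {k | k ∈ Heights (thicken N) (wallHeight σ (Γ₁ ∪ Γ₂)) ∧
          StarLinked (highSites N k) Γ₁ Γ₂}.ncard ≤
      {g | g ∈ wallHeights F N W K (Γ₁ ∪ Γ₂) ∧ StarLinked (highSites N g) Γ₁ Γ₂}.ncard *
        (Heights (thicken N) (wallHeight σ (Γ₁ ∪ Γ₂))).ncard := by
  classical
  let swap (x : (V → ℤ) × (V → ℤ)) : (V → ℤ) × (V → ℤ) :=
    (fun v => if v ∈ thicken N then x.2 v else x.1 v,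
      fun v => if v ∈ thicken N then x.1 v else x.2 v)
  have swap_involutive : Function.Involutive swap := fun x => by
    ext v <;> by_cases hv : v ∈ thicken N <;> simp [swap, hv]
  rw [← Set.ncard_prod, ← Set.ncard_prod]
  refine Set.ncard_le_ncard_of_injOn swap ?_ swap_involutive.injective.injOn
    ((H.finite_wallHeights.subset fun _ h => h.1).prod (finite_heights H.finite_thicken _))
  rintro ⟨g, k⟩ ⟨hg, hk, hl⟩
  refine ⟨⟨H.exchange_mem_wallHeights hg hk, hl.mono ?_⟩, H.exchange_mem_heights hg hk⟩
  rintro v ⟨hvN, hv⟩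
  exact ⟨hvN, by simpa only [swap, if_pos (subset_thicken N hvN)] using hv⟩

lemma ncard_wallHeights_le (H : LinkSetup F σ N W K Γ₁ Γ₂) :
    (wallHeights F N W K (Γ₁ ∪ Γ₂)).ncard ≤
      2 * absCount F
        fun f => StarLinked {v | v ∈ N ∧ f v ≠ 0} Γ₁ Γ₂ ∧ MinimalOff N W K f := by
  set Ω := wallHeights F N W K (Γ₁ ∪ Γ₂)
  set T := Heights (thicken N) (wallHeight σ (Γ₁ ∪ Γ₂))
  have hT : 0 < T.ncard := (Set.ncard_pos (finite_heights H.finite_thicken _)).2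
    ⟨_, isHeight_levelHeight _, fun _ _ => rfl⟩
  have hlinked : Ω.ncard ≤ 2 * {g | g ∈ Ω ∧ StarLinked (highSites N g) Γ₁ Γ₂}.ncard := by
    refine Nat.le_of_mul_le_mul_right ?_ hT
    calc Ω.ncard * T.ncard
        ≤ Ω.ncard * (2 * {k | k ∈ T ∧ StarLinked (highSites N k) Γ₁ Γ₂}.ncard) :=
          Nat.mul_le_mul_left _ H.ncard_heights_le_two_mul
      _ = 2 * (Ω.ncard * {k | k ∈ T ∧ StarLinked (highSites N k) Γ₁ Γ₂}.ncard) := by ring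
      _ ≤ 2 * ({g | g ∈ Ω ∧ StarLinked (highSites N g) Γ₁ Γ₂}.ncard * T.ncard) :=
          Nat.mul_le_mul_left _ H.ncard_wallHeights_mul_le
      _ = _ := by ring
  refine hlinked.trans (Nat.mul_le_mul_left 2 (Set.ncard_le_ncard ?_
    ((finite_heights H.finite baseHeight).subset fun _ h => h.1)))
  rintro g ⟨hg, hl⟩
  refine ⟨hg.1, hl.mono fun v hv => ⟨hv.1, ?_⟩, hg.2.1⟩
  exact abs_ne_zero.2 (by have := hv.2; omega)

/-- Cutting `|g|` down to `levelHeight (W \ K)` keeps its zeros on `W`. -/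
lemma absCount_minimalOff_pos (H : LinkSetup F σ N W K Γ₁ Γ₂)
    (h : 0 < absCount F (ZerosAre W K)) : 0 < absCount F (MinimalOff N W K) := by
  have hfin := finite_heights H.finite baseHeight
  obtain ⟨g, hg, hgW⟩ := (Set.ncard_pos (hfin.subset fun _ h => h.1)).1 h
  have hlevel : 0 ≤ levelHeight (W \ K) := fun v => by
    unfold levelHeight
    split_ifs <;> norm_num
  refine (Set.ncard_pos (hfin.subset fun _ h => h.1)).2 ⟨|g| ⊓ levelHeight (W \ K), ?_, ?_⟩
  · simpa only [inf_eq_left.2 (baseHeight_le_levelHeight _)] using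
      inf_mem_heights (abs_mem_heights hg) ⟨isHeight_levelHeight (W \ K), fun _ _ => rfl⟩
  · rw [abs_of_nonneg (le_inf (abs_nonneg g) hlevel)]
    refine ⟨fun v hv => ?_, fun v _ => inf_le_right⟩
    have := abs_nonneg (g v)
    have hzero := hgW v hv
    simp only [Pi.inf_apply, Pi.abs_apply] at *
    by_cases hK : v ∈ K
    · have := hzero.2 hK
      have := hlevel v
      simp only [Pi.zero_apply] at this
      simp only [hK, iff_true]
      omega
    · rw [levelHeight_of_mem (P := W \ K) (H.explored_odd v hv) ⟨hv, hK⟩, ← hzero]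
      omega

theorem absCount_zerosAre_le (H : LinkSetup F σ N W K Γ₁ Γ₂) :
    absCount F (ZerosAre W K) ≤
      8 * absCount F
        fun f => ZerosAre W K f ∧ StarLinked {v | v ∈ N ∧ f v ≠ 0} Γ₁ Γ₂ := by
  rcases Nat.eq_zero_or_pos (absCount F (ZerosAre W K)) with h | h
  · simp [h]
  set linkedMinimal :=
    absCount F fun f => StarLinked {v | v ∈ N ∧ f v ≠ 0} Γ₁ Γ₂ ∧ MinimalOff N W K f
  have hle : absCount F (MinimalOff N W K) ≤ 8 * linkedMinimal := by
    have := H.absCount_minimalOff_le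
    have := H.ncard_wallHeights_le
    omega
  have hpos : 0 < linkedMinimal := by
    have := H.absCount_minimalOff_pos h
    omega
  refine Nat.le_of_mul_le_mul_left ?_ hpos
  calc linkedMinimal * absCount F (ZerosAre W K)
      ≤ absCount F (MinimalOff N W K) * _ := H.absCount_minimalOff_fkg
    _ ≤ 8 * linkedMinimal * _ := Nat.mul_le_mul_right _ hle
    _ = _ := by ring

end LinkSetup

/-! ### Sides of a path -/

/-- The rectangle `[x₀, x₁] × [y₀, y₁]`. -/
def box (x₀ x₁ y₀ y₁ : ℤ) : Set V := {v | x₀ ≤ v.1 ∧ v.1 ≤ x₁ ∧ y₀ ≤ v.2 ∧ v.2 ≤ y₁}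

lemma mem_box {x₀ x₁ y₀ y₁ : ℤ} {v : V} :
    v ∈ box x₀ x₁ y₀ y₁ ↔ x₀ ≤ v.1 ∧ v.1 ≤ x₁ ∧ y₀ ≤ v.2 ∧ v.2 ≤ y₁ := Iff.rfl

/-- The first site of a path, with junk value `0` for the empty path. -/
def start (p : List V) : V := p.headD 0

/-- The last site of a path, with junk value `0` for the empty path. -/
def finish (p : List V) : V := p.getLastD 0

lemma start_mem {p : List V} (hp : p ≠ []) : start p ∈ p := by
  cases p with
  | nil => exact absurd rfl hp
  | cons a l => exact List.mem_cons_self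

lemma finish_eq_getLast {p : List V} (hp : p ≠ []) : finish p = p.getLast hp := by
  rw [finish, List.getLastD_eq_getLast?, List.getLast?_eq_getLast_of_ne_nil hp, Option.getD_some]

lemma finish_mem {p : List V} (hp : p ≠ []) : finish p ∈ p :=
  finish_eq_getLast hp ▸ List.getLast_mem hp

lemma finish_cons_cons (a b : V) (l : List V) : finish (a :: b :: l) = finish (b :: l) := by
  rw [finish_eq_getLast (by simp), finish_eq_getLast (by simp), List.getLast_cons]

/-- The sum of `e` over the edges of a path. -/
def edgeSum (e : V → V → ZMod 2) : List V → ZMod 2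
  | [] => 0
  | [_] => 0
  | a :: b :: l => e a b + edgeSum e (b :: l)

section EdgeSum

variable {e e' : V → V → ZMod 2} {p : List V}

lemma edgeSum_eq_of_coboundary (ψ : V → ZMod 2) (hp : p ≠ []) (hc : p.IsChain xadj)
    (h : ∀ a ∈ p, ∀ b ∈ p, xadj a b → e a b = ψ a + ψ b) :
    edgeSum e p = ψ (start p) + ψ (finish p) := by
  induction p with
  | nil => exact absurd rfl hp
  | cons a l ih =>
    cases l with
    | nil => exact (CharTwo.add_self_eq_zero (ψ a)).symm
    | cons b l =>
      rw [List.isChain_cons_cons] at hc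
      have htail : edgeSum e (b :: l) = ψ b + ψ (finish (b :: l)) :=
        ih (by simp) hc.2 fun a ha b hb =>
          h a (List.mem_cons_of_mem _ ha) b (List.mem_cons_of_mem _ hb)
      rw [edgeSum, htail, h a (by simp) b (by simp) hc.1, finish_cons_cons]
      change _ = ψ a + _
      linear_combination CharTwo.add_self_eq_zero (ψ b)

lemma edgeSum_add (e e' : V → V → ZMod 2) (p : List V) :
    edgeSum (fun a b => e a b + e' a b) p = edgeSum e p + edgeSum e' p := by
  induction p with
  | nil => simp [edgeSum]
  | cons a l ih =>
    cases l with
    | nil => simp [edgeSum]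
    | cons b l => simp only [edgeSum, ih]; ring

lemma edgeSum_congr (hc : p.IsChain xadj)
    (h : ∀ a ∈ p, ∀ b ∈ p, xadj a b → e a b = e' a b) : edgeSum e p = edgeSum e' p := by
  induction p with
  | nil => rfl
  | cons a l ih =>
    cases l with
    | nil => rfl
    | cons b l =>
      rw [List.isChain_cons_cons] at hc
      rw [edgeSum, edgeSum, h a (by simp) b (by simp) hc.1, ih hc.2 fun a ha b hb =>
        h a (List.mem_cons_of_mem _ ha) b (List.mem_cons_of_mem _ hb)]

lemma edgeSum_eq_zero (hc : p.IsChain xadj)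
    (h : ∀ a ∈ p, ∀ b ∈ p, xadj a b → e a b = 0) : edgeSum e p = 0 := by
  by_cases hp : p = []
  · rw [hp, edgeSum]
  · rw [edgeSum_eq_of_coboundary 0 hp hc (by simpa using h)]
    simp

end EdgeSum

/-- `p` is a `×`-path of odd sites of `B` starting in the row `y₁`. -/
structure IsTopPath (B : Set V) (y₁ : ℤ) (p : List V) : Prop where
  ne_nil : p ≠ []
  chain : p.IsChain xadj
  odd : ∀ v ∈ p, OddSite v
  mem : ∀ v ∈ p, v ∈ B
  start_snd : (start p).2 = y₁

/-- Indicator that the edge `ab` crosses the leftward ray issued from half a unit above `v`. -/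
def crossing (v a b : V) : ZMod 2 := if min a.2 b.2 = v.2 ∧ a.1 + b.1 < 2 * v.1 then 1 else 0

/-- The side of the path `p`, prolonged upwards from its start in the row `y₁`, on which `v` lies:
the parity of the number of its crossings of the leftward ray issued from half a unit above `v`. -/
def side (y₁ : ℤ) (p : List V) (v : V) : ZMod 2 :=
  edgeSum (crossing v) p + if y₁ ≤ v.2 ∧ (start p).1 < v.1 then 1 else 0

section Side

variable {B : Set V} {x₀ x₁ y₀ y₁ : ℤ} {p : List V}

lemma ne_of_notMem_path {v a : V} (hv : v ∉ p) (ha : a ∈ p) : ¬(a.1 = v.1 ∧ a.2 = v.2) :=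
  fun h => hv (Prod.ext h.1 h.2 ▸ ha)

lemma side_add_side_below (hp : IsTopPath B y₁ p) {w : V} (hw : w ∉ p) (hwy : w.2 ≤ y₁) :
    side y₁ p w + side y₁ p (w.1, w.2 - 1) =
      if (finish p).2 = w.2 ∧ (finish p).1 < w.1 then 1 else 0 := by
  have hstart := hp.start_snd
  have hsum := edgeSum_eq_of_coboundary
    (e := fun a b => crossing w a b + crossing (w.1, w.2 - 1) a b)
    (fun u => if u.2 = w.2 ∧ u.1 < w.1 then 1 else 0) hp.ne_nil hp.chain (by
      intro a ha b hb hab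
      have := ne_of_notMem_path hw ha
      have := ne_of_notMem_path hw hb
      unfold xadj at hab
      simp only [crossing]
      split_ifs <;> first | omega | rfl)
  rw [edgeSum_add] at hsum
  have hw_iff : (y₁ ≤ w.2 ∧ (start p).1 < w.1) ↔ ((start p).2 = w.2 ∧ (start p).1 < w.1) := by
    omega
  have hbelow : ¬(y₁ ≤ w.2 - 1 ∧ (start p).1 < w.1) := by omega
  simp only [side, hw_iff, if_neg hbelow]
  have h2 := CharTwo.add_self_eq_zero
    (if (start p).2 = w.2 ∧ (start p).1 < w.1 then (1 : ZMod 2) else 0)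
  linear_combination hsum + h2

lemma side_eq_side_below (hp : IsTopPath B y₁ p) {w : V} (hw : w ∉ p) (hwy : w.2 ≤ y₁)
    (hfin : ¬((finish p).2 = w.2 ∧ (finish p).1 < w.1)) :
    side y₁ p w = side y₁ p (w.1, w.2 - 1) := by
  have h := side_add_side_below hp hw hwy
  rwa [if_neg hfin, CharTwo.add_eq_zero] at h

lemma side_eq_side_right (hp : IsTopPath B y₁ p) {v : V} (hv : v ∉ p) (hw : (v.1 + 1, v.2) ∉ p)
    (hvy : v.2 ≤ y₁) : side y₁ p v = side y₁ p (v.1 + 1, v.2) := by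
  have hstart := hp.start_snd
  unfold side
  congr 1
  · refine edgeSum_congr hp.chain fun a ha b hb hab => ?_
    have := ne_of_notMem_path hv ha
    have := ne_of_notMem_path hv hb
    have := ne_of_notMem_path hw ha
    have := ne_of_notMem_path hw hb
    unfold xadj at hab
    simp only [crossing]
    split_ifs <;> first | omega | rfl
  · have := ne_of_notMem_path hv (start_mem hp.ne_nil)
    split_ifs <;> first | omega | rfl

lemma side_eq_of_adj (hp : IsTopPath B y₁ p) (hfin : (finish p).2 = y₀ ∨ x₁ ≤ (finish p).1)
    {v w : V} (hvB : v ∈ box x₀ x₁ y₀ y₁) (hwB : w ∈ box x₀ x₁ y₀ y₁) (hv : v ∉ p) (hw : w ∉ p)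
    (h : adj v w) : side y₁ p v = side y₁ p w := by
  rw [mem_box] at hvB hwB
  obtain ⟨a, b⟩ := v
  obtain ⟨c, d⟩ := w
  have hcases : c = a + 1 ∧ d = b ∨ a = c + 1 ∧ b = d ∨ c = a ∧ b = d - 1 ∨ a = c ∧ d = b - 1 := by
    simp only [adj] at h
    omega
  rcases hcases with ⟨rfl, rfl⟩ | ⟨rfl, rfl⟩ | ⟨rfl, rfl⟩ | ⟨rfl, rfl⟩
  · exact side_eq_side_right hp hv hw hvB.2.2.2
  · exact (side_eq_side_right hp hw hv hwB.2.2.2).symm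
  · exact (side_eq_side_below hp hw hwB.2.2.2 (by simp only at *; omega)).symm
  · exact side_eq_side_below hp hv hvB.2.2.2 (by simp only at *; omega)

lemma side_of_le_left (hp : IsTopPath (box x₀ x₁ y₀ y₁) y₁ p) {v : V} (hv : v.1 ≤ x₀) :
    side y₁ p v = 0 := by
  have hstart := hp.mem _ (start_mem hp.ne_nil)
  rw [mem_box] at hstart
  rw [side, edgeSum_eq_zero hp.chain, if_neg (by omega), add_zero]
  intro a ha b hb _
  have := hp.mem a ha
  have := hp.mem b hb
  rw [mem_box] at *
  exact if_neg (by omega)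

lemma side_top (hp : IsTopPath (box x₀ x₁ y₀ y₁) y₁ p) {v : V} (hv : v.2 = y₁) :
    side y₁ p v = if (start p).1 < v.1 then 1 else 0 := by
  rw [side, edgeSum_eq_zero hp.chain, zero_add]
  · simp only [hv, le_refl, true_and]
  · intro a ha b hb hab
    have := hp.mem a ha
    have := hp.mem b hb
    rw [mem_box] at *
    unfold xadj at hab
    exact if_neg (by omega)

lemma side_right (hp : IsTopPath (box x₀ x₁ y₀ y₁) y₁ p) (hfin : (finish p).2 = y₀) {v : V}
    (hvB : v ∈ box x₀ x₁ y₀ y₁) (hv : v.1 = x₁) (hvp : v ∉ p) : side y₁ p v = 1 := by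
  have hstart := hp.mem _ (start_mem hp.ne_nil)
  rw [mem_box] at hstart hvB
  have hne := ne_of_notMem_path hvp (start_mem hp.ne_nil)
  have hrow := hp.start_snd
  rw [side, edgeSum_eq_of_coboundary (fun u => if v.2 + 1 ≤ u.2 then 1 else 0) hp.ne_nil hp.chain]
  · rw [hfin, hrow, if_neg (c := v.2 + 1 ≤ y₀) (by omega)]
    split_ifs <;> first | omega | rfl
  · intro a ha b hb hab
    have := hp.mem a ha
    have := hp.mem b hb
    rw [mem_box] at *
    unfold xadj at hab
    unfold crossing
    split_ifs <;> first | omega | rfl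

lemma side_bottom (hp : IsTopPath (box x₀ x₁ y₀ y₁) y₁ p) (hfin : x₁ ≤ (finish p).1) {v : V}
    (hvB : v ∈ box x₀ x₁ y₀ y₁) (hv : v.2 = y₀) (hvp : v ∉ p) : side y₁ p v = 0 := by
  have hstart := hp.mem _ (start_mem hp.ne_nil)
  rw [mem_box] at hstart hvB
  rw [side_eq_side_below hp hvp hvB.2.2.2 (by omega), side, edgeSum_eq_zero hp.chain, if_neg,
    add_zero]
  · simp only
    omega
  · intro a ha b hb _
    have := hp.mem a ha
    have := hp.mem b hb
    rw [mem_box] at *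
    exact if_neg (by simp only; omega)

end Side

/-- The indicator function of `U` with values in `ZMod 2`. -/
noncomputable def parityIndicator (U : Set V) : V → ZMod 2 := U.indicator 1

/-- `ab` is the dual of an edge of the even lattice with exactly one endpoint in `U`. -/
def DualEdge (U : Set V) (a b : V) : Prop := xadj a b ∧ ¬((b.1, a.2) ∈ U ↔ (a.1, b.2) ∈ U)

section DualEdge

variable {U W : Set V} {x₀ x₁ y₀ y₁ : ℤ} {a b : V}

lemma parityIndicator_of_mem (h : a ∈ U) : parityIndicator U a = 1 := Set.indicator_of_mem h 1

lemma parityIndicator_of_notMem (h : a ∉ U) : parityIndicator U a = 0 :=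
  Set.indicator_of_notMem h 1

lemma parityIndicator_add_eq_zero :
    parityIndicator U a + parityIndicator U b = 0 ↔ (a ∈ U ↔ b ∈ U) := by
  by_cases ha : a ∈ U <;> by_cases hb : b ∈ U <;>
    simp [parityIndicator, ha, hb, CharTwo.add_self_eq_zero]

lemma DualEdge.symm (h : DualEdge U a b) : DualEdge U b a :=
  ⟨h.1.symm, fun h' => h.2 h'.symm⟩

lemma DualEdge.le_fst (hL : ∀ v : V, v.1 ≤ x₀ → v ∈ U) (h : DualEdge U a b) (_ : x₀ ≤ a.1) :
    x₀ ≤ b.1 := by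
  obtain ⟨hab, hU⟩ := h
  unfold xadj at hab
  by_contra hb
  exact hU (iff_of_true (hL _ (by simp only; omega)) (hL _ (by simp only; omega)))

lemma DualEdge.fst_le (hR : ∀ v : V, x₁ ≤ v.1 → v ∉ U) (h : DualEdge U a b) (_ : a.1 ≤ x₁) :
    b.1 ≤ x₁ := by
  obtain ⟨hab, hU⟩ := h
  unfold xadj at hab
  by_contra hb
  exact hU (iff_of_false (hR _ (by simp only; omega)) (hR _ (by simp only; omega)))

lemma sum_ite_abs_sub_eq_one {I : Finset ℤ} {x : ℤ} (h₁ : x - 1 ∈ I) (h₂ : x + 1 ∈ I)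
    (f : ℤ → ZMod 2) : (∑ x' ∈ I, if |x' - x| = 1 then f x' else 0) = f (x - 1) + f (x + 1) := by
  have hpair : I.filter (fun x' => |x' - x| = 1) = {x - 1, x + 1} := by
    ext x'
    simp only [Finset.mem_filter, Finset.mem_insert, Finset.mem_singleton, abs_eq zero_le_one]
    constructor
    · omega
    · rintro (rfl | rfl) <;> simp [h₁, h₂]
  rw [← Finset.sum_filter, hpair, Finset.sum_pair (by omega)]

lemma sum_Ico_succ_add_eq (χ : ℤ → ZMod 2) {a b : ℤ} (h : a ≤ b) :
    ∑ x ∈ Finset.Ico a b, (χ x + χ (x + 1)) = χ a + χ b := by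
  induction b, h using Int.leInduction with
  | base => simp [CharTwo.add_self_eq_zero]
  | succ b hb ih =>
    rw [← Finset.insert_Ico_right_eq_Ico_add_one hb, Finset.sum_insert Finset.right_notMem_Ico, ih]
    linear_combination CharTwo.add_self_eq_zero (χ b)

/-- The number modulo `2` of horizontal edges around sites of `W` in the row `y`
that have exactly one endpoint in `U`. -/
noncomputable def rowFlux (U W : Set V) (x₀ x₁ y : ℤ) : ZMod 2 :=
  ∑ x ∈ Finset.Ico (x₀ - 1) (x₁ + 2), parityIndicator W (x, y) *
    (parityIndicator U (x - 1, y) + parityIndicator U (x + 1, y))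

/-- Both sides count the dual edges between the rows `y` and `y + 1` within `W`. -/
lemma rowFlux_eq_rowFlux_succ {y : ℤ} (hW : ∀ v ∈ W, x₀ ≤ v.1 ∧ v.1 ≤ x₁)
    (hclosed : ∀ x x', DualEdge U (x, y) (x', y + 1) → ((x, y) ∈ W ↔ (x', y + 1) ∈ W)) :
    rowFlux U W x₀ x₁ y = rowFlux U W x₀ x₁ (y + 1) := by
  set u := parityIndicator U
  set w := parityIndicator W
  set I := Finset.Ico (x₀ - 1) (x₁ + 2)
  have expand (f : ℤ → ZMod 2) (c : ZMod 2) (x z : ℤ) :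
      w (x, z) * (f (x - 1) + f (x + 1)) =
        ∑ x' ∈ I, if |x' - x| = 1 then w (x, z) * (f x' + c) else 0 := by
    by_cases hx : (x, z) ∈ W
    · have := hW _ hx
      rw [sum_ite_abs_sub_eq_one (by simp [I]; omega) (by simp [I]; omega)]
      linear_combination -(w (x, z)) * CharTwo.add_self_eq_zero c
    · simp [w, parityIndicator_of_notMem hx]
  calc ∑ x ∈ I, w (x, y) * (u (x - 1, y) + u (x + 1, y))
      = ∑ x ∈ I, ∑ x' ∈ I, if |x' - x| = 1 then w (x, y) * (u (x', y) + u (x, y + 1)) else 0 :=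
        Finset.sum_congr rfl fun x _ => expand (fun x' => u (x', y)) _ x y
    _ = ∑ x' ∈ I, ∑ x ∈ I,
          if |x - x'| = 1 then w (x', y + 1) * (u (x, y + 1) + u (x', y)) else 0 := by
        rw [Finset.sum_comm]
        refine Finset.sum_congr rfl fun x' _ => Finset.sum_congr rfl fun x _ => ?_
        rw [abs_sub_comm, add_comm (u (x', y))]
        split_ifs with hxx
        swap; · rfl
        by_cases hu : u (x, y + 1) + u (x', y) = 0
        · rw [hu, mul_zero, mul_zero]
        have hdual : DualEdge U (x, y) (x', y + 1) := by
          refine ⟨?_, fun h => hu (parityIndicator_add_eq_zero.2 h.symm)⟩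
          rw [abs_eq zero_le_one] at hxx
          simp only [xadj]
          omega
        congr 1
        exact CharTwo.add_eq_zero.1 (parityIndicator_add_eq_zero.2 (hclosed x x' hdual))
    _ = ∑ x' ∈ I, w (x', y + 1) * (u (x' - 1, y + 1) + u (x' + 1, y + 1)) :=
        Finset.sum_congr rfl fun x' _ => (expand (fun x => u (x, y + 1)) _ x' (y + 1)).symm

lemma rowFlux_eq_one {y : ℤ} (hx : x₀ ≤ x₁) (hL : ∀ v : V, v.1 ≤ x₀ → v ∈ U)
    (hR : ∀ v : V, x₁ ≤ v.1 → v ∉ U) (hodd : ∀ v ∈ W, OddSite v)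
    (hW : ∀ x, x₀ ≤ x → x ≤ x₁ → OddSite (x, y) → ¬((x - 1, y) ∈ U ↔ (x + 1, y) ∈ U) →
      (x, y) ∈ W) :
    rowFlux U W x₀ x₁ y = 1 := by
  classical
  set χ : ℤ → ZMod 2 := fun x =>
    if OddSite (x, y) then parityIndicator U (x - 1, y) else parityIndicator U (x, y)
  have hterm (x : ℤ) : parityIndicator W (x, y) *
      (parityIndicator U (x - 1, y) + parityIndicator U (x + 1, y)) = χ x + χ (x + 1) := by
    by_cases hx : OddSite (x, y)
    · have hx' : ¬OddSite (x + 1, y) := by simp only [OddSite] at *; omega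
      simp only [χ, if_pos hx, if_neg hx']
      by_cases hU : (x - 1, y) ∈ U ↔ (x + 1, y) ∈ U
      · rw [parityIndicator_add_eq_zero.2 hU, mul_zero]
      · rw [parityIndicator_of_mem, one_mul]
        refine hW x ?_ ?_ hx hU
        · by_contra hlt
          exact hU (iff_of_true (hL _ (by simp only; omega)) (hL _ (by simp only; omega)))
        · by_contra hlt
          exact hU (iff_of_false (hR _ (by simp only; omega)) (hR _ (by simp only; omega)))
    · have hx' : OddSite (x + 1, y) := by simp only [OddSite] at *; omega
      simp only [χ, if_neg hx, if_pos hx', add_sub_cancel_right, CharTwo.add_self_eq_zero]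
      rw [parityIndicator_of_notMem fun h => hx (hodd _ h), zero_mul]
  rw [rowFlux, Finset.sum_congr rfl fun x _ => hterm x, sum_Ico_succ_add_eq _ (by omega)]
  have hleft : χ (x₀ - 1) = 1 := by
    simp only [χ]
    split_ifs <;> exact parityIndicator_of_mem (hL _ (by simp only; omega))
  have hright : χ (x₁ + 2) = 0 := by
    simp only [χ]
    split_ifs <;> exact parityIndicator_of_notMem (hR _ (by simp only; omega))
  rw [hleft, hright, add_zero]

lemma exists_dualEdge_of_mem {p : List V} (hc : p.IsChain (DualEdge U)) (hlen : 2 ≤ p.length)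
    {v : V} (hv : v ∈ p) : ∃ w ∈ p, DualEdge U v w := by
  induction p with
  | nil => simp at hlen
  | cons a l ih =>
    match l, hlen with
    | [b], _ =>
      have hab := List.isChain_pair.1 hc
      rcases List.mem_pair.1 hv with rfl | rfl
      · exact ⟨b, by simp, hab⟩
      · exact ⟨a, by simp, hab.symm⟩
    | b :: c :: l, _ =>
      rw [List.isChain_cons_cons] at hc
      rcases List.mem_cons.1 hv with rfl | hv
      · exact ⟨b, by simp, hc.1⟩
      · obtain ⟨w, hw, h⟩ := ih hc.2 (by simp) hv
        exact ⟨w, List.mem_cons_of_mem _ hw, h⟩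

/-- A path of at least two odd sites of `B` separating `U` from its complement: the dual of a
part of the boundary of `U` in the even lattice. -/
structure IsDualPath (U B : Set V) (p : List V) : Prop where
  two_le_length : 2 ≤ p.length
  chain : p.IsChain (DualEdge U)
  odd : ∀ v ∈ p, OddSite v
  mem : ∀ v ∈ p, v ∈ B

lemma IsDualPath.ne_nil {B : Set V} {p : List V} (hp : IsDualPath U B p) : p ≠ [] := by
  rintro rfl
  simpa using hp.two_le_length

lemma IsDualPath.isTopPath {B : Set V} {p : List V} (hp : IsDualPath U B p)
    (hstart : (start p).2 = y₁) : IsTopPath B y₁ p :=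
  ⟨hp.ne_nil, hp.chain.imp fun _ _ h => h.1, hp.odd, hp.mem, hstart⟩

lemma IsDualPath.exists_adj {p : List V} (hp : IsDualPath U (box x₀ x₁ y₀ y₁) p) {v : V}
    (hv : v ∈ p) : ∃ e f, adj e v ∧ adj f v ∧ e ∈ box x₀ x₁ y₀ y₁ ∧ f ∈ box x₀ x₁ y₀ y₁ ∧
      e ∈ U ∧ f ∉ U := by
  obtain ⟨w, hw, hvw, hU⟩ := exists_dualEdge_of_mem hp.chain hp.two_le_length hv
  have hvB := hp.mem v hv
  have hwB := hp.mem w hw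
  have h₁ : (w.1, v.2) ∈ box x₀ x₁ y₀ y₁ := ⟨hwB.1, hwB.2.1, hvB.2.2⟩
  have h₂ : (v.1, w.2) ∈ box x₀ x₁ y₀ y₁ := ⟨hvB.1, hvB.2.1, hwB.2.2⟩
  have a₁ : adj (w.1, v.2) v := by simp only [xadj, adj] at *; omega
  have a₂ : adj (v.1, w.2) v := by simp only [xadj, adj] at *; omega
  by_cases hwU : (w.1, v.2) ∈ U
  · exact ⟨_, _, a₁, a₂, h₁, h₂, hwU, fun h => hU (iff_of_true hwU h)⟩
  · exact ⟨_, _, a₂, a₁, h₂, h₁, by_contra fun h => hU (iff_of_false hwU h), hwU⟩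

/-- The sites reachable along dual edges from the interface of `U` in the top row carry unit flux
through every row, hence through the bottom row. -/
lemma exists_reflTransGen_dualEdge (hx : x₀ ≤ x₁) (hy : y₀ ≤ y₁)
    (hL : ∀ v : V, v.1 ≤ x₀ → v ∈ U) (hR : ∀ v : V, x₁ ≤ v.1 → v ∉ U) :
    ∃ x x', OddSite (x, y₁) ∧ x ∈ Set.Icc x₀ x₁ ∧ ¬((x - 1, y₁) ∈ U ↔ (x + 1, y₁) ∈ U) ∧
      ¬((x' - 1, y₀) ∈ U ↔ (x' + 1, y₀) ∈ U) ∧ Relation.ReflTransGen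
        (fun a b => DualEdge U a b ∧ OddSite b ∧ b ∈ box x₀ x₁ y₀ y₁) (x, y₁) (x', y₀) := by
  set W : Set V := {a | ∃ x, OddSite (x, y₁) ∧ x ∈ Set.Icc x₀ x₁ ∧
    ¬((x - 1, y₁) ∈ U ↔ (x + 1, y₁) ∈ U) ∧ Relation.ReflTransGen
      (fun a b => DualEdge U a b ∧ OddSite b ∧ b ∈ box x₀ x₁ y₀ y₁) (x, y₁) a}
  have hsite : ∀ a ∈ W, OddSite a ∧ a ∈ box x₀ x₁ y₀ y₁ := by
    rintro a ⟨x, hodd, hx, -, h⟩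
    rcases Relation.ReflTransGen.cases_tail h with rfl | ⟨b, -, -, h⟩
    · exact ⟨hodd, hx.1, hx.2, hy, le_rfl⟩
    · exact h
  have hstep {a b : V} (ha : a ∈ W) (hab : DualEdge U a b) (h₀ : y₀ ≤ b.2) (h₁ : b.2 ≤ y₁) :
      b ∈ W := by
    obtain ⟨hodd, hbox⟩ := hsite a ha
    obtain ⟨x, hx, hxI, hU, h⟩ := ha
    exact ⟨x, hx, hxI, hU, h.tail ⟨hab, hab.1.oddSite_iff.1 hodd,
      hab.le_fst hL hbox.1, hab.fst_le hR hbox.2.1, h₀, h₁⟩⟩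
  have htop : rowFlux U W x₀ x₁ y₁ = 1 :=
    rowFlux_eq_one hx hL hR (fun v hv => (hsite v hv).1) fun x h₀ h₁ hodd hU =>
      ⟨x, hodd, ⟨h₀, h₁⟩, hU, .refl⟩
  have hconst (y : ℤ) (hy : y ≤ y₁) (hy₀ : y₀ ≤ y) : rowFlux U W x₀ x₁ y = 1 := by
    induction y, hy using Int.leInductionDown with
    | base => exact htop
    | pred y hy ih =>
      rw [rowFlux_eq_rowFlux_succ fun v hv => ⟨(hsite v hv).2.1, (hsite v hv).2.2.1⟩,
        sub_add_cancel]
      · exact ih (by omega)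
      · rw [sub_add_cancel]
        exact fun x x' h => ⟨fun h' => hstep h' h (by simp only; omega) hy,
          fun h' => hstep h' h.symm hy₀ (by simp only; omega)⟩
  obtain ⟨x', -, hx'⟩ := Finset.exists_ne_zero_of_sum_ne_zero
    ((hconst y₀ hy le_rfl).trans_ne one_ne_zero)
  obtain ⟨hx'W, hx'U⟩ := ne_zero_and_ne_zero_of_mul hx'
  have hmem : (x', y₀) ∈ W := by_contra fun h => hx'W (parityIndicator_of_notMem h)
  obtain ⟨x, hodd, hxI, hU, h⟩ := hmem
  exact ⟨x, x', hodd, hxI, hU, fun h => hx'U (parityIndicator_add_eq_zero.2 h), h⟩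

lemma exists_isDualPath (hx : x₀ ≤ x₁) (hy : y₀ < y₁) (hL : ∀ v : V, v.1 ≤ x₀ → v ∈ U)
    (hR : ∀ v : V, x₁ ≤ v.1 → v ∉ U) :
    ∃ p, IsDualPath U (box x₀ x₁ y₀ y₁) p ∧ (start p).2 = y₁ ∧ (finish p).2 = y₀ ∧
      ¬(((start p).1 - 1, y₁) ∈ U ↔ ((start p).1 + 1, y₁) ∈ U) ∧
      ¬(((finish p).1 - 1, y₀) ∈ U ↔ ((finish p).1 + 1, y₀) ∈ U) := by
  obtain ⟨x, x', hodd, hxI, hU, hU', h⟩ := exists_reflTransGen_dualEdge hx hy.le hL hR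
  obtain ⟨l, hl, hlast⟩ := List.exists_isChain_cons_of_relationReflTransGen h
  have hsite : ∀ v ∈ (x, y₁) :: l, OddSite v ∧ v ∈ box x₀ x₁ y₀ y₁ :=
    hl.induction _ _ (fun _ _ h _ => h.2) fun _ => ⟨hodd, hxI.1, hxI.2, hy.le, le_rfl⟩
  have hfinish : finish ((x, y₁) :: l) = (x', y₀) := by
    rw [finish_eq_getLast (List.cons_ne_nil _ _), hlast]
  refine ⟨(x, y₁) :: l, ⟨?_, hl.imp fun _ _ h => h.1, fun v hv => (hsite v hv).1,
    fun v hv => (hsite v hv).2⟩, rfl, by rw [hfinish], hU, by rwa [hfinish]⟩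
  rcases l with _ | ⟨b, l⟩
  · exact absurd (congrArg Prod.snd hlast) hy.ne'
  · simp

end DualEdge

/-! ### Walls and duality in a rectangle -/

/-- `Reach B S T v`: the site `v` is the end of a nearest-neighbour path in `B` that starts in `S`
and avoids `T`. -/
inductive Reach (B S T : Set V) : V → Prop
  | base {v : V} : v ∈ B → v ∈ S → v ∉ T → Reach B S T v
  | step {u v : V} : Reach B S T u → adj u v → v ∈ B → v ∉ T → Reach B S T v

section Reach

variable {B S T T' : Set V} {u v : V}

lemma Reach.mem (h : Reach B S T v) : v ∈ B := by cases h <;> assumption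

lemma Reach.notMem (h : Reach B S T v) : v ∉ T := by cases h <;> assumption

lemma Reach.avoiding (h : Reach B S T v) (hT' : ∀ w, Reach B S T w → w ∉ T') : Reach B S T' v := by
  induction h with
  | base hB hS hT => exact .base hB hS (hT' _ (.base hB hS hT))
  | step hu huv hB hT ih => exact .step ih huv hB (hT' _ (.step hu huv hB hT))

lemma notMem_of_evenSite (hT : ∀ v ∈ T, OddSite v) (hv : EvenSite v) : v ∉ T :=
  fun h => not_oddSite.2 hv (hT v h)

end Reach

/-- A family `C` of `×`-paths of a rectangle, starting on its top side, is a wall class between `S`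
and `T` if each path in `C` has `S` on its side `s` and `T` on the other side, and every blocking
set of odd sites contains a path of `C` that touches the component of `S`. -/
structure WallClass (x₀ x₁ y₀ y₁ : ℤ) (S T : Set V) (C : Set (List V)) (s : ZMod 2) : Prop where
  isTopPath : ∀ p ∈ C, IsTopPath (box x₀ x₁ y₀ y₁) y₁ p
  side_source : ∀ p ∈ C, ∀ v ∈ box x₀ x₁ y₀ y₁, v ∈ S → v ∉ p → side y₁ p v = s
  side_adj : ∀ p ∈ C, ∀ v ∈ box x₀ x₁ y₀ y₁, ∀ w ∈ box x₀ x₁ y₀ y₁, v ∉ p → w ∉ p →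
    adj v w → side y₁ p v = side y₁ p w
  side_target : ∀ p ∈ C, ∀ v ∈ box x₀ x₁ y₀ y₁, v ∈ T → v ∉ p → side y₁ p v ≠ s
  exists_blocking : ∀ O : Set V, (∀ v ∈ O, OddSite v) → (∀ v ∈ T, ¬Reach (box x₀ x₁ y₀ y₁) S O v) →
    ∃ p ∈ C, ∀ v ∈ p, v ∈ O ∧ ∃ e, adj e v ∧ Reach (box x₀ x₁ y₀ y₁) S O e

section WallClass

variable {x₀ x₁ y₀ y₁ : ℤ} {S T : Set V} {C : Set (List V)} {s : ZMod 2} {p : List V} {v : V}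

lemma WallClass.side_eq_of_reach (hC : WallClass x₀ x₁ y₀ y₁ S T C s) (hp : p ∈ C)
    (hv : Reach (box x₀ x₁ y₀ y₁) S {v | v ∈ p} v) : side y₁ p v = s := by
  induction hv with
  | base hB hS hvp => exact hC.side_source p hp _ hB hS hvp
  | step hu huv hB hvp ih =>
    exact (hC.side_adj p hp _ hu.mem _ hB hu.notMem hvp huv).symm.trans ih

lemma WallClass.notMem_target (hC : WallClass x₀ x₁ y₀ y₁ S T C s) (hp : p ∈ C)
    (hv : Reach (box x₀ x₁ y₀ y₁) S {v | v ∈ p} v) : v ∉ T :=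
  fun h => hC.side_target p hp v hv.mem h hv.notMem (hC.side_eq_of_reach hp hv)

end WallClass

lemma IsDualPath.compl {U B : Set V} {p : List V} (hp : IsDualPath U B p) : IsDualPath Uᶜ B p where
  two_le_length := hp.two_le_length
  chain := hp.chain.imp fun _ _ h => ⟨h.1, fun h' => h.2 (not_iff_not.1 h')⟩
  odd := hp.odd
  mem := hp.mem

/-- The set `U` between the columns `x₀` and `x₁`, completed by everything to the left. -/
def leftExtension (x₀ x₁ : ℤ) (U : Set V) : Set V := {v | v.1 ≤ x₀ ∨ v.1 < x₁ ∧ v ∈ U}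

section Instances

variable {x₀ x₁ y₀ y₁ s : ℤ} {U S O : Set V} {p : List V}

lemma mem_leftExtension_iff {v : V} (h₀ : v.1 ≤ x₀ → v ∈ U) (h₁ : v ∈ U → v.1 < x₁) :
    v ∈ leftExtension x₀ x₁ U ↔ v ∈ U :=
  ⟨fun h => h.elim h₀ And.right, fun h => Or.inr ⟨h₁ h, h⟩⟩

lemma exists_isDualPath_leftExtension (U : Set V) (hx : x₀ < x₁) (hy : y₀ < y₁) :
    ∃ p, IsDualPath (leftExtension x₀ x₁ U) (box x₀ x₁ y₀ y₁) p ∧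
      (start p).2 = y₁ ∧ (finish p).2 = y₀ ∧
      ¬(((start p).1 - 1, y₁) ∈ leftExtension x₀ x₁ U ↔
        ((start p).1 + 1, y₁) ∈ leftExtension x₀ x₁ U) ∧
      ¬(((finish p).1 - 1, y₀) ∈ leftExtension x₀ x₁ U ↔
        ((finish p).1 + 1, y₀) ∈ leftExtension x₀ x₁ U) :=
  exists_isDualPath hx.le hy (fun _ hv => Or.inl hv) fun v hv h => by
    rcases h with h | h <;> omega

lemma IsDualPath.touches_reach (hp : IsDualPath U (box x₀ x₁ y₀ y₁) p) (hO : ∀ v ∈ O, OddSite v)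
    (hU : ∀ e ∈ box x₀ x₁ y₀ y₁, EvenSite e → (e ∈ U ↔ Reach (box x₀ x₁ y₀ y₁) S O e))
    {v : V} (hv : v ∈ p) : v ∈ O ∧ ∃ e, adj e v ∧ Reach (box x₀ x₁ y₀ y₁) S O e := by
  obtain ⟨e, f, hev, hfv, heB, hfB, heU, hfU⟩ := hp.exists_adj hv
  have hodd := hp.odd v hv
  have hf := hfv.evenSite_iff.2 hodd
  rw [hU e heB (hev.evenSite_iff.2 hodd)] at heU
  rw [hU f hfB hf] at hfU
  refine ⟨?_, e, hev, heU⟩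
  by_contra hvO
  exact hfU (.step (.step heU hev (hp.mem v hv) hvO) hfv.symm hfB (notMem_of_evenSite hO hf))

/-- The `×`-paths of odd sites from the top side of a rectangle to its bottom side. -/
def verticalCrossings (x₀ x₁ y₀ y₁ : ℤ) : Set (List V) :=
  {p | IsTopPath (box x₀ x₁ y₀ y₁) y₁ p ∧ (finish p).2 = y₀}

lemma wallClass_verticalCrossings (hx : x₀ < x₁) (hy : y₀ < y₁) :
    WallClass x₀ x₁ y₀ y₁ {v | v.1 = x₀} {v | v.1 = x₁} (verticalCrossings x₀ x₁ y₀ y₁) 0 where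
  isTopPath p hp := hp.1
  side_source p hp v _ hv _ := side_of_le_left hp.1 (le_of_eq hv)
  side_adj p hp v hv w hw hvp hwp h := side_eq_of_adj hp.1 (Or.inl hp.2) hv hw hvp hwp h
  side_target p hp v hvB hv hvp := by
    rw [side_right hp.1 hp.2 hvB hv hvp]
    exact one_ne_zero
  exists_blocking O hO hO' := by
    obtain ⟨p, hp, hstart, hfinish, -, -⟩ :=
      exists_isDualPath_leftExtension {v | Reach (box x₀ x₁ y₀ y₁) {v | v.1 = x₀} O v} hx hy
    refine ⟨p, ⟨hp.isTopPath hstart, hfinish⟩, fun v hv => hp.touches_reach hO ?_ hv⟩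
    exact fun e heB he => mem_leftExtension_iff
      (fun h => .base heB (le_antisymm h heB.1) (notMem_of_evenSite hO he))
      fun h => lt_of_le_of_ne heB.2.1 fun h' => hO' e h' h

/-- The vertical crossings of a rectangle that start at or to the left of the column `s`. -/
def leftVerticalCrossings (x₀ x₁ y₀ y₁ s : ℤ) : Set (List V) :=
  {p ∈ verticalCrossings x₀ x₁ y₀ y₁ | (start p).1 ≤ s}

lemma wallClass_leftVerticalCrossings (hx : x₀ < x₁) (hy : y₀ < y₁) (hs : x₀ < s) :
    WallClass x₀ x₁ y₀ y₁ {v | v.1 = x₁ ∨ v.2 = y₁ ∧ s ≤ v.1} {v | v.1 = x₀}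
      (leftVerticalCrossings x₀ x₁ y₀ y₁ s) 1 where
  isTopPath p hp := hp.1.1
  side_source p hp v hvB hv hvp := by
    obtain ⟨⟨htop, hfinish⟩, hstart⟩ := hp
    rcases hv with hv | ⟨hv, hsv⟩
    · exact side_right htop hfinish hvB hv hvp
    · have := ne_of_notMem_path hvp (start_mem htop.ne_nil)
      have := htop.start_snd
      rw [side_top htop hv, if_pos (by omega)]
  side_adj p hp v hv w hw hvp hwp h := side_eq_of_adj hp.1.1 (Or.inl hp.1.2) hv hw hvp hwp h
  side_target p hp v _ hv _ := by
    rw [side_of_le_left hp.1.1 (le_of_eq hv)]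
    exact zero_ne_one
  exists_blocking O hO hO' := by
    set R : Set V := {v | Reach (box x₀ x₁ y₀ y₁) {v | v.1 = x₁ ∨ v.2 = y₁ ∧ s ≤ v.1} O v}
    obtain ⟨p, hp, hstart, hfinish, htop, -⟩ := exists_isDualPath_leftExtension Rᶜ hx hy
    have hsource {e : V} (heB : e ∈ box x₀ x₁ y₀ y₁) (he : EvenSite e)
        (h : e.1 = x₁ ∨ e.2 = y₁ ∧ s ≤ e.1) : e ∈ R := .base heB h (notMem_of_evenSite hO he)
    have hR : ∀ e ∈ box x₀ x₁ y₀ y₁, EvenSite e →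
        (e ∈ (leftExtension x₀ x₁ Rᶜ)ᶜ ↔ e ∈ R) := fun e heB he => by
      rw [Set.mem_compl_iff, mem_leftExtension_iff, Set.mem_compl_iff, not_not]
      · exact fun h => hO' e (le_antisymm h heB.1)
      · exact fun h => lt_of_le_of_ne heB.2.1 fun h' => h (hsource heB he (Or.inl h'))
    refine ⟨p, ⟨⟨hp.isTopPath hstart, hfinish⟩, ?_⟩, fun v hv => hp.compl.touches_reach hO hR hv⟩
    by_contra! hlt
    have hodd := hp.odd _ (start_mem hp.ne_nil)
    have hright (x : ℤ) (hx : s ≤ x) (he : EvenSite (x, y₁)) :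
        (x, y₁) ∉ leftExtension x₀ x₁ Rᶜ := by
      rintro (h | ⟨h, h'⟩)
      · exact (hs.trans_le hx).not_ge h
      · exact h' (hsource ⟨by simp only; omega, h.le, hy.le, le_rfl⟩ he (Or.inr ⟨rfl, hx⟩))
    simp only [OddSite, EvenSite] at *
    exact htop (iff_of_false (hright _ (by omega) (by omega)) (hright _ (by omega) (by omega)))

lemma start_eq_of_prefix {q : List V} (hq : q ≠ []) (h : q <+: p) : start q = start p := by
  obtain ⟨r, rfl⟩ := h
  cases q with
  | nil => exact absurd rfl hq
  | cons a l => rfl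

lemma exists_prefix_finish_eq {r : V → V → Prop} {φ : V → ℤ}
    (hφ : ∀ u v, r u v → φ v ≤ φ u + 1) (hp : p.IsChain r) (hstart : φ (start p) < s)
    (h : ∃ v ∈ p, s ≤ φ v) :
    ∃ q, q <+: p ∧ 2 ≤ q.length ∧ (∀ v ∈ q, φ v ≤ s) ∧ φ (finish q) = s := by
  induction p with
  | nil => simp at h
  | cons a l ih =>
    change φ a < s at hstart
    rw [List.exists_mem_cons_iff, or_iff_right hstart.not_ge] at h
    cases l with
    | nil => simp at h
    | cons b l =>
      rw [List.isChain_cons_cons] at hp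
      by_cases hb : φ b < s
      · obtain ⟨q, hq, hlen, hle, hfinish⟩ := ih hp.2 hb h
        match q, hlen with
        | c :: d :: q, _ =>
          exact ⟨a :: c :: d :: q, (List.prefix_cons_inj a).2 hq, by simp,
            List.forall_mem_cons.2 ⟨hstart.le, hle⟩, (finish_cons_cons ..).symm ▸ hfinish⟩
      · have hbs : φ b = s := by have := hφ a b hp.1; omega
        exact ⟨[a, b], ⟨l, rfl⟩, le_rfl, by simp [hstart.le, hbs], hbs⟩

/-- The `×`-paths of odd sites that start on the top side of a rectangle, to the left of the column
`s`, and end on that column, which is the right side of the rectangle. -/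
def cornerCrossings (x₀ s y₀ y₁ : ℤ) : Set (List V) :=
  {p | IsTopPath (box x₀ s y₀ y₁) y₁ p ∧ (start p).1 < s ∧ (finish p).1 = s}

/-- The even sites of the row `y₁` to the right of the column `s - 2`. -/
def topRight (s y₁ : ℤ) : Set V := {v | EvenSite v ∧ v.2 = y₁ ∧ s - 1 ≤ v.1}

lemma exists_isDualPath_corner (hs : x₀ < s) (hy : y₀ < y₁) (hO : ∀ v ∈ O, OddSite v)
    (hO' : ∀ v ∈ topRight s y₁, ¬Reach (box x₀ s y₀ y₁) {v | v.1 = x₀ ∨ v.2 = y₀} O v) :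
    ∃ p, IsDualPath
        (leftExtension x₀ (s + 1) {v | Reach (box x₀ s y₀ y₁) {v | v.1 = x₀ ∨ v.2 = y₀} O v})
        (box x₀ (s + 1) y₀ y₁) p ∧
      (start p).2 = y₁ ∧ (start p).1 < s ∧ s ≤ (finish p).1 := by
  set R : Set V := {v | Reach (box x₀ s y₀ y₁) {v | v.1 = x₀ ∨ v.2 = y₀} O v}
  obtain ⟨p, hp, hstart, hfinish, htop, hbot⟩ :=
    exists_isDualPath_leftExtension R (hs.trans (lt_add_one s)) hy
  have hstart_odd := hp.odd _ (start_mem hp.ne_nil)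
  have hfinish_odd := hp.odd _ (finish_mem hp.ne_nil)
  have hsource {e : V} (heB : e ∈ box x₀ s y₀ y₁) (he : EvenSite e)
      (h : e.1 = x₀ ∨ e.2 = y₀) : e ∈ R := .base heB h (notMem_of_evenSite hO he)
  have htopRight (x : ℤ) (hx : s - 1 ≤ x) (he : EvenSite (x, y₁)) :
      (x, y₁) ∉ leftExtension x₀ (s + 1) R := by
    rintro (h | ⟨-, h⟩)
    · exact hO' _ ⟨he, rfl, hx⟩ (hsource
        ⟨by simp only at *; omega, by simp only at *; omega, hy.le, le_rfl⟩ he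
        (Or.inl (by simp only at *; omega)))
    · exact hO' _ ⟨he, rfl, hx⟩ h
  have hbottom (x : ℤ) (hx : x ≤ s) (he : EvenSite (x, y₀)) :
      (x, y₀) ∈ leftExtension x₀ (s + 1) R := by
    by_cases hx₀ : x ≤ x₀
    · exact Or.inl hx₀
    · exact Or.inr ⟨Int.lt_add_one_of_le hx,
        hsource ⟨by simp only; omega, hx, le_rfl, hy.le⟩ he (Or.inr rfl)⟩
  refine ⟨p, hp, hstart, ?_, ?_⟩ <;> by_contra! hlt <;> simp only [OddSite, EvenSite] at *
  · exact htop (iff_of_false (htopRight _ (by omega) (by omega))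
      (htopRight _ (by omega) (by omega)))
  · exact hbot (iff_of_true (hbottom _ (by omega) (by omega)) (hbottom _ (by omega) (by omega)))

lemma wallClass_cornerCrossings (hs : x₀ < s) (hy : y₀ < y₁) :
    WallClass x₀ s y₀ y₁ {v | v.1 = x₀ ∨ v.2 = y₀} (topRight s y₁)
      (cornerCrossings x₀ s y₀ y₁) 0 where
  isTopPath p hp := hp.1
  side_source p hp v hvB hv hvp := by
    rcases hv with hv | hv
    · exact side_of_le_left hp.1 (le_of_eq hv)
    · exact side_bottom hp.1 hp.2.2.ge hvB hv hvp
  side_adj p hp v hv w hw hvp hwp h := side_eq_of_adj hp.1 (Or.inr hp.2.2.ge) hv hw hvp hwp h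
  side_target p hp v _ hv _ := by
    obtain ⟨htop, hstart, -⟩ := hp
    have hodd := htop.odd _ (start_mem htop.ne_nil)
    have hrow := htop.start_snd
    obtain ⟨heven, hv, hsv⟩ := hv
    rw [side_top htop hv, if_pos]
    · exact one_ne_zero
    · simp only [OddSite, EvenSite] at *
      omega
  exists_blocking O hO hO' := by
    obtain ⟨p, hp, hrow, hstart, hfinish⟩ := exists_isDualPath_corner hs hy hO hO'
    obtain ⟨q, hqp, hlen, hle, hq⟩ := exists_prefix_finish_eq
      (φ := Prod.fst) (fun _ _ h => by simp only [xadj] at h; omega)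
      (hp.chain.imp fun _ _ h => h.1) hstart ⟨_, finish_mem hp.ne_nil, hfinish⟩
    have hdual : IsDualPath _ (box x₀ s y₀ y₁) q :=
      ⟨hlen, hp.chain.prefix hqp, fun v hv => hp.odd v (hqp.subset hv), fun v hv =>
        have hvB := hp.mem v (hqp.subset hv)
        ⟨hvB.1, hle v hv, hvB.2.2⟩⟩
    have hq_start := start_eq_of_prefix hdual.ne_nil hqp
    refine ⟨q, ⟨hdual.isTopPath (hq_start ▸ hrow), hq_start ▸ hstart, hq⟩,
      fun v hv => hdual.touches_reach hO (fun e heB he => ?_) hv⟩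
    exact mem_leftExtension_iff
      (fun h => .base heB (Or.inl (le_antisymm h heB.1)) (notMem_of_evenSite hO he))
      fun _ => Int.lt_add_one_of_le heB.2.1

end Instances

/-- The odd sites where `f` does not vanish. -/
def nonzeroSites (f : V → ℤ) : Set V := {v | OddSite v ∧ f v ≠ 0}

/-- `f` vanishes on some path of `C`. -/
def HasZeroPath (C : Set (List V)) (f : V → ℤ) : Prop := ∃ p ∈ C, ∀ v ∈ p, f v = 0

/-- The nonzero odd sites separate `S` from `T` in `B`, and no path of `C` lies within the
component of `S`. -/
def WalledOff (B S T : Set V) (C : Set (List V)) (f : V → ℤ) : Prop :=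
  (∀ v ∈ T, ¬Reach B S (nonzeroSites f) v) ∧ ¬∃ p ∈ C, ∀ v ∈ p, Reach B S (nonzeroSites f) v

/-- The reflection `g ↦ 2 - g` inside `F`. -/
noncomputable def reflectOn (F : Set V) (g : V → ℤ) : V → ℤ :=
  open Classical in fun v => if v ∈ F then 2 - g v else g v

/-- `F` is finite, and an even site belongs to `F` exactly when its neighbours do. -/
structure IsInnerDomain (F : Set V) : Prop where
  finite : F.Finite
  mem_of_adj : ∀ u ∈ F, EvenSite u → ∀ v, adj u v → v ∈ F
  mem_of_forall_adj : ∀ u, EvenSite u → (∀ v, adj u v → v ∈ F) → u ∈ F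

section Events

variable {x₀ x₁ y₀ y₁ : ℤ} {B S T F : Set V} {C : Set (List V)} {s : ZMod 2} {f f' g : V → ℤ}

lemma Reach.anti (h : ∀ v, f' v = 0 → f v = 0) {v : V} (hv : Reach B S (nonzeroSites f') v) :
    Reach B S (nonzeroSites f) v :=
  hv.avoiding fun w hw hwf => hw.notMem ⟨hwf.1, fun h0 => hwf.2 (h w h0)⟩

lemma WalledOff.mono (h : ∀ v, f' v = 0 → f v = 0) (hf : WalledOff B S T C f) :
    WalledOff B S T C f' :=
  ⟨fun v hv hv' => hf.1 v hv (hv'.anti h), fun ⟨p, hp, hp'⟩ =>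
    hf.2 ⟨p, hp, fun v hv => (hp' v hv).anti h⟩⟩

/-- A zero path of `f` is a barrier for the zeros of `f'`. -/
lemma Reach.avoiding_zeroPath (hC : WallClass x₀ x₁ y₀ y₁ S T C s)
    (hdisj : ∀ v ∈ box x₀ x₁ y₀ y₁, OddSite v → ¬(f v = 0 ∧ f' v = 0)) {p : List V} (hp : p ∈ C)
    (hfp : ∀ v ∈ p, f v = 0) {v : V} (hv : Reach (box x₀ x₁ y₀ y₁) S (nonzeroSites f') v) :
    Reach (box x₀ x₁ y₀ y₁) S {v | v ∈ p} v :=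
  hv.avoiding fun w hw hwp =>
    have hodd := (hC.isTopPath p hp).odd w hwp
    hw.notMem ⟨hodd, fun h => hdisj w ((hC.isTopPath p hp).mem w hwp) hodd ⟨hfp w hwp, h⟩⟩

lemma WallClass.start_eq (hC : WallClass x₀ x₁ y₀ y₁ S T C s) {p q : List V} (hp : p ∈ C)
    (hq : q ∈ C) (hpq : Reach (box x₀ x₁ y₀ y₁) S {v | v ∈ q} (start p))
    (hqp : Reach (box x₀ x₁ y₀ y₁) S {v | v ∈ p} (start q)) : start p = start q := by
  have hp' := hC.isTopPath p hp
  have hq' := hC.isTopPath q hq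
  have h := (hC.side_eq_of_reach hq hpq).trans (hC.side_eq_of_reach hp hqp).symm
  rw [side_top hq' hp'.start_snd, side_top hp' hq'.start_snd] at h
  refine Prod.ext ?_ (hp'.start_snd.trans hq'.start_snd.symm)
  split_ifs at h <;> first | omega | simp at h

lemma walledOff_or_walledOff (hC : WallClass x₀ x₁ y₀ y₁ S T C s)
    (hdisj : ∀ v ∈ box x₀ x₁ y₀ y₁, OddSite v → ¬(f v = 0 ∧ f' v = 0))
    (hf : HasZeroPath C f) (hf' : HasZeroPath C f') :
    WalledOff (box x₀ x₁ y₀ y₁) S T C f ∨ WalledOff (box x₀ x₁ y₀ y₁) S T C f' := by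
  have hdisj' : ∀ v ∈ box x₀ x₁ y₀ y₁, OddSite v → ¬(f' v = 0 ∧ f v = 0) :=
    fun v hv hodd h => hdisj v hv hodd h.symm
  have zero_of_reach {f : V → ℤ} {p : List V} (hp : p ∈ C)
      (h : ∀ v ∈ p, Reach (box x₀ x₁ y₀ y₁) S (nonzeroSites f) v) : ∀ v ∈ p, f v = 0 :=
    fun v hv => by_contra fun h0 => (h v hv).notMem ⟨(hC.isTopPath p hp).odd v hv, h0⟩
  obtain ⟨p, hp, hfp⟩ := hf
  obtain ⟨q, hq, hfq⟩ := hf'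
  by_contra! hcon
  obtain ⟨p', hp', hp'R⟩ := not_not.1 fun h => hcon.1
    ⟨fun v hv hR => hC.notMem_target hq (hR.avoiding_zeroPath hC hdisj' hq hfq) hv, h⟩
  obtain ⟨q', hq', hq'R⟩ := not_not.1 fun h => hcon.2
    ⟨fun v hv hR => hC.notMem_target hp (hR.avoiding_zeroPath hC hdisj hp hfp) hv, h⟩
  have hstart_p := start_mem (hC.isTopPath p' hp').ne_nil
  have hstart_q := start_mem (hC.isTopPath q' hq').ne_nil
  have hfp' := zero_of_reach hp' hp'R
  have hfq' := zero_of_reach hq' hq'R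
  have heq := hC.start_eq hp' hq'
    ((hp'R _ hstart_p).avoiding_zeroPath hC hdisj' hq' hfq')
    ((hq'R _ hstart_q).avoiding_zeroPath hC hdisj hp' hfp')
  exact hdisj _ ((hC.isTopPath p' hp').mem _ hstart_p) ((hC.isTopPath p' hp').odd _ hstart_p)
    ⟨hfp' _ hstart_p, heq ▸ hfq' _ hstart_q⟩

lemma reflectOn_mem_heights (hF : IsInnerDomain F) (hg : g ∈ Heights F baseHeight) :
    reflectOn F g ∈ Heights F baseHeight := by
  refine ⟨.of_evenSite (fun v => ?_) fun u v huv hu _ => ?_, fun v hv => ?_⟩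
  · have := hg.1.parity v
    unfold reflectOn
    split_ifs <;> omega
  · have := hg.1.sub_eq huv
    unfold reflectOn
    by_cases huF : u ∈ F
    · rw [if_pos huF, if_pos (hF.mem_of_adj u huF hu v huv)]
      omega
    · have := (hg.2 u huF).trans (baseHeight_of_evenSite hu)
      rw [if_neg huF]
      split_ifs <;> omega
  · rw [reflectOn, if_neg hv, hg.2 v hv]

lemma reflectOn_reflectOn (F : Set V) (g : V → ℤ) : reflectOn F (reflectOn F g) = g := by
  funext v
  unfold reflectOn
  split_ifs <;> omega

lemma ncard_reflectOn (hF : IsInnerDomain F) (P : (V → ℤ) → Prop) :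
    {g | g ∈ Heights F baseHeight ∧ P (reflectOn F g)}.ncard =
      {g | g ∈ Heights F baseHeight ∧ P g}.ncard := by
  have hinv : Function.Involutive (reflectOn F) := reflectOn_reflectOn F
  rw [← Set.ncard_image_of_injective _ hinv.injective, hinv.image_eq_preimage_symm]
  congr 1
  ext g
  simp only [Set.mem_preimage, Set.mem_ofPred_eq, hinv g]
  exact and_congr_left fun _ =>
    ⟨fun h => hinv g ▸ reflectOn_mem_heights hF h, reflectOn_mem_heights hF⟩

/-- A height `g` and its reflection `2 - g` have disjoint zero sets, so if both have zero paths then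
one of them is walled off. -/
lemma two_mul_absCount_hasZeroPath_le (hC : WallClass x₀ x₁ y₀ y₁ S T C s) (hF : IsInnerDomain F)
    (hbox : ∀ v ∈ box x₀ x₁ y₀ y₁, OddSite v → v ∈ F) :
    2 * absCount F (HasZeroPath C) ≤
      absCount F (fun _ => True) + 2 * absCount F (WalledOff (box x₀ x₁ y₀ y₁) S T C) := by
  have hfin := finite_heights hF.finite baseHeight
  have finite_sep (P : (V → ℤ) → Prop) : {g | g ∈ Heights F baseHeight ∧ P g}.Finite :=
    hfin.subset fun g hg => hg.1
  set Z := {g | g ∈ Heights F baseHeight ∧ HasZeroPath C |g|}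
  set Z' := {g | g ∈ Heights F baseHeight ∧ HasZeroPath C |reflectOn F g|}
  set N := {g | g ∈ Heights F baseHeight ∧ WalledOff (box x₀ x₁ y₀ y₁) S T C |g|}
  set N' := {g | g ∈ Heights F baseHeight ∧ WalledOff (box x₀ x₁ y₀ y₁) S T C |reflectOn F g|}
  have hZ' : Z'.ncard = Z.ncard := ncard_reflectOn hF fun g => HasZeroPath C |g|
  have hN' : N'.ncard = N.ncard :=
    ncard_reflectOn hF fun g => WalledOff (box x₀ x₁ y₀ y₁) S T C |g|
  have hinter : Z ∩ Z' ⊆ N ∪ N' := by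
    rintro g ⟨⟨hg, hgZ⟩, -, hgZ'⟩
    refine (walledOff_or_walledOff hC (fun v hv hodd h => ?_) hgZ hgZ').imp (⟨hg, ·⟩) (⟨hg, ·⟩)
    simp only [Pi.abs_apply, abs_eq_zero, reflectOn, if_pos (hbox v hv hodd)] at h
    omega
  have hunion : (Z ∪ Z').ncard ≤ absCount F fun _ => True :=
    Set.ncard_le_ncard (fun g hg => ⟨hg.elim And.left And.left, trivial⟩) (finite_sep _)
  have hcard := Set.ncard_union_add_ncard_inter Z Z' (finite_sep _) (finite_sep _)
  have hle := Set.ncard_le_ncard hinter ((finite_sep _).union (finite_sep _))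
  have hsub := Set.ncard_union_le N N'
  change 2 * Z.ncard ≤ _ + 2 * N.ncard
  omega

end Events

section Explored

variable {B S T : Set V} {p : List V} {v w : V}

/-- The sites reached from `S` in `B` without crossing the wall `p`, together with `p`. -/
def explored (B S : Set V) (p : List V) : Set V := {v | Reach B S {w | w ∈ p} v ∨ v ∈ p}

lemma mem_explored_of_mem_source (hB : v ∈ B) (hS : v ∈ S) : v ∈ explored B S p :=
  or_iff_not_imp_right.2 fun h => .base hB hS h

lemma mem_explored_of_adj (hv : v ∈ explored B S p) (hvp : v ∉ p) (h : adj v w) (hw : w ∈ B) :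
    w ∈ explored B S p :=
  or_iff_not_imp_right.2 fun hwp => .step (hv.resolve_right hvp) h hw hwp

lemma explored_subset (hp : ∀ v ∈ p, v ∈ B) : explored B S p ⊆ B :=
  fun v hv => hv.elim Reach.mem (hp v)

end Explored

lemma StarLinked.symm {S G₁ G₂ : Set V} (h : StarLinked S G₁ G₂) : StarLinked S G₂ G₁ := by
  obtain ⟨a, ha, b, hb, hab⟩ := h
  suffices ∀ c, StarReach S G₂ c → StarNear a c → StarLinked S G₂ G₁ from this b (.base b hb) hab
  clear hab
  induction ha with
  | base a ha => exact fun c hc hac => ⟨c, hc, a, ha, hac.symm⟩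
  | step _ a _ ha'a ha ih => exact fun c hc hac => ih a (.step c a hc hac.symm ha) ha'a

lemma StarNear.exists_between {x₀ x₁ y₀ y₁ : ℤ} {a b : V} (h : StarNear a b) (hab : a ≠ b)
    (ha : OddSite a) (haB : a ∈ box x₀ x₁ y₀ y₁) (hbB : b ∈ box x₀ x₁ y₀ y₁) :
    ∃ e ∈ box x₀ x₁ y₀ y₁, EvenSite e ∧ adj e a ∧ adj e b := by
  obtain ⟨u, hu, hua, hub⟩ := h
  have hne : a.1 ≠ b.1 ∨ a.2 ≠ b.2 := not_and_or.1 (mt Prod.ext_iff.2 hab)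
  by_cases hline : a.1 = b.1 ∨ a.2 = b.2
  · refine ⟨u, ?_, hu, hua, hub⟩
    simp only [mem_box, adj] at *
    omega
  · refine ⟨(b.1, a.2), ⟨hbB.1, hbB.2.1, haB.2.2⟩, ?_, ?_, ?_⟩ <;>
      simp only [EvenSite, OddSite, adj] at * <;> omega

lemma xadj.starNear {a b : V} (h : xadj a b) (ha : OddSite a) : StarNear a b := by
  refine ⟨(b.1, a.2), ?_, ?_, ?_⟩ <;> simp only [EvenSite, OddSite, xadj, adj] at * <;> omega

lemma xadj.exists_between {x₀ x₁ y₀ y₁ : ℤ} {a b : V} (h : xadj a b) (ha : OddSite a)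
    (haB : a ∈ box x₀ x₁ y₀ y₁) (hbB : b ∈ box x₀ x₁ y₀ y₁) :
    ∃ e ∈ box x₀ x₁ y₀ y₁, EvenSite e ∧ adj e a ∧ adj e b := by
  refine (h.starNear ha).exists_between (fun hab => ?_) ha haB hbB
  subst hab
  simp only [xadj] at h
  omega

lemma starConnected_of_isChain {p : List V} (hne : p ≠ []) (hp : p.IsChain xadj)
    (hodd : ∀ v ∈ p, OddSite v) : StarConnected {v | v ∈ p} := by
  refine ⟨p.head hne, List.head_mem hne, fun v hv => ?_⟩
  refine (List.IsChain.iff_mem.1 hp).induction _ p (fun a b hab ha => ?_) ?_ v hv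
  · exact ha.tail ⟨hab.2.2.starNear (hodd a hab.1), hab.2.1⟩
  · exact fun _ => .refl

/-- A path that starts off `L`, leaves `R` only through `Γ₂`, enters `L` only through `Γ₁`, and
ends in `L` links `Γ₂` to `Γ₁` on its last excursion from `R`. -/
lemma starLinked_of_isChain {N Γ₁ Γ₂ L R : Set V} (hΓ₁ : ∀ a ∈ Γ₁, a ∉ R) {p : List V}
    (hne : p ≠ [])
    (hp : p.IsChain fun a b => StarNear a b ∧ (a ∈ R → a ∉ Γ₂ → b ∈ R) ∧ (b ∈ L → b ∉ Γ₁ → a ∈ L))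
    (hcover : ∀ a ∈ p, a ∈ L ∨ a ∈ R ∨ a ∈ N) (hstart : start p ∉ L)
    (hstart' : start p ∈ R ∨ StarReach N Γ₂ (start p)) (hfinish : finish p ∈ L) :
    StarLinked N Γ₂ Γ₁ := by
  induction p with
  | nil => exact absurd rfl hne
  | cons a l ih =>
    cases l with
    | nil => exact absurd hfinish hstart
    | cons b l =>
      rw [List.isChain_cons_cons] at hp
      obtain ⟨⟨hab, hright, hleft⟩, hp⟩ := hp
      have hreach (hb : b ∉ R) : StarReach N Γ₂ a := hstart'.elim
        (fun ha => .base a (by_contra fun ha' => hb (hright ha ha'))) id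
      by_cases hbL : b ∈ L
      · have hbΓ : b ∈ Γ₁ := by_contra fun hb => hstart (hleft hbL hb)
        exact ⟨a, hreach (hΓ₁ b hbΓ), b, hbΓ, hab⟩
      · refine ih (by simp) hp (fun c hc => hcover c (List.mem_cons_of_mem _ hc)) hbL ?_
          (finish_cons_cons a b l ▸ hfinish)
        refine or_iff_not_imp_left.2 fun hbR => .step a b (hreach hbR) hab ?_
        exact ((hcover b (by simp)).resolve_left hbL).resolve_left hbR

/-! ### Two walls in a region with a mirror symmetry -/

/-- A rectangle with a mirror symmetry `σ` of the plane, a wall class coming from the left in its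
part up to the column `xs`, and a wall class coming from the right, so placed that a pair of walls
and their mirror images enclose the unexplored sites of the overlap of the rectangle with its
mirror image. -/
structure MirrorFrame where
  (x₀ x₁ y₀ y₁ xs : ℤ)
  σ : V → V
  (leftSource leftTarget rightSource : Set V)
  (leftWalls rightWalls : Set (List V))
  x_lt : x₀ < x₁
  y_lt : y₀ < y₁
  le_x₁ : xs ≤ x₁
  mirror : IsMirror σ
  map_xadj : ∀ ⦃u v⦄, xadj u v → xadj (σ u) (σ v)
  leftWallClass : WallClass x₀ xs y₀ y₁ leftSource leftTarget leftWalls 0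
  rightWallClass : WallClass x₀ x₁ y₀ y₁ rightSource {v | v.1 = x₀} rightWalls 1
  map_of_adj_of_notMem : ∀ v ∈ box x₀ xs y₀ y₁, ∀ w ∈ box x₀ x₁ y₀ y₁, adj v w →
    w ∉ box x₀ xs y₀ y₁ → σ v = v ∧ σ w ∈ box x₀ xs y₀ y₁
  source_of_adj_of_notMem : ∀ v ∈ box x₀ x₁ y₀ y₁, σ v ∈ box x₀ x₁ y₀ y₁ → ∀ w, adj v w →
    w ∉ box x₀ x₁ y₀ y₁ → (v ∈ leftSource ∧ v ∈ box x₀ xs y₀ y₁) ∨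
      (σ v ∈ leftSource ∧ σ v ∈ box x₀ xs y₀ y₁) ∨ v ∈ rightSource ∨ σ v ∈ rightSource
  left_column : ∀ v ∈ box x₀ x₁ y₀ y₁, v.1 = x₀ → v ∈ leftSource ∧ v ∈ box x₀ xs y₀ y₁
  right_column : ∀ v ∈ box x₀ x₁ y₀ y₁, v.1 = x₁ → v ∈ rightSource
  right_column_target : ∀ v ∈ box x₀ xs y₀ y₁, v.1 = x₁ → v ∈ leftTarget
  map_mem_or : ∀ v ∈ box x₀ x₁ y₀ y₁, σ v ∈ box x₀ x₁ y₀ y₁ ∨ (σ v).1 < x₀ ∨ x₁ < (σ v).1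
  top_row : ∀ v ∈ box x₀ x₁ y₀ y₁, OddSite v → v.2 = y₁ →
    (σ v ∈ rightSource ∧ σ v ∈ box x₀ x₁ y₀ y₁ ∨ x₁ < (σ v).1) ∨
    ∀ e, EvenSite e → e.2 = y₁ → |e.1 - v.1| = 1 → x₀ < e.1 ∧ (e ∈ box x₀ x₁ y₀ y₁ →
      e ∈ rightSource ∧ (e ∈ box x₀ xs y₀ y₁ → e ∈ leftTarget))
  top_row_target : ∀ v ∈ box x₀ x₁ y₀ y₁, OddSite v → v.2 = y₁ → σ v ∈ box x₀ xs y₀ y₁ →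
    σ v ∈ rightSource →
      σ v ∈ leftTarget ∨ ∃ e ∈ box x₀ xs y₀ y₁, e ∈ leftTarget ∧ EvenSite e ∧ adj (σ v) e
  bottom_row : ∀ v ∈ box x₀ x₁ y₀ y₁, v.2 = y₀ →
    (σ v ∈ leftSource ∧ σ v ∈ box x₀ xs y₀ y₁ ∨ (σ v).1 < x₀) ∨
    ∀ e, e.2 = y₀ → |e.1 - v.1| = 1 → x₀ < e.1 →
      e.1 < x₁ ∧ e ∈ leftSource ∧ e ∈ box x₀ xs y₀ y₁

namespace MirrorFrame

variable (G : MirrorFrame) (p q : List V)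

/-- The rectangle of a mirror frame. -/
def rect : Set V := box G.x₀ G.x₁ G.y₀ G.y₁

/-- The part of the rectangle in which the left walls live. -/
def leftRect : Set V := box G.x₀ G.xs G.y₀ G.y₁

/-- The region explored from the left up to the wall `p`. -/
def left : Set V := explored G.leftRect G.leftSource p

/-- The region explored from the right up to the wall `q`. -/
def right : Set V := explored G.rect G.rightSource q

/-- The two explored regions with their mirror images. -/
def mirrored : Set V :=
  {v | (v ∈ G.left p ∨ v ∈ G.right q) ∨ (G.σ v ∈ G.left p ∨ G.σ v ∈ G.right q)}

/-- The unexplored odd sites of the overlap of the rectangle with its mirror image. -/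
def freeSites : Set V := {v | OddSite v ∧ (v ∈ G.rect ∧ G.σ v ∈ G.rect) ∧ v ∉ G.mirrored p q}

/-- A left wall and a right wall, the first off the region explored up to the second. -/
structure WallPair : Prop where
  left_mem : p ∈ G.leftWalls
  right_mem : q ∈ G.rightWalls
  notMem_right : ∀ v ∈ p, v ∉ G.right q

variable {G p q} {u v w : V}

lemma leftRect_subset_rect : G.leftRect ⊆ G.rect :=
  fun _ hv => ⟨hv.1, hv.2.1.trans G.le_x₁, hv.2.2⟩

lemma map_mem_mirrored (h : v ∈ G.mirrored p q) : G.σ v ∈ G.mirrored p q := by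
  rw [mirrored, Set.mem_ofPred_eq, G.mirror.involutive v]
  exact h.symm

lemma map_mem_freeSites (h : v ∈ G.freeSites p q) : G.σ v ∈ G.freeSites p q := by
  refine ⟨(G.mirror.oddSite_map v).2 h.1, ⟨h.2.1.2, ?_⟩, fun h' => h.2.2 ?_⟩
  · exact (G.mirror.involutive v).symm ▸ h.2.1.1
  · exact G.mirror.involutive v ▸ map_mem_mirrored h'

lemma mem_mirrored_of_adj_of_notMem (hv : v ∈ G.rect) (hσv : G.σ v ∈ G.rect) (h : adj v w)
    (hw : ¬(w ∈ G.rect ∧ G.σ w ∈ G.rect)) : v ∈ G.mirrored p q := by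
  wlog hwr : w ∉ G.rect generalizing v w
  · have hσσ := G.mirror.involutive
    exact hσσ v ▸ map_mem_mirrored (this hσv ((hσσ v).symm ▸ hv) (G.mirror.map_adj h)
      (fun h => hw ⟨hσσ w ▸ h.2, h.1⟩) fun h => hw ⟨not_not.1 hwr, h⟩)
  · rcases G.source_of_adj_of_notMem v hv hσv w h hwr with ⟨hS, hB⟩ | ⟨hS, hB⟩ | hS | hS
    · exact Or.inl (Or.inl (mem_explored_of_mem_source hB hS))
    · exact Or.inr (Or.inl (mem_explored_of_mem_source hB hS))
    · exact Or.inl (Or.inr (mem_explored_of_mem_source hv hS))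
    · exact Or.inr (Or.inr (mem_explored_of_mem_source hσv hS))

namespace WallPair

lemma odd_left (h : G.WallPair p q) (hv : v ∈ p) : OddSite v :=
  (G.leftWallClass.isTopPath p h.left_mem).odd v hv

lemma odd_right (h : G.WallPair p q) (hv : v ∈ q) : OddSite v :=
  (G.rightWallClass.isTopPath q h.right_mem).odd v hv

lemma notMem_of_even (h : G.WallPair p q) (hv : EvenSite v) : v ∉ p ∧ v ∉ q :=
  ⟨fun hp => not_oddSite.2 hv (h.odd_left hp), fun hq => not_oddSite.2 hv (h.odd_right hq)⟩

lemma left_subset (h : G.WallPair p q) : G.left p ⊆ G.leftRect :=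
  explored_subset (G.leftWallClass.isTopPath p h.left_mem).mem

lemma right_subset (h : G.WallPair p q) : G.right q ⊆ G.rect :=
  explored_subset (G.rightWallClass.isTopPath q h.right_mem).mem

lemma notMem_leftTarget (h : G.WallPair p q) (hv : v ∈ G.left p) (hvp : v ∉ p) :
    v ∉ G.leftTarget := G.leftWallClass.notMem_target h.left_mem (hv.resolve_right hvp)

lemma fst_lt_of_mem_left (h : G.WallPair p q) (hv : v ∈ G.left p) (hvp : v ∉ p) : v.1 < G.x₁ :=
  lt_of_le_of_ne (leftRect_subset_rect (h.left_subset hv)).2.1 fun hx =>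
    h.notMem_leftTarget hv hvp (G.right_column_target v (h.left_subset hv) hx)

lemma lt_fst_of_mem_right (h : G.WallPair p q) (hv : v ∈ G.right q) (hvq : v ∉ q) : G.x₀ < v.1 :=
  lt_of_le_of_ne (h.right_subset hv).1 fun hx =>
    G.rightWallClass.notMem_target h.right_mem (hv.resolve_right hvq) hx.symm

lemma mem_left_or_of_adj (h : G.WallPair p q) (hv : v ∈ G.left p) (hvp : v ∉ p) (hvw : adj v w)
    (hw : w ∈ G.rect) : w ∈ G.left p ∨ G.σ v = v ∧ G.σ w ∈ G.left p := by
  by_cases hwl : w ∈ G.leftRect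
  · exact Or.inl (mem_explored_of_adj hv hvp hvw hwl)
  · obtain ⟨hσv, hσw⟩ := G.map_of_adj_of_notMem v (h.left_subset hv) w hw hvw hwl
    exact Or.inr ⟨hσv, mem_explored_of_adj hv hvp (hσv ▸ G.mirror.map_adj hvw) hσw⟩

lemma mirrored_of_adj_of_explored (h : G.WallPair p q)
    (hv : v ∈ G.left p ∨ v ∈ G.right q) (hvp : v ∉ p)
    (hvq : v ∉ q) (hvw : adj v w) (hw : w ∈ G.rect) : w ∈ G.mirrored p q := by
  rcases hv with hv | hv
  · rcases h.mem_left_or_of_adj hv hvp hvw hw with hw | ⟨-, hw⟩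
    · exact Or.inl (Or.inl hw)
    · exact Or.inr (Or.inl hw)
  · exact Or.inl (Or.inr (mem_explored_of_adj hv hvq hvw hw))

lemma mirrored_of_adj (h : G.WallPair p q) (hv : v ∈ G.mirrored p q)
    (hvΓ : ¬(v ∈ p ∨ v ∈ q)) (hσvΓ : ¬(G.σ v ∈ p ∨ G.σ v ∈ q)) (hvw : adj v w)
    (hw : w ∈ G.rect) (hσw : G.σ w ∈ G.rect) : w ∈ G.mirrored p q := by
  rw [not_or] at hvΓ hσvΓ
  rcases hv with hv | hv
  · exact h.mirrored_of_adj_of_explored hv hvΓ.1 hvΓ.2 hvw hw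
  · exact G.mirror.involutive w ▸ map_mem_mirrored
      (h.mirrored_of_adj_of_explored hv hσvΓ.1 hσvΓ.2 (G.mirror.map_adj hvw) hσw)

lemma mirrored_of_adj_of_even (h : G.WallPair p q) (hv : v ∈ G.mirrored p q) (heven : EvenSite v)
    (hvw : adj v w) (hw : w ∈ G.rect) (hσw : G.σ w ∈ G.rect) : w ∈ G.mirrored p q :=
  h.mirrored_of_adj hv (not_or.2 (h.notMem_of_even heven))
    (not_or.2 (h.notMem_of_even ((G.mirror.evenSite_map v).2 heven))) hvw hw hσw

lemma of_adj_freeSites (h : G.WallPair p q) (hv : v ∈ G.freeSites p q) (huv : adj u v) :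
    (u ∈ G.rect ∧ G.σ u ∈ G.rect) ∧ u ∉ G.mirrored p q := by
  obtain ⟨hodd, ⟨hvr, hσvr⟩, hvM⟩ := hv
  refine ⟨by_contra fun hu => hvM (mem_mirrored_of_adj_of_notMem hvr hσvr huv.symm hu), ?_⟩
  exact fun hu => hvM (h.mirrored_of_adj_of_even hu (huv.evenSite_iff.2 hodd) huv hvr hσvr)

lemma frontier (h : G.WallPair p q) (hv : v ∈ G.freeSites p q) (huv : adj u v) (huw : adj u w) :
    w ∈ G.rect ∧ (w ∈ G.freeSites p q ∨ (w ∈ p ∨ w ∈ q) ∨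
      (G.σ w ∈ p ∨ G.σ w ∈ q) ∧ ¬(w ∈ G.left p ∨ w ∈ G.right q)) := by
  obtain ⟨⟨hur, hσur⟩, huM⟩ := h.of_adj_freeSites hv huv
  have hwr : w ∈ G.rect ∧ G.σ w ∈ G.rect :=
    by_contra fun hw => huM (mem_mirrored_of_adj_of_notMem hur hσur huw hw)
  refine ⟨hwr.1, ?_⟩
  by_cases hwΓ : w ∈ p ∨ w ∈ q
  · exact Or.inr (Or.inl hwΓ)
  by_cases hσwΓ : G.σ w ∈ p ∨ G.σ w ∈ q
  · rw [not_or] at hwΓ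
    exact Or.inr (Or.inr ⟨hσwΓ, fun hw =>
      huM (h.mirrored_of_adj_of_explored hw hwΓ.1 hwΓ.2 huw.symm hur)⟩)
  · exact Or.inl ⟨huw.evenSite_iff.1 (huv.evenSite_iff.2 hv.1), hwr, fun hw =>
      huM (h.mirrored_of_adj hw hwΓ hσwΓ huw.symm hur hσur)⟩

end WallPair

end MirrorFrame

namespace MirrorFrame

variable {G : MirrorFrame} {p q r : List V} {S : Set V} {a b e v : V}

variable (G p q) in
/-- The sites whose mirror image is explored from the left, or lies to the left of the rectangle. -/
def mirrorLeft : Set V := {v | G.σ v ∈ G.left p ∨ (G.σ v).1 < G.x₀}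

variable (G q) in
/-- The sites whose mirror image is explored from the right, or lies to the right of the
rectangle. -/
def mirrorRight : Set V := {v | G.σ v ∈ G.right q ∨ G.x₁ < (G.σ v).1}

variable (G p S) in
/-- The region explored from the left, with the even neighbours of the sites of `S` linked to the
wall. -/
def linkedRegion : Set V :=
  {e | e ∈ G.left p ∨ ∃ a, StarReach S {v | v ∈ p} a ∧ adj e a}

lemma mem_freeSites (h : a ∈ G.rect) (ho : OddSite a) (hM : ¬(a ∈ G.left p ∨ a ∈ G.right q))
    (hL : a ∉ G.mirrorLeft p) (hR : a ∉ G.mirrorRight q) : a ∈ G.freeSites p q := by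
  rw [mirrorLeft, Set.mem_ofPred_eq, not_or] at hL
  rw [mirrorRight, Set.mem_ofPred_eq, not_or] at hR
  refine ⟨ho, ⟨h, ?_⟩, ?_⟩
  · exact (G.map_mem_or a h).resolve_right (not_or.2 ⟨hL.2, hR.2⟩)
  · exact not_or.2 ⟨hM, not_or.2 ⟨hL.1, hR.1⟩⟩

lemma mem_mirrorRight_of_source (hσv : G.σ v ∈ G.rightSource ∧ G.σ v ∈ G.rect ∨ G.x₁ < (G.σ v).1) :
    v ∈ G.mirrorRight q :=
  hσv.imp_left fun hσv => mem_explored_of_mem_source hσv.2 hσv.1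

lemma mem_mirrorLeft_of_bottom_row (hv : v ∈ G.rect) (hrow : v.2 = G.y₀)
    (hbot : ¬((v.1 - 1, G.y₀) ∈ leftExtension G.x₀ G.x₁ (G.linkedRegion p S) ↔
      (v.1 + 1, G.y₀) ∈ leftExtension G.x₀ G.x₁ (G.linkedRegion p S))) :
    v ∈ G.mirrorLeft p := by
  rcases G.bottom_row v hv hrow with hσv | hnbr
  · exact hσv.imp_left fun hσv => mem_explored_of_mem_source hσv.2 hσv.1
  · have hmem (x : ℤ) (hx : |x - v.1| = 1) :
        (x, G.y₀) ∈ leftExtension G.x₀ G.x₁ (G.linkedRegion p S) := by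
      refine or_iff_not_imp_left.2 fun hx₀ => ?_
      obtain ⟨hx₁, hS, hB⟩ := hnbr (x, G.y₀) rfl hx (not_le.1 hx₀)
      exact ⟨hx₁, Or.inl (mem_explored_of_mem_source hB hS)⟩
    exact absurd (iff_of_true (hmem _ (by simp)) (hmem _ (by simp))) hbot

namespace WallPair

lemma notMem_mirrorRight (h : G.WallPair p q) (ha : G.σ a ∈ p) : a ∉ G.mirrorRight q := by
  rintro (ha' | ha')
  · exact h.notMem_right _ ha ha'
  · exact ha'.not_ge (leftRect_subset_rect (h.left_subset (Or.inr ha))).2.1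

lemma mirrorRight_of_xadj (h : G.WallPair p q) (he : EvenSite e) (hea : adj e a) (heb : adj e b)
    (hab : xadj a b) (heB : e ∈ G.rect) (hb : b ∈ G.rect) (ha : a ∈ G.mirrorRight q)
    (haq : G.σ a ∉ q) : b ∈ G.mirrorRight q := by
  have hσab := G.map_xadj hab
  have hσae := (G.mirror.map_adj hea).symm
  have hσeb := G.mirror.map_adj heb
  have hσe := (h.notMem_of_even ((G.mirror.evenSite_map e).2 he)).2
  have hx := G.x_lt
  by_contra hbR
  rw [mirrorRight, Set.mem_ofPred_eq, not_or, not_lt] at hbR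
  rcases ha with ha | ha
  · have hlt := h.lt_fst_of_mem_right ha haq
    have hle := (h.right_subset ha).2.1
    rcases G.map_mem_or e heB with heB | he' | he'
    · have heR : G.σ e ∈ G.right q := mem_explored_of_adj ha haq hσae heB
      rcases G.map_mem_or b hb with hbB | hb' | hb'
      · exact hbR.1 (mem_explored_of_adj heR hσe hσeb hbB)
      · have := h.lt_fst_of_mem_right heR hσe
        unfold adj at *
        omega
      · exact hbR.2.not_gt hb'
    · unfold adj at *
      omega
    · unfold adj xadj at *
      omega
  · rcases G.map_mem_or b hb with hbB | hb' | hb'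
    · refine hbR.1 (mem_explored_of_mem_source hbB (G.right_column _ hbB ?_))
      unfold xadj at *
      omega
    · unfold xadj at *
      omega
    · exact hbR.2.not_gt hb'

lemma mirrorLeft_of_xadj (h : G.WallPair p q) (he : EvenSite e) (hea : adj e a) (heb : adj e b)
    (hab : xadj a b) (heB : e ∈ G.rect) (ha : a ∈ G.rect) (hb : b ∈ G.mirrorLeft p)
    (hbp : G.σ b ∉ p) (haL : a ∈ G.left p → G.σ a ∈ G.left p) : a ∈ G.mirrorLeft p := by
  have hσab := G.map_xadj hab
  have hσea := G.mirror.map_adj hea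
  have hσeb := G.mirror.map_adj heb
  have hep := (h.notMem_of_even he).1
  have hσep := (h.notMem_of_even ((G.mirror.evenSite_map e).2 he)).1
  have hx := G.x_lt
  have hσσ := G.mirror.involutive
  by_contra haM
  rw [mirrorLeft, Set.mem_ofPred_eq, not_or, not_lt] at haM
  have heL (heL : e ∈ G.left p) : False :=
    haM.1 ((h.mem_left_or_of_adj heL hep hea ha).elim haL And.right)
  rcases hb with hb | hb
  · have hlt := h.fst_lt_of_mem_left hb hbp
    have hle := (h.left_subset hb).1
    rcases G.map_mem_or e heB with heB | he' | he'
    · rcases h.mem_left_or_of_adj hb hbp hσeb.symm heB with heL' | ⟨-, heL'⟩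
      · have hlt := h.fst_lt_of_mem_left heL' hσep
        rcases G.map_mem_or a ha with haB | ha' | ha'
        · rcases h.mem_left_or_of_adj heL' hσep hσea haB with ha' | ⟨-, ha'⟩
          · exact haM.1 ha'
          · exact haM.1 (haL (hσσ a ▸ ha'))
        · exact haM.2.not_gt ha'
        · unfold adj at *
          omega
      · exact heL (hσσ e ▸ heL')
    · unfold adj xadj at *
      omega
    · unfold adj at *
      omega
  · rcases G.map_mem_or a ha with haB | ha' | ha'
    · have := G.left_column _ haB (by unfold xadj at *; omega)
      exact haM.1 (mem_explored_of_mem_source this.2 this.1)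
    · exact haM.2.not_gt ha'
    · unfold xadj at *
      omega

lemma of_starReach (h : G.WallPair p q) (hS : S ⊆ G.freeSites p q)
    (ha : StarReach S {v | v ∈ p} a) : OddSite a ∧ a ∈ G.rect ∧ a ∉ G.right q := by
  cases ha with
  | base _ ha =>
    exact ⟨h.odd_left ha, leftRect_subset_rect (h.left_subset (Or.inr ha)), h.notMem_right _ ha⟩
  | step _ _ _ _ ha =>
    exact ⟨(hS ha).1, (hS ha).2.1.1, fun ha' => (hS ha).2.2 (Or.inl (Or.inr ha'))⟩

lemma mem_left_of_mem_right (h : G.WallPair p q) (hS : S ⊆ G.freeSites p q) (he : EvenSite e)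
    (heR : e ∈ G.right q) (heU : e ∈ G.linkedRegion p S) : e ∈ G.left p := by
  refine heU.resolve_right ?_
  rintro ⟨a, ha, hea⟩
  obtain ⟨-, haB, haR⟩ := h.of_starReach hS ha
  exact haR (mem_explored_of_adj heR (h.notMem_of_even he).2 hea haB)

lemma mem_leftExtension_iff (h : G.WallPair p q) (hS : S ⊆ G.freeSites p q) (he : EvenSite e)
    (heB : e ∈ G.rect) :
    e ∈ leftExtension G.x₀ G.x₁ (G.linkedRegion p S) ↔ e ∈ G.linkedRegion p S := by
  refine SquareIce.mem_leftExtension_iff (fun hx => ?_) fun heU => ?_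
  · have := G.left_column e heB (le_antisymm hx heB.1)
    exact Or.inl (mem_explored_of_mem_source this.2 this.1)
  · refine lt_of_le_of_ne heB.2.1 fun hx => ?_
    have heL := h.mem_left_of_mem_right hS he
      (mem_explored_of_mem_source heB (G.right_column e heB hx)) heU
    exact (h.fst_lt_of_mem_left heL (h.notMem_of_even he).1).ne hx

lemma exists_adj_linkedRegion (h : G.WallPair p q) (hS : S ⊆ G.freeSites p q)
    (hr : IsDualPath (leftExtension G.x₀ G.x₁ (G.linkedRegion p S)) G.rect r) (ha : a ∈ r) :
    ∃ e f, adj e a ∧ adj f a ∧ e ∈ G.rect ∧ f ∈ G.rect ∧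
      e ∈ G.linkedRegion p S ∧ f ∉ G.linkedRegion p S := by
  obtain ⟨e, f, hea, hfa, heB, hfB, heU, hfU⟩ := hr.exists_adj ha
  rw [h.mem_leftExtension_iff hS (hea.evenSite_iff.2 (hr.odd a ha)) heB] at heU
  rw [h.mem_leftExtension_iff hS (hfa.evenSite_iff.2 (hr.odd a ha)) hfB] at hfU
  exact ⟨e, f, hea, hfa, heB, hfB, heU, hfU⟩

lemma not_starReach_of_mem (h : G.WallPair p q) (hS : S ⊆ G.freeSites p q)
    (hr : IsDualPath (leftExtension G.x₀ G.x₁ (G.linkedRegion p S)) G.rect r) (ha : a ∈ r) :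
    ¬StarReach S {v | v ∈ p} a := fun ha' =>
  let ⟨_, _, _, hfa, _, _, _, hfU⟩ := h.exists_adj_linkedRegion hS hr ha
  hfU (Or.inr ⟨a, ha', hfa⟩)

lemma map_mem_left (h : G.WallPair p q) (hS : S ⊆ G.freeSites p q)
    (hr : IsDualPath (leftExtension G.x₀ G.x₁ (G.linkedRegion p S)) G.rect r) (ha : a ∈ r)
    (haL : a ∈ G.left p) : G.σ a ∈ G.left p := by
  obtain ⟨e, f, -, hfa, -, hfB, -, hfU⟩ := h.exists_adj_linkedRegion hS hr ha
  have hap : a ∉ p := fun hap => h.not_starReach_of_mem hS hr ha (.base a hap)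
  rcases h.mem_left_or_of_adj haL hap hfa.symm hfB with hfL | ⟨hσa, -⟩
  · exact absurd (Or.inl hfL) hfU
  · exact hσa.symm ▸ haL

lemma map_mem_left_of_mem_right (h : G.WallPair p q) (hS : S ⊆ G.freeSites p q)
    (hlink : ¬StarLinked S {v | v ∈ p} {v | v ∈ q})
    (hr : IsDualPath (leftExtension G.x₀ G.x₁ (G.linkedRegion p S)) G.rect r) (ha : a ∈ r)
    (haR : a ∈ G.right q) : G.σ a ∈ G.left p := by
  obtain ⟨e, f, hea, -, heB, -, heU, -⟩ := h.exists_adj_linkedRegion hS hr ha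
  have he := hea.evenSite_iff.2 (hr.odd a ha)
  have heL : e ∈ G.left p := by
    by_cases haq : a ∈ q
    · refine heU.resolve_right ?_
      rintro ⟨a', ha', hea'⟩
      exact hlink ⟨a', ha', a, haq, e, he, hea', hea⟩
    · exact h.mem_left_of_mem_right hS he (mem_explored_of_adj haR haq hea.symm heB) heU
  exact (h.mem_left_or_of_adj heL (h.notMem_of_even he).1 hea (hr.mem a ha)).elim
    (h.map_mem_left hS hr ha) And.right

lemma notMem_of_mem_freeSites (h : G.WallPair p q) (hS : S ⊆ G.freeSites p q)
    (hr : IsDualPath (leftExtension G.x₀ G.x₁ (G.linkedRegion p S)) G.rect r) (ha : a ∈ r)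
    (haN : a ∈ G.freeSites p q) : a ∉ S := by
  intro haS
  obtain ⟨e, f, hea, -, -, -, heU, -⟩ := h.exists_adj_linkedRegion hS hr ha
  rcases heU with heL | ⟨a', ha', hea'⟩
  · exact (h.of_adj_freeSites haN hea).2 (Or.inl (Or.inl heL))
  · exact h.not_starReach_of_mem hS hr ha
      (.step a' a ha' ⟨e, hea.evenSite_iff.2 haN.1, hea', hea⟩ haS)

lemma mem_mirrorLeft_or (h : G.WallPair p q) (hS : S ⊆ G.freeSites p q)
    (hlink : ¬StarLinked S {v | v ∈ p} {v | v ∈ q})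
    (hr : IsDualPath (leftExtension G.x₀ G.x₁ (G.linkedRegion p S)) G.rect r) (ha : a ∈ r) :
    a ∈ G.mirrorLeft p ∨ a ∈ G.mirrorRight q ∨ a ∈ G.freeSites p q \ S := by
  refine or_iff_not_imp_left.2 fun haL => or_iff_not_imp_left.2 fun haR => ?_
  have haN : a ∈ G.freeSites p q := by
    refine mem_freeSites (hr.mem a ha) (hr.odd a ha) ?_ haL haR
    rintro (ha' | ha')
    · exact haL (Or.inl (h.map_mem_left hS hr ha ha'))
    · exact haL (Or.inl (h.map_mem_left_of_mem_right hS hlink hr ha ha'))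
  exact ⟨haN, h.notMem_of_mem_freeSites hS hr ha haN⟩

lemma isChain_mirror (h : G.WallPair p q) (hS : S ⊆ G.freeSites p q)
    (hr : IsDualPath (leftExtension G.x₀ G.x₁ (G.linkedRegion p S)) G.rect r) :
    r.IsChain fun a b => StarNear a b ∧
      (a ∈ G.mirrorRight q → a ∉ G.σ ⁻¹' {v | v ∈ q} → b ∈ G.mirrorRight q) ∧
      (b ∈ G.mirrorLeft p → b ∉ G.σ ⁻¹' {v | v ∈ p} → a ∈ G.mirrorLeft p) := by
  refine (List.IsChain.iff_mem.1 hr.chain).imp ?_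
  rintro a b ⟨ha, hb, hab, -⟩
  have haB := hr.mem a ha
  have hbB := hr.mem b hb
  obtain ⟨e, heB, he, hea, heb⟩ := hab.exists_between (hr.odd a ha) haB hbB
  exact ⟨hab.starNear (hr.odd a ha), h.mirrorRight_of_xadj he hea heb hab heB hbB,
    fun hbL hbp => h.mirrorLeft_of_xadj he hea heb hab heB haB hbL hbp (h.map_mem_left hS hr ha)⟩

lemma notMem_leftExtension_of_top (h : G.WallPair p q) (hS : S ⊆ G.freeSites p q)
    (he : EvenSite e) (hrow : e.2 = G.y₁) (hx : G.x₀ < e.1)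
    (hsource : e ∈ G.rect → e ∈ G.rightSource ∧ (e ∈ G.leftRect → e ∈ G.leftTarget)) :
    e ∉ leftExtension G.x₀ G.x₁ (G.linkedRegion p S) := by
  rintro (h' | ⟨hx₁, heU⟩)
  · exact h'.not_gt hx
  · have heB : e ∈ G.rect := ⟨hx.le, hx₁.le, hrow ▸ G.y_lt.le, hrow.le⟩
    obtain ⟨heS, heT⟩ := hsource heB
    have heL := h.mem_left_of_mem_right hS he (mem_explored_of_mem_source heB heS) heU
    exact h.notMem_leftTarget heL (h.notMem_of_even he).1 (heT (h.left_subset heL))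

lemma rightSource_of_top_row (h : G.WallPair p q) (hS : S ⊆ G.freeSites p q) (hv : v ∈ G.rect)
    (hodd : OddSite v) (hrow : v.2 = G.y₁)
    (htop : ¬((v.1 - 1, G.y₁) ∈ leftExtension G.x₀ G.x₁ (G.linkedRegion p S) ↔
      (v.1 + 1, G.y₁) ∈ leftExtension G.x₀ G.x₁ (G.linkedRegion p S))) :
    G.σ v ∈ G.rightSource ∧ G.σ v ∈ G.rect ∨ G.x₁ < (G.σ v).1 := by
  refine (G.top_row v hv hodd hrow).resolve_right fun hnbr => htop ?_
  have hnotMem (x : ℤ) (hx : |x - v.1| = 1) (he : EvenSite (x, G.y₁)) :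
      (x, G.y₁) ∉ leftExtension G.x₀ G.x₁ (G.linkedRegion p S) :=
    h.notMem_leftExtension_of_top hS he rfl (hnbr _ he rfl hx).1 (hnbr _ he rfl hx).2
  unfold OddSite at hodd
  exact iff_of_false (hnotMem _ (by simp) (by simp only [EvenSite]; omega))
    (hnotMem _ (by simp) (by simp only [EvenSite]; omega))

lemma notMem_mirrorLeft_of_top_row (h : G.WallPair p q) (hv : v ∈ G.rect) (hodd : OddSite v)
    (hrow : v.2 = G.y₁) (hσv : G.σ v ∈ G.rightSource ∧ G.σ v ∈ G.rect ∨ G.x₁ < (G.σ v).1) :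
    v ∉ G.mirrorLeft p := by
  rintro (hL | hL) <;> rcases hσv with ⟨hS, hB⟩ | hσv
  · have hp : G.σ v ∉ p := fun hp => h.notMem_right _ hp (mem_explored_of_mem_source hB hS)
    rcases G.top_row_target v hv hodd hrow (h.left_subset hL) hS with hT | ⟨e, heB, heT, he, hve⟩
    · exact h.notMem_leftTarget hL hp hT
    · exact h.notMem_leftTarget (mem_explored_of_adj hL hp hve heB) (h.notMem_of_even he).1 heT
  · exact hσv.not_ge (leftRect_subset_rect (h.left_subset hL)).2.1
  · exact hL.not_ge hB.1
  · exact (hL.trans G.x_lt).not_gt hσv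

lemma starLinked_or_starLinked (h : G.WallPair p q) (hS : S ⊆ G.freeSites p q) :
    StarLinked S {v | v ∈ p} {v | v ∈ q} ∨
      StarLinked (G.freeSites p q \ S) (G.σ ⁻¹' {v | v ∈ p}) (G.σ ⁻¹' {v | v ∈ q}) := by
  refine or_iff_not_imp_left.2 fun hlink => StarLinked.symm ?_
  obtain ⟨r, hr, hstart, hfinish, htop, hbot⟩ :=
    exists_isDualPath_leftExtension (G.linkedRegion p S) G.x_lt G.y_lt
  have hs := start_mem hr.ne_nil
  have hf := finish_mem hr.ne_nil
  have hsource := h.rightSource_of_top_row hS (hr.mem _ hs) (hr.odd _ hs) hstart htop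
  exact starLinked_of_isChain (fun _ => h.notMem_mirrorRight) hr.ne_nil (h.isChain_mirror hS hr)
    (fun _ => h.mem_mirrorLeft_or hS hlink hr)
    (h.notMem_mirrorLeft_of_top_row (hr.mem _ hs) (hr.odd _ hs) hstart hsource)
    (Or.inl (mem_mirrorRight_of_source hsource))
    (mem_mirrorLeft_of_bottom_row (hr.mem _ hf) hfinish hbot)

lemma linkSetup {F K : Set V} (h : G.WallPair p q) (hF : IsInnerDomain F)
    (hrect : ∀ v ∈ G.rect, OddSite v → v ∈ F) (hpK : ∀ v ∈ p, v ∉ K) (hqK : ∀ v ∈ q, v ∉ K) :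
    LinkSetup F G.σ (G.freeSites p q) {v | OddSite v ∧ (v ∈ G.left p ∨ v ∈ G.right q)} K
      {v | v ∈ p} {v | v ∈ q} where
  finite := hF.finite
  mem_of_nbrs := hF.mem_of_forall_adj
  mirror := G.mirror
  free_odd _ hv := hv.1
  explored_odd _ hv := hv.1
  wall_subset := by
    rintro v (hv | hv)
    · exact ⟨⟨h.odd_left hv, Or.inl (Or.inr hv)⟩, hpK v hv⟩
    · exact ⟨⟨h.odd_right hv, Or.inr (Or.inr hv)⟩, hqK v hv⟩
  frontier v hv u huv w huw := by
    obtain ⟨hw, hcase⟩ := h.frontier hv huv huw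
    have hodd : OddSite w := huw.evenSite_iff.1 (huv.evenSite_iff.2 hv.1)
    exact ⟨hrect w hw hodd, hcase.imp_right (Or.imp_right fun hw => ⟨hw.1, fun hw' => hw.2 hw'.2⟩)⟩
  free_map _ hv := map_mem_freeSites hv
  free_disjoint := Set.disjoint_left.2 fun _ hv hv' => hv.2.2 (Or.inl hv'.2)
  connected₁ :=
    have hp := G.leftWallClass.isTopPath p h.left_mem
    starConnected_of_isChain hp.ne_nil hp.chain hp.odd
  connected₂ :=
    have hq := G.rightWallClass.isTopPath q h.right_mem
    starConnected_of_isChain hq.ne_nil hq.chain hq.odd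
  dual _ hS := h.starLinked_or_starLinked hS

end WallPair

end MirrorFrame

/-! ### Exploring the outermost walls -/

section Walls

variable {x₀ x₁ y₀ y₁ : ℤ} {B S T R : Set V} {C : Set (List V)} {s : ZMod 2} {f f' : V → ℤ}
  {p q : List V} {a b v : V}

/-- The sites of `B` that are reached from `S` before the nonzero odd sites of `f`. -/
def component (B S : Set V) (f : V → ℤ) : Set V := {v | Reach B S (nonzeroSites f) v}

/-- The path `p` of `C` runs along `R`, outside it. -/
structure IsWall (C : Set (List V)) (R : Set V) (p : List V) : Prop where
  mem : p ∈ C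
  notMem : ∀ v ∈ p, v ∉ R
  exists_adj : ∀ v ∈ p, ∃ e ∈ R, adj e v

/-- A wall of `C` along `R`, chosen as a function of `R`; a junk value if there is none. -/
noncomputable def wall (C : Set (List V)) (R : Set V) : List V := Classical.epsilon (IsWall C R)

lemma WallClass.isWall_wall (hC : WallClass x₀ x₁ y₀ y₁ S T C s)
    (hf : WalledOff (box x₀ x₁ y₀ y₁) S T C f) :
    IsWall C (component (box x₀ x₁ y₀ y₁) S f) (wall C (component (box x₀ x₁ y₀ y₁) S f)) := by
  obtain ⟨p, hp, h⟩ := hC.exists_blocking (nonzeroSites f) (fun _ hv => hv.1) hf.1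
  exact Classical.epsilon_spec (p := IsWall C (component (box x₀ x₁ y₀ y₁) S f))
    ⟨p, hp, fun v hv hR => hR.notMem (h v hv).1, fun v hv =>
      let ⟨e, he, hR⟩ := (h v hv).2
      ⟨e, hR, he⟩⟩

lemma IsWall.apply_ne_zero (hC : WallClass x₀ x₁ y₀ y₁ S T C s)
    (hq : IsWall C (component (box x₀ x₁ y₀ y₁) S f) q) (hv : v ∈ q) : f v ≠ 0 := by
  intro h0
  obtain ⟨e, he, hev⟩ := hq.exists_adj v hv
  exact hq.notMem v hv (Reach.step he hev ((hC.isTopPath q hq.mem).mem v hv) fun h => h.2 h0)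

lemma component_eq (hp : ∀ v ∈ p, v ∉ component B S f)
    (h : ∀ v, OddSite v → v ∈ explored B S p → (f' v = 0 ↔ f v = 0)) :
    component B S f' = component B S f := by
  have avoiding {v : V} (hv : v ∈ component B S f) : Reach B S {w | w ∈ p} v :=
    Reach.avoiding hv fun w hw hwp => hp w hwp hw
  have notMem_nonzeroSites {v : V} (hv : v ∉ p → Reach B S {w | w ∈ p} v)
      (hf' : v ∉ nonzeroSites f') : v ∉ nonzeroSites f := fun hn =>
    hf' ⟨hn.1, fun h0 => hn.2 ((h v hn.1 (or_iff_not_imp_right.2 hv)).1 h0)⟩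
  ext v
  constructor
  · intro hv
    induction hv with
    | base hB hS hn => exact .base hB hS (notMem_nonzeroSites (fun hp => .base hB hS hp) hn)
    | step _ huv hB hn ih =>
      exact Reach.step ih huv hB
        (notMem_nonzeroSites (fun hp => .step (avoiding ih) huv hB hp) hn)
  · exact fun hv => Reach.avoiding hv fun w hw hn =>
      hw.notMem ⟨hn.1, fun h0 => hn.2 ((h w hn.1 (Or.inl (avoiding hw))).2 h0)⟩

lemma WalledOff.congr (h : component B S f' = component B S f) (hf : WalledOff B S T C f) :
    WalledOff B S T C f' := by
  have h' (v : V) : Reach B S (nonzeroSites f') v ↔ Reach B S (nonzeroSites f) v :=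
    Set.ext_iff.1 h v
  simpa only [WalledOff, h'] using hf

lemma rel_of_isChain {r : V → V → Prop} (hr : Equivalence r) (hp : p.IsChain r) (ha : a ∈ p)
    (hb : b ∈ p) : r a b :=
  have : IsTrans V r := ⟨fun _ _ _ => hr.trans⟩
  have : Std.Symm r := ⟨fun _ _ => hr.symm⟩
  List.Pairwise.forall_of_forall (fun x _ => hr.refl x)
    (List.isChain_iff_pairwise.1 hp) ha hb

lemma Reach.of_xadj (hT : ∀ v ∈ T, OddSite v) (h : xadj a b) (ha : OddSite a)
    (hbB : b ∈ box x₀ x₁ y₀ y₁) (hbT : b ∉ T) (hR : Reach (box x₀ x₁ y₀ y₁) S T a) :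
    Reach (box x₀ x₁ y₀ y₁) S T b := by
  obtain ⟨e, heB, he, hea, heb⟩ := h.exists_between ha hR.mem hbB
  exact .step (.step hR hea.symm heB (notMem_of_evenSite hT he)) heb hbB hbT

lemma Reach.of_isChain (hT : ∀ v ∈ T, OddSite v) (hp : p.IsChain xadj)
    (hodd : ∀ v ∈ p, OddSite v) (hpB : ∀ v ∈ p, v ∈ box x₀ x₁ y₀ y₁) (hpT : ∀ v ∈ p, v ∉ T)
    (ha : a ∈ p) (hb : b ∈ p) (hR : Reach (box x₀ x₁ y₀ y₁) S T a) :
    Reach (box x₀ x₁ y₀ y₁) S T b := by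
  refine (rel_of_isChain (r := fun a b => Reach (box x₀ x₁ y₀ y₁) S T a ↔
    Reach (box x₀ x₁ y₀ y₁) S T b) ⟨fun _ => Iff.rfl, Iff.symm, Iff.trans⟩ ?_ ha hb).1 hR
  refine (List.IsChain.iff_mem.1 hp).imp fun a b ⟨ha, hb, hab⟩ => ?_
  exact ⟨.of_xadj hT hab (hodd a ha) (hpB b hb) (hpT b hb),
    .of_xadj hT hab.symm (hodd b hb) (hpB a ha) (hpT a ha)⟩

lemma WalledOff.notMem_component (hC : WallClass x₀ x₁ y₀ y₁ S T C s)
    (hf : WalledOff (box x₀ x₁ y₀ y₁) S T C f) (hp : p ∈ C) (hzero : ∀ v ∈ p, f v = 0)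
    (hv : v ∈ p) : v ∉ component (box x₀ x₁ y₀ y₁) S f := fun hR =>
  have htop := hC.isTopPath p hp
  hf.2 ⟨p, hp, fun _ hw => Reach.of_isChain (fun _ h => h.1) htop.chain htop.odd htop.mem
    (fun u hu h => h.2 (hzero u hu)) hv hw hR⟩

lemma IsWall.side_eq (hC : WallClass x₀ x₁ y₀ y₁ S T C s)
    (hf : WalledOff (box x₀ x₁ y₀ y₁) S T C f)
    (hq : IsWall C (component (box x₀ x₁ y₀ y₁) S f) q) (hp : p ∈ C) (hzero : ∀ v ∈ p, f v = 0)
    (hv : v ∈ q) : side y₁ p v = s := by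
  obtain ⟨e, he, hev⟩ := hq.exists_adj v hv
  have he' : Reach (box x₀ x₁ y₀ y₁) S {w | w ∈ p} e :=
    Reach.avoiding he fun w hw hwp => hf.notMem_component hC hp hzero hwp hw
  have hvp : v ∉ p := fun hvp => hq.apply_ne_zero hC hv (hzero v hvp)
  rw [← hC.side_eq_of_reach hp he', hC.side_adj p hp e he.mem v
    ((hC.isTopPath q hq.mem).mem v hv) he'.notMem hvp hev]

lemma WallClass.side_eq_of_starNear (hC : WallClass x₀ x₁ y₀ y₁ S T C s) (hp : p ∈ C)
    (h : StarNear a b) (ha : OddSite a) (haB : a ∈ box x₀ x₁ y₀ y₁) (hbB : b ∈ box x₀ x₁ y₀ y₁)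
    (hap : a ∉ p) (hbp : b ∉ p) : side y₁ p a = side y₁ p b := by
  by_cases hab : a = b
  · rw [hab]
  obtain ⟨e, heB, he, hea, heb⟩ := h.exists_between hab ha haB hbB
  have hep : e ∉ p := notMem_of_evenSite (T := {v | v ∈ p}) (hC.isTopPath p hp).odd he
  rw [hC.side_adj p hp a haB e heB hap hep hea.symm, hC.side_adj p hp e heB b hbB hep hbp heb]

end Walls

namespace MirrorFrame

variable {G : MirrorFrame} {O : Set (List V)} {f f' : V → ℤ} {p q q' : List V} {v : V}

/-- Every path of `O` is a right wall, and contains a left wall with the same start. -/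
structure CrossesBoth (G : MirrorFrame) (O : Set (List V)) : Prop where
  mem_rightWalls : ∀ p ∈ O, p ∈ G.rightWalls
  exists_leftWall : ∀ p ∈ O, ∃ p' ∈ G.leftWalls, (∀ v ∈ p', v ∈ p) ∧ start p' = start p

variable (G) in
/-- The component of the left source. -/
def leftComponent (f : V → ℤ) : Set V := component G.leftRect G.leftSource f

variable (G) in
/-- The component of the right source. -/
def rightComponent (f : V → ℤ) : Set V := component G.rect G.rightSource f

/-- The nonzero sites of `f` wall off both sources. -/
structure DoublyWalled (G : MirrorFrame) (f : V → ℤ) : Prop where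
  left : WalledOff G.leftRect G.leftSource G.leftTarget G.leftWalls f
  right : WalledOff G.rect G.rightSource {v | v.1 = G.x₀} G.rightWalls f

/-- `q` and `q'` are walls along the components of the two sources. -/
structure Walls (G : MirrorFrame) (f : V → ℤ) (q q' : List V) : Prop extends
    DoublyWalled G f where
  isWall_left : IsWall G.leftWalls (G.leftComponent f) q
  isWall_right : IsWall G.rightWalls (G.rightComponent f) q'

namespace Walls

lemma notMem (h : G.Walls f q q') (hzero : ∀ v ∈ p, f v = 0) (hv : v ∈ q ∨ v ∈ q') : v ∉ p :=
  fun hvp => hv.elim (h.isWall_left.apply_ne_zero G.leftWallClass · (hzero v hvp))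
    (h.isWall_right.apply_ne_zero G.rightWallClass · (hzero v hvp))

lemma isTopPath_left (h : G.Walls f q q') : IsTopPath G.leftRect G.y₁ q :=
  G.leftWallClass.isTopPath q h.isWall_left.mem

lemma isTopPath_right (h : G.Walls f q q') : IsTopPath G.rect G.y₁ q' :=
  G.rightWallClass.isTopPath q' h.isWall_right.mem

lemma mem_rect_left (h : G.Walls f q q') (hv : v ∈ q) : v ∈ G.rect :=
  leftRect_subset_rect (h.isTopPath_left.mem v hv)

lemma side_right (h : G.Walls f q q') (hO : G.CrossesBoth O) (hp : p ∈ O)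
    (hzero : ∀ v ∈ p, f v = 0) (hv : v ∈ q') : side G.y₁ p v = 1 :=
  h.isWall_right.side_eq G.rightWallClass h.right (hO.mem_rightWalls p hp) hzero hv

lemma side_start_left (h : G.Walls f q q') (hO : G.CrossesBoth O) (hp : p ∈ O)
    (hzero : ∀ v ∈ p, f v = 0) : side G.y₁ p (start q) = 0 := by
  obtain ⟨p', hp', hsub, hstart⟩ := hO.exists_leftWall p hp
  have hside := h.isWall_left.side_eq G.leftWallClass h.left hp' (fun v hv => hzero v (hsub v hv))
    (start_mem h.isTopPath_left.ne_nil)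
  rw [side_top (G.leftWallClass.isTopPath p' hp') h.isTopPath_left.start_snd, hstart] at hside
  rwa [side_top (G.rightWallClass.isTopPath p (hO.mem_rightWalls p hp))
    h.isTopPath_left.start_snd]

lemma side_left (h : G.Walls f q q') (hO : G.CrossesBoth O) (hp : p ∈ O)
    (hzero : ∀ v ∈ p, f v = 0) (hv : v ∈ q) : side G.y₁ p v = 0 := by
  have hq := h.isTopPath_left
  rw [← h.side_start_left hO hp hzero]
  refine rel_of_isChain (r := fun a b => side G.y₁ p a = side G.y₁ p b)
    ⟨fun _ => rfl, Eq.symm, Eq.trans⟩ ?_ hv (start_mem hq.ne_nil)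
  refine (List.IsChain.iff_mem.1 hq.chain).imp fun a b ⟨ha, hb, hab⟩ => ?_
  exact G.rightWallClass.side_eq_of_starNear (hO.mem_rightWalls p hp) (hab.starNear (hq.odd a ha))
    (hq.odd a ha) (h.mem_rect_left ha) (h.mem_rect_left hb) (h.notMem hzero (Or.inl ha))
    (h.notMem hzero (Or.inl hb))

lemma wallPair (h : G.Walls f q q') (hO : G.CrossesBoth O) (hp : p ∈ O)
    (hzero : ∀ v ∈ p, f v = 0) : G.WallPair q q' := by
  have hq := h.isTopPath_left
  have hq' := h.isTopPath_right
  have hdisj : ∀ v ∈ q, v ∉ q' := fun v hv hv' => zero_ne_one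
    ((h.side_left hO hp hzero hv).symm.trans (h.side_right hO hp hzero hv'))
  refine ⟨h.isWall_left.mem, h.isWall_right.mem, fun v hv hR => ?_⟩
  have hstart := Reach.of_isChain hq'.odd hq.chain hq.odd (fun _ => h.mem_rect_left) hdisj hv
    (start_mem hq.ne_nil) (hR.resolve_right (hdisj v hv))
  have hqq' := G.rightWallClass.side_eq_of_reach h.isWall_right.mem hstart
  have hpq := h.side_start_left hO hp hzero
  have hpq' := h.side_right hO hp hzero (start_mem hq'.ne_nil)
  have hptop := G.rightWallClass.isTopPath p (hO.mem_rightWalls p hp)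
  rw [side_top hq' hq.start_snd] at hqq'
  rw [side_top hptop hq.start_snd] at hpq
  rw [side_top hptop hq'.start_snd] at hpq'
  split_ifs at hqq' hpq hpq' <;> first | omega | simp at hqq' hpq hpq'

lemma not_starLinked (h : G.Walls f q q') (hO : G.CrossesBoth O) (hp : p ∈ O)
    (hzero : ∀ v ∈ p, f v = 0) {N : Set V} (hN : ∀ v ∈ N, OddSite v ∧ v ∈ G.rect) :
    ¬StarLinked {v | v ∈ N ∧ f v ≠ 0} {v | v ∈ q} {v | v ∈ q'} := by
  rintro ⟨a, ha, b, hb, hab⟩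
  have hside {a b : V} := G.rightWallClass.side_eq_of_starNear (a := a) (b := b)
    (hO.mem_rightWalls p hp)
  suffices side G.y₁ p a = 0 ∧ OddSite a ∧ a ∈ G.rect ∧ a ∉ p by
    obtain ⟨ha, hodd, haB, hap⟩ := this
    refine zero_ne_one (ha.symm.trans ((hside hab hodd haB (h.isTopPath_right.mem b hb) hap
      (h.notMem hzero (Or.inr hb))).trans (h.side_right hO hp hzero hb)))
  clear hab
  induction ha with
  | base a ha => exact ⟨h.side_left hO hp hzero ha, h.isTopPath_left.odd a ha, h.mem_rect_left ha,
      h.notMem hzero (Or.inl ha)⟩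
  | step a b _ hab hb ih =>
    obtain ⟨ha, hodd, haB, hap⟩ := ih
    have hbp : b ∉ p := fun hbp => hb.2 (hzero b hbp)
    exact ⟨(hside hab hodd haB (hN b hb.1).2 hap hbp).symm.trans ha, (hN b hb.1).1, (hN b hb.1).2,
      hbp⟩

end Walls

section Exploration

variable (G)

/-- The chosen wall along the component of the left source. -/
noncomputable def leftWall (f : V → ℤ) : List V := wall G.leftWalls (G.leftComponent f)

/-- The chosen wall along the component of the right source. -/
noncomputable def rightWall (f : V → ℤ) : List V := wall G.rightWalls (G.rightComponent f)

/-- The odd sites explored up to the chosen walls. -/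
def exploredSites (f : V → ℤ) : Set V :=
  {v | OddSite v ∧ (v ∈ G.left (G.leftWall f) ∨ v ∈ G.right (G.rightWall f))}

/-- What the exploration from the two sources reveals about `f`. -/
def exploration (f : V → ℤ) : Set V × Set V × Set V :=
  (G.leftComponent f, G.rightComponent f, {v | v ∈ G.exploredSites f ∧ f v = 0})

variable {G}

lemma DoublyWalled.walls (h : G.DoublyWalled f) : G.Walls f (G.leftWall f) (G.rightWall f) :=
  ⟨h, G.leftWallClass.isWall_wall h.left, G.rightWallClass.isWall_wall h.right⟩

lemma DoublyWalled.congr (h : G.DoublyWalled f) (he : G.exploration f' = G.exploration f) :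
    G.DoublyWalled f' :=
  ⟨h.left.congr (Prod.ext_iff.1 he).1, h.right.congr (Prod.ext_iff.1 (Prod.ext_iff.1 he).2).1⟩

lemma walls_congr (hl : G.leftComponent f' = G.leftComponent f)
    (hr : G.rightComponent f' = G.rightComponent f) :
    G.leftWall f' = G.leftWall f ∧ G.rightWall f' = G.rightWall f :=
  ⟨congrArg (wall G.leftWalls) hl, congrArg (wall G.rightWalls) hr⟩

lemma DoublyWalled.exploration_eq_iff (h : G.DoublyWalled f) :
    G.exploration f' = G.exploration f ↔ ZerosAre (G.exploredSites f) {v | f v = 0} f' := by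
  have exploredSites_congr (hl : G.leftComponent f' = G.leftComponent f)
      (hr : G.rightComponent f' = G.rightComponent f) :
      G.exploredSites f' = G.exploredSites f := by
    rw [exploredSites, (walls_congr hl hr).1, (walls_congr hl hr).2, exploredSites]
  constructor
  · intro he v hv
    simp only [exploration, Prod.mk.injEq] at he
    obtain ⟨hl, hr, he⟩ := he
    rw [exploredSites_congr hl hr] at he
    exact (and_congr_right_iff.1 (Set.ext_iff.1 he v)) hv
  · intro hz
    have hl : G.leftComponent f' = G.leftComponent f :=
      component_eq h.walls.isWall_left.notMem fun v hodd hv => hz v ⟨hodd, Or.inl hv⟩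
    have hr : G.rightComponent f' = G.rightComponent f :=
      component_eq h.walls.isWall_right.notMem fun v hodd hv => hz v ⟨hodd, Or.inr hv⟩
    rw [exploration, exploration, hl, hr, exploredSites_congr hl hr]
    congr 2
    ext v
    exact and_congr_right (hz v)

lemma DoublyWalled.walls_of_exploration_eq (h : G.DoublyWalled f)
    (he : G.exploration f' = G.exploration f) :
    G.Walls f' (G.leftWall f) (G.rightWall f) := by
  have hw := walls_congr (Prod.ext_iff.1 he).1 (Prod.ext_iff.1 (Prod.ext_iff.1 he).2).1
  rw [← hw.1, ← hw.2]
  exact (h.congr he).walls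

end Exploration

variable {F : Set V}

/-- A link between two walls is crossed by no zero path, so the link estimate bounds the
conditional probability that there is no zero path. -/
lemma DoublyWalled.absCount_exploration_le (h : G.DoublyWalled f) (hO : G.CrossesBoth O)
    (hF : IsInnerDomain F) (hrect : ∀ v ∈ G.rect, OddSite v → v ∈ F) :
    absCount F (fun f' => G.exploration f' = G.exploration f) ≤
      8 * absCount F fun f' => ¬HasZeroPath O f' ∧ G.exploration f' = G.exploration f := by
  by_cases hpair : G.WallPair (G.leftWall f) (G.rightWall f)
  · have hlink := (hpair.linkSetup (K := {v | f v = 0}) hF hrect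
      (fun _ hv => h.walls.isWall_left.apply_ne_zero G.leftWallClass hv)
      (fun _ hv => h.walls.isWall_right.apply_ne_zero G.rightWallClass hv)).absCount_zerosAre_le
    refine (absCount_mono hF.finite fun f' _ => h.exploration_eq_iff.1).trans
      (hlink.trans (Nat.mul_le_mul_left 8 (absCount_mono hF.finite fun f' _ hf' => ?_)))
    have he := h.exploration_eq_iff.2 hf'.1
    exact ⟨fun ⟨p, hp, hzero⟩ => (h.walls_of_exploration_eq he).not_starLinked hO hp hzero
      (fun v hv => ⟨hv.1, hv.2.1.1⟩) hf'.2, he⟩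
  · refine (absCount_mono hF.finite fun f' _ he => ?_).trans
      (Nat.le_mul_of_pos_left _ (by norm_num))
    exact ⟨fun ⟨p, hp, hzero⟩ => hpair ((h.walls_of_exploration_eq he).wallPair hO hp hzero), he⟩

lemma absCount_doublyWalled_le (hO : G.CrossesBoth O) (hF : IsInnerDomain F)
    (hrect : ∀ v ∈ G.rect, OddSite v → v ∈ F) :
    absCount F G.DoublyWalled ≤ 8 * absCount F fun f => ¬HasZeroPath O f := by
  refine le_trans ?_ (Nat.mul_le_mul_left 8 (absCount_mono (A₁ := fun f => ¬HasZeroPath O f ∧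
    G.DoublyWalled f) hF.finite fun _ _ => And.left))
  refine ncard_le_mul_of_fiber_le ((finite_heights hF.finite baseHeight).subset fun _ h => h.1)
    (fun g => G.exploration |g|) 8 (fun g hg => ⟨hg.1, hg.2.2⟩) ?_
  rintro g ⟨-, h⟩
  convert h.absCount_exploration_le hO hF hrect using 2 <;> unfold absCount <;> congr 1 <;>
    ext g' <;> have := fun he => h.congr (f' := |g'|) he <;>
    simp only [Set.mem_ofPred_eq] <;> tauto

lemma absCount_true_le_add (hF : F.Finite) (A : (V → ℤ) → Prop) :
    absCount F (fun _ => True) ≤ absCount F A + absCount F fun f => ¬A f := by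
  refine (Set.ncard_le_ncard (fun g hg => ?_) ?_).trans (Set.ncard_union_le _ _)
  · exact (em (A |g|)).imp (⟨hg.1, ·⟩) (⟨hg.1, ·⟩)
  · exact (finite_heights hF baseHeight).subset fun g hg => hg.elim And.left And.left

lemma le_mul_of_mul_le {total good a b : ℕ} (ha : total ≤ 2 * a + 2 * good)
    (hb : total ≤ 2 * b + 2 * good) (hab : a * b ≤ total * (8 * good)) : total ≤ 128 * good := by
  by_contra! hlt
  zify at *
  have : (total - 2 * good : ℤ) * (total - 2 * good) ≤ (2 * a) * (2 * b) := by
    apply mul_le_mul <;> omega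
  nlinarith

/-- Each of the two sources is walled off about as often as there is a zero path, the two events
are positively correlated, and given both the link estimate applies. -/
theorem absCount_le_mul_not_hasZeroPath (hO : G.CrossesBoth O) (hF : IsInnerDomain F)
    (hrect : ∀ v ∈ G.rect, OddSite v → v ∈ F) :
    absCount F (fun _ => True) ≤ 128 * absCount F fun f => ¬HasZeroPath O f := by
  have hfkg := absCount_mul_le (A₁ := WalledOff G.leftRect G.leftSource G.leftTarget G.leftWalls)
    (A₂ := WalledOff G.rect G.rightSource {v | v.1 = G.x₀} G.rightWalls) (A₃ := fun _ => True)
    (A₄ := G.DoublyWalled) hF.finite fun f f' hf hf' h h' => ⟨trivial, ⟨h.mono fun v hv => ?_,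
      h'.mono fun v hv => ?_⟩⟩
  rotate_left
  · exact le_antisymm (le_sup_left.trans hv.le) (hf v)
  · exact le_antisymm (le_sup_right.trans hv.le) (hf' v)
  have hwalled := absCount_doublyWalled_le hO hF hrect
  have hleft := two_mul_absCount_hasZeroPath_le G.leftWallClass hF
    fun v hv => hrect v (leftRect_subset_rect hv)
  have hright := two_mul_absCount_hasZeroPath_le G.rightWallClass hF hrect
  have hcompl := absCount_true_le_add hF.finite (HasZeroPath O)
  have hzero_left : absCount F (HasZeroPath O) ≤ absCount F (HasZeroPath G.leftWalls) :=
    absCount_mono hF.finite fun f _ ⟨p, hp, hzero⟩ =>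
      let ⟨p', hp', hsub, _⟩ := hO.exists_leftWall p hp
      ⟨p', hp', fun v hv => hzero v (hsub v hv)⟩
  have hzero_right : absCount F (HasZeroPath O) ≤ absCount F (HasZeroPath G.rightWalls) :=
    absCount_mono hF.finite fun f _ ⟨p, hp, hzero⟩ => ⟨p, hO.mem_rightWalls p hp, hzero⟩
  change _ ≤ _ + 2 * absCount F (WalledOff G.leftRect _ _ _) at hleft
  change _ ≤ _ + 2 * absCount F (WalledOff G.rect _ _ _) at hright
  exact le_mul_of_mul_le (by omega) (by omega) (hfkg.trans (Nat.mul_le_mul_left _ hwalled))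

end MirrorFrame

/-- The vertical crossings that start to the left of the column `s` and reach it. -/
def leftColumnCrossings (x₀ x₁ y₀ y₁ s : ℤ) : Set (List V) :=
  {p | p ∈ verticalCrossings x₀ x₁ y₀ y₁ ∧ (start p).1 < s ∧ ∃ v ∈ p, v.1 = s}

namespace MirrorFrame

variable {x₀ x₁ y₀ y₁ s : ℤ}

/-- The frame of a rectangle with the reflection in the column `s`. -/
def columnFrame (hs : x₀ < s) (hs' : s < x₁) (hy : y₀ < y₁) : MirrorFrame where
  x₀ := x₀
  x₁ := x₁
  y₀ := y₀
  y₁ := y₁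
  xs := s
  σ v := (2 * s - v.1, v.2)
  leftSource := {v | v.1 = x₀ ∨ v.2 = y₀}
  leftTarget := topRight s y₁
  rightSource := {v | v.1 = x₁ ∨ v.2 = y₁ ∧ s ≤ v.1}
  leftWalls := cornerCrossings x₀ s y₀ y₁
  rightWalls := leftVerticalCrossings x₀ x₁ y₀ y₁ s
  x_lt := hs.trans hs'
  y_lt := hy
  le_x₁ := hs'.le
  mirror :=
    { involutive := fun v => by ext <;> simp
      map_adj := fun h => by simp only [adj] at *; omega
      oddSite_map := fun v => by simp only [OddSite]; omega }
  map_xadj u v h := by simp only [xadj] at *; omega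
  leftWallClass := wallClass_cornerCrossings hs hy
  rightWallClass := wallClass_leftVerticalCrossings (hs.trans hs') hy hs
  map_of_adj_of_notMem v hv w hw h hw' := by
    simp only [mem_box, adj] at *
    exact ⟨Prod.ext (by simp only; omega) rfl, by omega⟩
  source_of_adj_of_notMem v hv hσv w h hw := by
    simp only [mem_box, adj, Set.mem_ofPred_eq] at *; omega
  left_column v hv h := by simp only [mem_box, Set.mem_ofPred_eq] at *; omega
  right_column _ _ h := Or.inl h
  right_column_target v hv h := by simp only [mem_box] at *; omega
  map_mem_or v hv := by simp only [mem_box] at *; omega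
  top_row v hv hodd h := by
    refine (le_or_gt v.1 s).imp (fun hvs => ?_) fun hvs e he hrow hdist => ?_
    · simp only [mem_box, Set.mem_ofPred_eq] at *; omega
    · have := abs_le.1 hdist.le
      simp only [mem_box, topRight, Set.mem_ofPred_eq, EvenSite, OddSite] at *; omega
  top_row_target v hv _ h hσv _ := by
    refine Or.inr ⟨(s - 1, y₁), ?_, ⟨?_, rfl, le_rfl⟩, ?_, ?_⟩ <;>
      simp only [mem_box, Set.mem_ofPred_eq, EvenSite, OddSite, adj] at * <;> omega
  bottom_row v hv h := by
    refine (le_or_gt s v.1).imp (fun hvs => ?_) fun hvs e hrow hdist hx => ?_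
    · simp only [mem_box, Set.mem_ofPred_eq] at *; omega
    · have := abs_le.1 hdist.le
      simp only [mem_box, Set.mem_ofPred_eq] at *; omega

/-- The frame of a square with the reflection in its diagonal. -/
def diagonalFrame (hx : x₀ < x₁) (hxy : x₁ - x₀ = y₁ - y₀) : MirrorFrame where
  x₀ := x₀
  x₁ := x₁
  y₀ := y₀
  y₁ := y₁
  xs := x₁
  σ v := (v.2 + (x₀ - y₀), v.1 - (x₀ - y₀))
  leftSource := {v | v.1 = x₀}
  leftTarget := {v | v.1 = x₁}
  rightSource := {v | v.1 = x₁ ∨ v.2 = y₁ ∧ x₁ + 1 ≤ v.1}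
  leftWalls := verticalCrossings x₀ x₁ y₀ y₁
  rightWalls := leftVerticalCrossings x₀ x₁ y₀ y₁ (x₁ + 1)
  x_lt := hx
  y_lt := by omega
  le_x₁ := le_rfl
  mirror :=
    { involutive := fun v => by ext <;> simp
      map_adj := fun h => by simp only [adj] at *; omega
      oddSite_map := fun v => by simp only [OddSite]; omega }
  map_xadj u v h := by simp only [xadj] at *; omega
  leftWallClass := wallClass_verticalCrossings hx (by omega)
  rightWallClass := wallClass_leftVerticalCrossings hx (by omega) (by omega)
  map_of_adj_of_notMem _ _ _ hw _ hw' := absurd hw hw'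
  source_of_adj_of_notMem v hv hσv w h hw := by
    simp only [mem_box, adj, Set.mem_ofPred_eq] at *; omega
  left_column _ hv h := ⟨h, hv⟩
  right_column _ _ h := Or.inl h
  right_column_target _ _ h := h
  map_mem_or v hv := by simp only [mem_box] at *; omega
  top_row v hv hodd h := by
    simp only [mem_box, Set.mem_ofPred_eq, EvenSite, OddSite] at *; omega
  top_row_target v hv _ h hσv _ := by
    refine Or.inl ?_
    simp only [mem_box, Set.mem_ofPred_eq] at *; omega
  bottom_row v hv h := by simp only [mem_box, Set.mem_ofPred_eq] at *; omega

lemma crossesBoth_columnFrame (hs : x₀ < s) (hs' : s < x₁) (hy : y₀ < y₁) :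
    (columnFrame hs hs' hy).CrossesBoth (leftColumnCrossings x₀ x₁ y₀ y₁ s) where
  mem_rightWalls p hp := ⟨hp.1, hp.2.1.le⟩
  exists_leftWall p hp := by
    obtain ⟨⟨htop, -⟩, hstart, v, hv, hvs⟩ := hp
    obtain ⟨q, hqp, hlen, hle, hq⟩ :=
      exists_prefix_finish_eq (φ := Prod.fst) (fun _ _ h => by simp only [xadj] at h; omega)
        htop.chain hstart ⟨v, hv, hvs.ge⟩
    have hne : q ≠ [] := by rintro rfl; simp at hlen
    have hq_start := start_eq_of_prefix hne hqp
    refine ⟨q, ⟨⟨hne, htop.chain.prefix hqp, fun v hv => htop.odd v (hqp.subset hv),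
      fun v hv => ?_, hq_start ▸ htop.start_snd⟩, hq_start ▸ hstart, hq⟩,
      fun v hv => hqp.subset hv, hq_start⟩
    have hvB := htop.mem v (hqp.subset hv)
    exact ⟨hvB.1, hle v hv, hvB.2.2⟩

lemma crossesBoth_diagonalFrame (hx : x₀ < x₁) (hxy : x₁ - x₀ = y₁ - y₀) :
    (diagonalFrame hx hxy).CrossesBoth (verticalCrossings x₀ x₁ y₀ y₁) where
  mem_rightWalls _ hp :=
    ⟨hp, (hp.1.mem _ (start_mem hp.1.ne_nil)).2.1.trans (Int.le_add_one le_rfl)⟩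
  exists_leftWall p hp := ⟨p, hp, fun _ h => h, rfl⟩

end MirrorFrame

/-! ### Rectangles of bounded aspect ratio -/

/-- `A` is monotone in the zero set, and at least a proportion `1 / c` of all heights `g` on `F`
with the base boundary condition satisfy `A |g|`. -/
structure Likely (F : Set V) (c : ℕ) (A : (V → ℤ) → Prop) : Prop where
  mono : ∀ ⦃f f' : V → ℤ⦄, (∀ v, f' v = 0 → f v = 0) → A f → A f'
  le_mul : absCount F (fun _ => True) ≤ c * absCount F A

namespace Likely

variable {F : Set V} {c d : ℕ} {A B : (V → ℤ) → Prop}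

lemma and (hF : F.Finite) (hA : Likely F c A) (hB : Likely F d B) :
    Likely F (c * d) fun f => A f ∧ B f where
  mono _ _ h hf := ⟨hA.mono h hf.1, hB.mono h hf.2⟩
  le_mul := by
    have hfkg : absCount F A * absCount F B ≤
        absCount F (fun _ => True) * absCount F fun f => A f ∧ B f := by
      refine absCount_mul_le hF fun f f' hf hf' hAf hBf' =>
        ⟨trivial, hA.mono (fun v hv => ?_) hAf, hB.mono (fun v hv => ?_) hBf'⟩ <;>
      · have hsup : max (f v) (f' v) = 0 := hv
        have : 0 ≤ f v := hf v
        have : 0 ≤ f' v := hf' v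
        omega
    rcases (absCount F fun _ => True).eq_zero_or_pos with h0 | hpos
    · exact h0 ▸ Nat.zero_le _
    refine Nat.le_of_mul_le_mul_left ?_ hpos
    calc absCount F (fun _ => True) * absCount F (fun _ => True)
        ≤ (c * absCount F A) * (d * absCount F B) := Nat.mul_le_mul hA.le_mul hB.le_mul
      _ = c * d * (absCount F A * absCount F B) := by ring
      _ ≤ c * d * (absCount F (fun _ => True) * absCount F fun f => A f ∧ B f) :=
        Nat.mul_le_mul_left _ hfkg
      _ = _ := by ring

lemma imp (hc : 1 ≤ c) {P : Prop} (h : P → Likely F c A) : Likely F c fun f => P → A f := by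
  by_cases hP : P
  · simpa only [hP, forall_const] using h hP
  · simp only [hP, false_imp_iff]
    exact ⟨fun _ _ _ _ => trivial, Nat.le_mul_of_pos_left _ hc⟩

lemma forall_lt (hF : F.Finite) {A : ℕ → (V → ℤ) → Prop} (h : ∀ j, Likely F c (A j)) (J : ℕ) :
    Likely F (c ^ J) fun f => ∀ j < J, A j f := by
  induction J with
  | zero =>
    simp only [not_lt_zero, false_imp_iff, forall_const, pow_zero]
    exact ⟨fun _ _ _ _ => trivial, (one_mul _).ge⟩
  | succ J ih =>
    simp only [Nat.forall_lt_succ_right, pow_succ]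
    exact ih.and hF (h J)

lemma not_hasZeroPath {C : Set (List V)}
    (h : absCount F (fun _ => True) ≤ c * absCount F fun f => ¬HasZeroPath C f) :
    Likely F c fun f => ¬HasZeroPath C f where
  mono _ _ h hf := fun ⟨p, hp, h0⟩ => hf ⟨p, hp, fun v hv => h v (h0 v hv)⟩
  le_mul := h

end Likely

section Mirror

variable {F : Set V} {σ : V → V}

lemma absCount_le_preimage (hσ : IsMirror σ) (hF : F.Finite) (A : (V → ℤ) → Prop) :
    absCount F A ≤ absCount (σ ⁻¹' F) fun f => A (f ∘ σ) := by
  have hF' : (σ ⁻¹' F).Finite := hF.preimage hσ.involutive.injective.injOn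
  refine Set.ncard_le_ncard_of_injOn (· ∘ σ) ?_
    (hσ.involutive.surjective.injective_comp_right.injOn)
    ((finite_heights hF' baseHeight).subset fun _ h => h.1)
  rintro g ⟨⟨hg, hgF⟩, hA⟩
  refine ⟨⟨⟨fun u v huv => hg.abs_sub (hσ.map_adj huv), fun v => ?_⟩, fun v hv => ?_⟩, ?_⟩
  · rcases evenSite_or_oddSite v with hv | hv
    · have := hg.odd_of_evenSite ((hσ.evenSite_map v).2 hv)
      simp only [EvenSite, Function.comp_apply] at *; omega
    · have := hg.even_of_oddSite ((hσ.oddSite_map v).2 hv)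
      simp only [OddSite, Function.comp_apply] at *; omega
  · rw [Function.comp_apply, hgF _ hv]
    rcases evenSite_or_oddSite v with hv | hv
    · rw [baseHeight_of_evenSite hv, baseHeight_of_evenSite ((hσ.evenSite_map v).2 hv)]
    · rw [baseHeight_of_oddSite hv, baseHeight_of_oddSite ((hσ.oddSite_map v).2 hv)]
  · convert hA using 1
    funext v
    simp [hσ.involutive v]

lemma IsInnerDomain.preimage (hσ : IsMirror σ) (hF : IsInnerDomain F) :
    IsInnerDomain (σ ⁻¹' F) where
  finite := hF.finite.preimage hσ.involutive.injective.injOn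
  mem_of_adj u hu he v huv := hF.mem_of_adj _ hu ((hσ.evenSite_map u).2 he) _ (hσ.map_adj huv)
  mem_of_forall_adj u he h := by
    refine hF.mem_of_forall_adj _ ((hσ.evenSite_map u).2 he) fun v huv => ?_
    have huv' := hσ.map_adj huv
    rw [hσ.involutive u] at huv'
    simpa [hσ.involutive v] using h _ huv'

/-- The reflection in the column `0`. -/
def mirrorColumn (v : V) : V := (-v.1, v.2)

lemma isMirror_mirrorColumn : IsMirror mirrorColumn where
  involutive v := by simp [mirrorColumn]
  map_adj u v h := by simp only [adj, mirrorColumn] at *; omega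
  oddSite_map v := by simp only [OddSite, mirrorColumn]; omega

end Mirror

/-- The vertical crossings that start to the right of the column `s` and reach it. -/
def rightColumnCrossings (x₀ x₁ y₀ y₁ s : ℤ) : Set (List V) :=
  {p | p ∈ verticalCrossings x₀ x₁ y₀ y₁ ∧ s < (start p).1 ∧ ∃ v ∈ p, v.1 = s}

section Crossings

variable {F : Set V} {x₀ x₁ y₀ y₁ s : ℤ} {p : List V} {f : V → ℤ}

lemma start_map (σ : V → V) (hp : p ≠ []) : start (p.map σ) = σ (start p) := by
  cases p with
  | nil => exact absurd rfl hp
  | cons a l => rfl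

lemma finish_map (σ : V → V) (hp : p ≠ []) : finish (p.map σ) = σ (finish p) := by
  rw [finish_eq_getLast (by simpa using hp), finish_eq_getLast hp, List.getLast_map]

lemma map_mirrorColumn_mem (hp : p ∈ rightColumnCrossings x₀ x₁ y₀ y₁ s) :
    p.map mirrorColumn ∈ leftColumnCrossings (-x₁) (-x₀) y₀ y₁ (-s) := by
  obtain ⟨⟨hp, hfinish⟩, hstart, v, hv, hvs⟩ := hp
  have hp0 := hp.ne_nil
  refine ⟨⟨⟨by simpa using hp0, ?_, ?_, ?_, ?_⟩, ?_⟩, ?_, mirrorColumn v,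
    List.mem_map_of_mem hv, congrArg Neg.neg hvs⟩
  · refine (List.isChain_map _).2 (hp.chain.imp fun u v h => ?_)
    simp only [xadj, mirrorColumn] at *; omega
  · exact List.forall_mem_map.2 fun v hv => (isMirror_mirrorColumn.oddSite_map v).2 (hp.odd v hv)
  · refine List.forall_mem_map.2 fun v hv => ?_
    have := hp.mem v hv
    simp only [mem_box, mirrorColumn] at *; omega
  · rw [start_map _ hp0]; exact hp.start_snd
  · rw [finish_map _ hp0]; exact hfinish
  · rw [start_map _ hp0]; exact neg_lt_neg hstart

lemma likely_not_hasZeroPath_verticalCrossings (hF : IsInnerDomain F) (hx : x₀ < x₁)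
    (hxy : x₁ - x₀ = y₁ - y₀) (hrect : ∀ v ∈ box x₀ x₁ y₀ y₁, OddSite v → v ∈ F) :
    Likely F 128 fun f => ¬HasZeroPath (verticalCrossings x₀ x₁ y₀ y₁) f :=
  .not_hasZeroPath <| MirrorFrame.absCount_le_mul_not_hasZeroPath
    (MirrorFrame.crossesBoth_diagonalFrame hx hxy) hF hrect

lemma likely_not_hasZeroPath_leftColumnCrossings (hF : IsInnerDomain F) (hs : x₀ < s)
    (hs' : s < x₁) (hy : y₀ < y₁) (hrect : ∀ v ∈ box x₀ x₁ y₀ y₁, OddSite v → v ∈ F) :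
    Likely F 128 fun f => ¬HasZeroPath (leftColumnCrossings x₀ x₁ y₀ y₁ s) f :=
  .not_hasZeroPath <| MirrorFrame.absCount_le_mul_not_hasZeroPath
    (MirrorFrame.crossesBoth_columnFrame hs hs' hy) hF hrect

lemma likely_not_hasZeroPath_rightColumnCrossings (hF : IsInnerDomain F) (hs : x₀ < s)
    (hs' : s < x₁) (hy : y₀ < y₁) (hrect : ∀ v ∈ box x₀ x₁ y₀ y₁, OddSite v → v ∈ F) :
    Likely F 128 fun f => ¬HasZeroPath (rightColumnCrossings x₀ x₁ y₀ y₁ s) f := by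
  have hσ := isMirror_mirrorColumn
  have hF' := hF.preimage hσ
  have hleft := likely_not_hasZeroPath_leftColumnCrossings (s := -s) hF' (neg_lt_neg hs')
    (neg_lt_neg hs) hy fun v hv hodd => hrect _
      (by simp only [mem_box, mirrorColumn] at *; omega) ((hσ.oddSite_map v).2 hodd)
  have hback := absCount_le_preimage hσ hF'.finite
    fun f => ¬HasZeroPath (leftColumnCrossings (-x₁) (-x₀) y₀ y₁ (-s)) f
  rw [← Set.preimage_comp, hσ.involutive.comp_self, Set.preimage_id] at hback
  refine .not_hasZeroPath ((absCount_le_preimage hσ hF.finite _).trans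
    (hleft.le_mul.trans (Nat.mul_le_mul_left _ (hback.trans (absCount_mono hF.finite ?_)))))
  rintro f - hf ⟨p, hp, h0⟩
  refine hf ⟨_, map_mirrorColumn_mem hp, List.forall_mem_map.2 fun v hv => ?_⟩
  simpa [hσ.involutive v] using h0 v hv

lemma forall_lt_of_forall_ne {r : V → V → Prop} {φ : V → ℤ} (hφ : ∀ u v, r u v → φ v ≤ φ u + 1)
    (hp : p.IsChain r) (hstart : φ (start p) < s) (hne : ∀ v ∈ p, φ v ≠ s) : ∀ v ∈ p, φ v < s := by
  intro v hv
  by_contra! h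
  obtain ⟨q, hqp, hlen, -, hq⟩ := exists_prefix_finish_eq hφ hp hstart ⟨v, hv, h⟩
  exact hne _ (hqp.subset (finish_mem (by rintro rfl; simp at hlen))) hq

lemma not_hasZeroPath_of_topSquare {a n : ℤ} (ha : 0 < a) (han : a ≤ n)
    (h : ¬HasZeroPath (verticalCrossings (-a) a (n - 2 * a) n) f) :
    ¬HasZeroPath (verticalCrossings (-a) a (-n) n) f := by
  rintro ⟨p, ⟨hp, hfinish⟩, h0⟩
  obtain ⟨q, hqp, hlen, hle, hq⟩ := exists_prefix_finish_eq (φ := fun v => -v.2) (s := 2 * a - n)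
    (fun _ _ h => by simp only [xadj] at h; omega) hp.chain (by rw [hp.start_snd]; omega)
    ⟨_, finish_mem hp.ne_nil, by rw [hfinish]; omega⟩
  have hq0 : q ≠ [] := by rintro rfl; simp at hlen
  refine h ⟨q, ⟨⟨hq0, hp.chain.prefix hqp, fun v hv => hp.odd v (hqp.subset hv), fun v hv => ?_,
    start_eq_of_prefix hq0 hqp ▸ hp.start_snd⟩, by omega⟩, fun v hv => h0 v (hqp.subset hv)⟩
  have := hp.mem v (hqp.subset hv)
  have := hle v hv
  simp only [mem_box] at *; omega

end Crossings

/-- The zeros of `f` do not cross `[-a, a] × [-n, n]` vertically within the window `[g, g + 2n]`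
(shifted into `[-a, a]` where it sticks out), nor by a path that passes from the inner side of the
window to one of the columns `g` and `g + 2n`. -/
def WindowBlocked (a n g : ℤ) (f : V → ℤ) : Prop :=
  ¬HasZeroPath (verticalCrossings (max (-a) (min g (a - 2 * n)))
    (max (-a) (min g (a - 2 * n)) + 2 * n) (-n) n) f ∧
  (-a < g ∧ g < a → ¬HasZeroPath (rightColumnCrossings (-a) a (-n) n g) f) ∧
  (-a < g + 2 * n ∧ g + 2 * n < a →
    ¬HasZeroPath (leftColumnCrossings (-a) a (-n) n (g + 2 * n)) f)

section Windows

variable {F : Set V} {a n c g : ℤ} {p : List V} {f : V → ℤ}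

lemma likely_windowBlocked (hF : IsInnerDomain F) (hn : 0 < n) (han : n ≤ a)
    (hrect : ∀ v ∈ box (-a) a (-n) n, OddSite v → v ∈ F) (g : ℤ) :
    Likely F (128 * (128 * 128)) (WindowBlocked a n g) := by
  refine .and hF.finite ?_ (.and hF.finite (.imp (by norm_num) fun h => ?_)
    (.imp (by norm_num) fun h => ?_))
  · refine likely_not_hasZeroPath_verticalCrossings hF (by omega) (by omega) fun v hv => hrect v ?_
    simp only [mem_box] at *; omega
  · exact likely_not_hasZeroPath_rightColumnCrossings hF h.1 h.2 (by omega) hrect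
  · exact likely_not_hasZeroPath_leftColumnCrossings hF h.1 h.2 (by omega) hrect

lemma WindowBlocked.not_forall_eq_zero (h : WindowBlocked a n g f)
    (hp : p ∈ verticalCrossings (-a) a (-n) n) (hg : g < (start p).1)
    (hg' : (start p).1 < g + 2 * n) : ¬∀ v ∈ p, f v = 0 := by
  intro h0
  obtain ⟨hwindow, hright, hleft⟩ := h
  have hmem : ∀ v ∈ p, -a ≤ v.1 ∧ v.1 ≤ a := fun v hv => ⟨(hp.1.mem v hv).1, (hp.1.mem v hv).2.1⟩
  have hstart := hmem _ (start_mem hp.1.ne_nil)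
  have lower : ∀ v ∈ p, g ≤ v.1 := by
    rcases le_or_gt g (-a) with hga | hga
    · exact fun v hv => hga.trans (hmem v hv).1
    have := forall_lt_of_forall_ne (φ := fun v => -v.1) (s := -g)
      (fun _ _ h => by simp only [xadj] at h; omega) hp.1.chain (neg_lt_neg hg)
      fun v hv hvg => hright ⟨hga, by omega⟩ ⟨p, ⟨hp, hg, v, hv, neg_injective hvg⟩, h0⟩
    exact fun v hv => (neg_lt_neg_iff.1 (this v hv)).le
  have upper : ∀ v ∈ p, v.1 ≤ g + 2 * n := by
    rcases le_or_gt a (g + 2 * n) with hga | hga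
    · exact fun v hv => (hmem v hv).2.trans hga
    have := forall_lt_of_forall_ne (φ := Prod.fst) (s := g + 2 * n)
      (fun _ _ h => by simp only [xadj] at h; omega) hp.1.chain hg'
      fun v hv hvg => hleft ⟨by omega, hga⟩ ⟨p, ⟨hp, hg', v, hv, hvg⟩, h0⟩
    exact fun v hv => (this v hv).le
  refine hwindow ⟨p, ⟨⟨hp.1.ne_nil, hp.1.chain, hp.1.odd, fun v hv => ?_, hp.1.start_snd⟩,
    hp.2⟩, h0⟩
  have := hp.1.mem v hv
  have := lower v hv
  have := upper v hv
  simp only [mem_box] at *; omega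

/-- By parity a crossing does not start on a column `c + 2nj`, so it starts inside a window. -/
lemma not_hasZeroPath_of_windowBlocked (hn : 0 < n) (hc : c ≤ -a) (hcn : (c - n) % 2 = 0) {J : ℕ}
    (hJ : a < c + 2 * n * J) (h : ∀ j < J, WindowBlocked a n (c + 2 * n * (j : ℕ)) f) :
    ¬HasZeroPath (verticalCrossings (-a) a (-n) n) f := by
  rintro ⟨p, hp, h0⟩
  set x := (start p).1 with hx
  have hstart := hp.1.mem _ (start_mem hp.1.ne_nil)
  have hodd := hp.1.odd _ (start_mem hp.1.ne_nil)
  rw [mem_box, ← hx] at hstart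
  rw [OddSite, hp.1.start_snd, ← hx] at hodd
  lift (x - c) / (2 * n) to ℕ using Int.ediv_nonneg (by omega) (by omega) with j hj
  have hle : 2 * n * j ≤ x - c := hj ▸ Int.mul_ediv_self_le (by omega)
  have hlt : x - c < 2 * n * j + 2 * n := hj ▸ Int.lt_mul_ediv_self_add (by omega)
  have hjJ : j < J := by
    by_contra! hJj
    have : 2 * n * (J : ℤ) ≤ 2 * n * j := by gcongr
    omega
  have hne : c + 2 * n * j ≠ x := by
    intro heq
    rw [← heq, mul_assoc] at hodd
    omega
  exact (h j hjJ).not_forall_eq_zero hp (by omega) (by omega) h0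

lemma absCount_le_mul_not_hasZeroPath_rectangle (hF : IsInnerDomain F) (ha : 0 < a) (hn : 0 < n)
    {J : ℕ} (hJ : a < n * J) (hrect : ∀ v ∈ box (-a) a (-n) n, OddSite v → v ∈ F) :
    absCount F (fun _ => True) ≤ (128 * (128 * 128)) ^ J *
      absCount F fun f => ¬HasZeroPath (verticalCrossings (-a) a (-n) n) f := by
  rcases le_total a n with han | han
  · have hJ0 : J ≠ 0 := by rintro rfl; simp at hJ; omega
    have hsquare := likely_not_hasZeroPath_verticalCrossings (x₀ := -a) (x₁ := a)
      (y₀ := n - 2 * a) (y₁ := n) hF (by omega) (by omega) fun v hv => hrect v (by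
        simp only [mem_box] at *; omega)
    calc _ ≤ 128 * _ := hsquare.le_mul
      _ ≤ _ := Nat.mul_le_mul
        ((by norm_num : 128 ≤ 128 * (128 * 128)).trans (Nat.le_self_pow hJ0 _))
        (absCount_mono hF.finite fun f _ => not_hasZeroPath_of_topSquare ha han)
  · set c := -a - (a + n) % 2
    have hwindows := Likely.forall_lt hF.finite
      (fun j => likely_windowBlocked hF hn han hrect (c + 2 * n * (j : ℕ))) J
    refine hwindows.le_mul.trans (Nat.mul_le_mul_left _ (absCount_mono hF.finite fun f _ =>
      not_hasZeroPath_of_windowBlocked hn (by omega) (by omega) ?_))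
    rw [mul_assoc]
    omega

end Windows

/-! ### From zero paths to crossings -/

section Crossing

variable {F : Set V} {a n : ℤ} {f g : V → ℤ} {v : V}

lemma mem_Lam2_iff : v ∈ Lam2 a n ↔ v ∈ box (-a) a (-n) n := by
  simp only [Lam2, mem_box, Set.mem_ofPred_eq, abs_le]
  tauto

lemma Reach.connected {B S T : Set V} (h : Reach B S T v) : Connected adj (B \ T) S {v} := by
  induction h with
  | @base v hvB hvS hvT => exact ⟨[v], by simp, .singleton v, by simp [hvB, hvT], hvS, rfl⟩
  | @step u v _ huv hvB hvT ih =>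
    obtain ⟨p, hp, hchain, hmem, hhead, hlast⟩ := ih
    refine ⟨p ++ [v], by simp, ?_, ?_, by rwa [List.head_append_of_ne_nil hp], by simp⟩
    · refine List.isChain_append.2 ⟨hchain, .singleton v, ?_⟩
      rintro x hx y ⟨⟩
      rw [List.getLast?_eq_getLast_of_ne_nil hp, hlast, Option.mem_some_iff] at hx
      exact hx ▸ huv
    · exact List.forall_mem_append.2 ⟨hmem, by simp [hvB, hvT]⟩

lemma hCross_of_reach {O : Set V} (h : Reach (box (-a) a (-n) n) {u | u.1 = -a} O v)
    (hv : v.1 = a) : HCross adj a n (· ∉ O) := by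
  obtain ⟨p, hp, hchain, hmem, hhead, hlast⟩ := h.connected
  have hLam : ∀ u ∈ p, u ∈ Lam2 a n := fun u hu => mem_Lam2_iff.2 (hmem u hu).1
  rw [Set.mem_singleton_iff] at hlast
  exact ⟨p, hp, hchain, fun u hu => ⟨hLam u hu, (hmem u hu).2⟩,
    ⟨hhead, (hLam _ (List.head_mem hp)).2⟩, ⟨hlast ▸ hv, (hLam _ (List.getLast_mem hp)).2⟩⟩

/-- Duality: the zeros of a height function lie on odd sites, so they block every nearest-neighbour
crossing only if they contain a vertical `×`-crossing. -/
lemma hCross_ne_zero_of_not_hasZeroPath (ha : 0 < a) (hn : 0 < n) (hf : IsHeight f)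
    (h : ¬HasZeroPath (verticalCrossings (-a) a (-n) n) f) : HCross adj a n (f · ≠ 0) := by
  by_contra hcross
  obtain ⟨p, hp, hblock⟩ := (wallClass_verticalCrossings (by omega) (by omega)).exists_blocking
    {v | f v = 0} (fun v h0 => hf.oddSite_of_eq_zero h0)
    fun v hv hR => hcross (hCross_of_reach hR hv)
  exact h ⟨p, hp, fun v hv => (hblock v hv).1⟩

lemma hCross_zero {rel : V → V → Prop} {P : V → Prop} (hn : 0 ≤ n) (h : P (0, 0)) :
    HCross rel 0 n P :=
  ⟨[(0, 0)], by simp, .singleton _, by simp [Lam2, hn, h], by simp [leftSide, hn],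
    by simp [rightSide, hn]⟩

/-- Heights change by `1` along edges, so the sign of a height function is constant along a path on
which it does not vanish. -/
lemma HCross.exists_start (h : HCross adj a n (f · ≠ 0)) : ∃ e, f e ≠ 0 ∧
    ∀ g, IsHeight g → |g| = f → 0 < g e → HCross adj a n (0 < g ·) := by
  obtain ⟨p, hp, hchain, hmem, hends⟩ := h
  refine ⟨p.head hp, (hmem _ (List.head_mem hp)).2, ?_⟩
  rintro g hg rfl hpos
  have hsign : p.IsChain fun u v => 0 < g u ↔ 0 < g v := by
    refine List.IsChain.imp_of_mem_imp (fun u v hu hv huv => ?_) hchain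
    have hu0 : g u ≠ 0 := abs_ne_zero.1 (hmem u hu).2
    have hv0 : g v ≠ 0 := abs_ne_zero.1 (hmem v hv).2
    have := hg.sub_eq huv
    omega
  have hequiv : Equivalence fun u v => 0 < g u ↔ 0 < g v :=
    ⟨fun _ => .rfl, Iff.symm, Iff.trans⟩
  exact ⟨p, hp, hchain, fun v hv => ⟨(hmem v hv).1,
    (rel_of_isChain hequiv hsign (List.head_mem hp) hv).1 hpos⟩, hends⟩

lemma absCount_hCross_ne_zero_le (hF : F.Finite) :
    absCount F (fun f => HCross adj a n (f · ≠ 0)) ≤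
      4 * {g | g ∈ Heights F baseHeight ∧ HCross adj a n (0 < g ·)}.ncard := by
  choose! e he hcross using
    fun (f : V → ℤ) (h : HCross adj a n (f · ≠ 0)) => h.exists_start
  refine (absCount_le_four_mul hF he he).trans (Nat.mul_le_mul_left 4 (Set.ncard_le_ncard ?_
    ((finite_heights hF baseHeight).subset fun _ h => h.1)))
  rintro g ⟨hg, hne, hpos, -⟩
  exact ⟨hg, hcross _ hne g hg.1 rfl hpos⟩

lemma ncard_heights_le_mul_hCross_pos (hF : IsInnerDomain F) (ha : 0 ≤ a) (hn : 0 < n) {J : ℕ}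
    (hJ : a < n * J) (hrect : ∀ v ∈ Lam2 a n, OddSite v → v ∈ F) :
    (Heights F baseHeight).ncard ≤ (128 * (128 * 128)) ^ J * 4 *
      {g | g ∈ Heights F baseHeight ∧ HCross adj a n (0 < g ·)}.ncard := by
  have hcross : absCount F (fun _ => True) ≤
      (128 * (128 * 128)) ^ J * absCount F fun f => HCross adj a n (f · ≠ 0) := by
    rcases ha.eq_or_lt with rfl | ha
    · refine (absCount_mono hF.finite fun f hf _ => hCross_zero hn.le ?_).trans
        (Nat.le_mul_of_pos_left _ (by positivity))
      intro h0
      have := hf.oddSite_of_eq_zero h0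
      simp [OddSite] at this
    · exact (absCount_le_mul_not_hasZeroPath_rectangle hF ha hn hJ fun v hv =>
        hrect v (mem_Lam2_iff.2 hv)).trans (Nat.mul_le_mul_left _ (absCount_mono hF.finite
          fun f hf => hCross_ne_zero_of_not_hasZeroPath ha hn hf))
  calc (Heights F baseHeight).ncard = absCount F (fun _ => True) := by simp [absCount]
    _ ≤ _ := hcross.trans (Nat.mul_le_mul_left _ (absCount_hCross_ne_zero_le hF.finite))
    _ = _ := (mul_assoc _ _ _).symm

end Crossing

open Classical in
/-- The shift `h ↦ h + 1` of a height function on `D`, extended to the plane by `baseHeight`. -/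
noncomputable def shiftUp (D : Set V) (h : V → ℤ) (v : V) : ℤ :=
  if v ∈ D then h v + 1 else baseHeight v

open Classical in
/-- The inverse of `shiftUp D`: the restriction of `g - 1` to `D`. -/
noncomputable def shiftDown (D : Set V) (g : V → ℤ) (v : V) : ℤ := if v ∈ D then g v - 1 else 0

section Shift

variable {D : Set V} {h g : V → ℤ} {u v : V} {a n : ℤ}

lemma isEvenV_iff_evenSite : IsEvenV v ↔ EvenSite v := Int.even_iff

lemma shiftUp_of_mem (hv : v ∈ D) : shiftUp D h v = h v + 1 := if_pos hv

lemma shiftUp_of_notMem (hv : v ∉ D) : shiftUp D h v = baseHeight v := if_neg hv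

lemma shiftDown_of_mem (hv : v ∈ D) : shiftDown D g v = g v - 1 := if_pos hv

lemma shiftDown_of_notMem (hv : v ∉ D) : shiftDown D g v = 0 := if_neg hv

lemma mem_bdry_of_adj (huv : adj u v) (hu : u ∈ D) (hv : v ∉ D) : u ∈ bdry D :=
  ⟨hu, v, hv, huv.symm⟩

lemma isInnerDomain_sdiff_bdry (hD : D.Finite) (heven : ∀ v ∈ bdry D, IsEvenV v) :
    IsInnerDomain (D \ bdry D) where
  finite := hD.subset Set.sdiff_subset
  mem_of_adj := by
    rintro u ⟨huD, hub⟩ hu v huv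
    refine ⟨?_, fun hv => ?_⟩
    · by_contra hv
      exact hub (mem_bdry_of_adj huv huD hv)
    · exact not_oddSite.2 (isEvenV_iff_evenSite.1 (heven v hv)) (huv.evenSite_iff.1 hu)
  mem_of_forall_adj := by
    intro u _ h
    have hright := h (u.1 + 1, u.2) (by simp [adj])
    have huD : u ∈ D := by
      by_contra hu
      exact hright.2 ⟨hright.1, u, hu, by simp [adj]⟩
    exact ⟨huD, fun ⟨_, v, hv, hvu⟩ => hv (h v hvu.symm).1⟩

lemma shiftUp_mem_heights (heven : ∀ v ∈ bdry D, IsEvenV v) (hh : h ∈ Hom0 D) :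
    shiftUp D h ∈ Heights (D \ bdry D) baseHeight := by
  obtain ⟨⟨hsub, hpar, -⟩, hbd⟩ := hh
  have hbd' {v} (hv : v ∈ bdry D) : shiftUp D h v = baseHeight v := by
    rw [shiftUp_of_mem hv.1, hbd v hv, baseHeight_of_evenSite (isEvenV_iff_evenSite.1 (heven v hv)),
      zero_add]
  refine ⟨.of_evenSite (fun v => ?_) fun u v huv _ hv => ?_, fun v hv => ?_⟩
  · by_cases hv : v ∈ D
    · have := Int.even_iff.1 (hpar v hv)
      rw [shiftUp_of_mem hv]
      omega
    · rw [shiftUp_of_notMem hv]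
      exact isHeight_baseHeight.parity v
  · by_cases huD : u ∈ D <;> by_cases hvD : v ∈ D
    · rw [shiftUp_of_mem huD, shiftUp_of_mem hvD, add_sub_add_right_eq_sub]
      exact (abs_eq zero_le_one).1 (hsub u v huD hvD huv)
    · rw [hbd' (mem_bdry_of_adj huv huD hvD), shiftUp_of_notMem hvD]
      exact isHeight_baseHeight.sub_eq huv
    · exact absurd hv (not_oddSite.2 (isEvenV_iff_evenSite.1
        (heven v (mem_bdry_of_adj huv.symm hvD huD))))
    · rw [shiftUp_of_notMem huD, shiftUp_of_notMem hvD]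
      exact isHeight_baseHeight.sub_eq huv
  · by_cases hvD : v ∈ D
    · exact hbd' (by_contra fun hb => hv ⟨hvD, hb⟩)
    · exact shiftUp_of_notMem hvD

lemma shiftDown_mem_hom0 (heven : ∀ v ∈ bdry D, IsEvenV v)
    (hg : g ∈ Heights (D \ bdry D) baseHeight) : shiftDown D g ∈ Hom0 D := by
  refine ⟨⟨fun u v hu hv huv => ?_, fun v hv => ?_, fun v => shiftDown_of_notMem⟩, fun v hv => ?_⟩
  · rw [shiftDown_of_mem hu, shiftDown_of_mem hv, sub_sub_sub_cancel_right]
    exact hg.1.abs_sub huv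
  · have := hg.1.parity v
    rw [shiftDown_of_mem hv, Int.even_iff]
    omega
  · rw [shiftDown_of_mem hv.1, hg.2 v fun h => h.2 hv,
      baseHeight_of_evenSite (isEvenV_iff_evenSite.1 (heven v hv)), sub_self]

lemma bijOn_shiftDown (heven : ∀ v ∈ bdry D, IsEvenV v) :
    Set.BijOn (shiftDown D) (Heights (D \ bdry D) baseHeight) (Hom0 D) := by
  refine Set.InvOn.bijOn (f' := shiftUp D) ⟨fun g hg => funext fun v => ?_,
    fun h hh => funext fun v => ?_⟩ (fun _ => shiftDown_mem_hom0 heven)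
    fun _ => shiftUp_mem_heights heven
  · by_cases hv : v ∈ D
    · rw [shiftUp_of_mem hv, shiftDown_of_mem hv, sub_add_cancel]
    · rw [shiftUp_of_notMem hv, hg.2 v fun h => hv h.1]
  · by_cases hv : v ∈ D
    · rw [shiftDown_of_mem hv, shiftUp_of_mem hv, add_sub_cancel_right]
    · rw [shiftDown_of_notMem hv, hh.1.2.2 v hv]

lemma hCross_shiftDown (hD : Lam2 a n ⊆ D) (hg : HCross adj a n (0 < g ·)) :
    HCross adj a n (0 ≤ shiftDown D g ·) := by
  obtain ⟨p, hp, hchain, hmem, hends⟩ := hg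
  refine ⟨p, hp, hchain, fun v hv => ⟨(hmem v hv).1, ?_⟩, hends⟩
  change 0 ≤ shiftDown D g v
  rw [shiftDown_of_mem (hD (hmem v hv).1)]
  exact Int.le_sub_one_of_lt (hmem v hv).2

lemma ncard_hom0_le_mul_hCross (hD : D.Finite) (heven : ∀ v ∈ bdry D, IsEvenV v) (ha : 0 ≤ a)
    (hn : 0 < n) {J : ℕ} (hJ : a < n * J) (hrect : Lam2 a n ⊆ D) :
    (Hom0 D).ncard ≤ (128 * (128 * 128)) ^ J * 4 *
      (Hom0 D ∩ {h | HCross adj a n (0 ≤ h ·)}).ncard := by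
  have hbij := bijOn_shiftDown heven
  have hF := isInnerDomain_sdiff_bdry hD heven
  have hfin := finite_heights hF.finite baseHeight
  have hcount := ncard_heights_le_mul_hCross_pos hF ha hn hJ fun v hv hodd =>
    ⟨hrect hv, fun hb => not_oddSite.2 (isEvenV_iff_evenSite.1 (heven v hb)) hodd⟩
  rw [← hbij.image_eq] at *
  rw [hbij.injOn.ncard_image]
  refine hcount.trans (Nat.mul_le_mul_left _ (Set.ncard_le_ncard_of_injOn (shiftDown D) ?_
    (hbij.injOn.mono fun _ hg => hg.1) ((hfin.image _).subset Set.inter_subset_left)))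
  exact fun g hg => ⟨⟨g, hg.1, rfl⟩, hCross_shiftDown hrect hg.2⟩

lemma finite_hom0 (hD : D.Finite) (heven : ∀ v ∈ bdry D, IsEvenV v) : (Hom0 D).Finite :=
  (bijOn_shiftDown heven).image_eq ▸
    (finite_heights (hD.subset Set.sdiff_subset) baseHeight).image _

lemma nonempty_hom0 (heven : ∀ v ∈ bdry D, IsEvenV v) : (Hom0 D).Nonempty :=
  ⟨_, shiftDown_mem_hom0 heven ⟨isHeight_baseHeight, fun _ _ => rfl⟩⟩

end Shift

lemma inv_le_pr {α : Type*} {S A : Set α} {C : ℕ} (hfin : S.Finite) (hne : S.Nonempty)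
    (h : S.ncard ≤ C * (S ∩ A).ncard) : (C : ℝ)⁻¹ ≤ pr S A := by
  have hpos : 0 < S.ncard := (Set.ncard_pos hfin).2 hne
  have hC : 0 < C := Nat.pos_of_mul_pos_right (hpos.trans_le h)
  rw [pr, Nat.card_coe_set_eq, Nat.card_coe_set_eq, le_div_iff₀ (by exact_mod_cast hpos),
    inv_mul_le_iff₀ (by exact_mod_cast hC)]
  exact_mod_cast h

lemma floor_mul_lt_mul_ceil_add_one (ρ : ℝ) {n : ℕ} (hn : 1 ≤ n) :
    ⌊ρ * n⌋ < (n : ℤ) * (⌈ρ⌉₊ + 1 : ℕ) := by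
  rw [Int.floor_lt]
  push_cast
  have hn' : (0 : ℝ) < n := by exact_mod_cast hn
  calc ρ * n ≤ ⌈ρ⌉₊ * n := by gcongr; exact Nat.le_ceil ρ
    _ < n * (⌈ρ⌉₊ + 1) := by linarith

theorem crossing_nonneg_general :
    ∀ ρ : ℝ, 0 < ρ → ∃ c : ℝ, 0 < c ∧
      ∀ n : ℕ, 1 ≤ n → ∀ D : Set V, D.Finite → (∀ v ∈ bdry D, IsEvenV v) →
        Lam2 ⌊ρ * n⌋ (n : ℤ) ⊆ D →
        c ≤ pr (Hom0 D) {h | HCross adj ⌊ρ * n⌋ (n : ℤ) fun v => 0 ≤ h v} := by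
  intro ρ hρ
  refine ⟨(((128 * (128 * 128)) ^ (⌈ρ⌉₊ + 1) * 4 : ℕ) : ℝ)⁻¹, by positivity, ?_⟩
  intro n hn D hD heven hrect
  exact inv_le_pr (finite_hom0 hD heven) (nonempty_hom0 heven) <|
    ncard_hom0_le_mul_hCross hD heven (Int.floor_nonneg.2 (by positivity)) (by omega)
      (floor_mul_lt_mul_ceil_add_one ρ hn) hrect

/-- Crossings of `h ≥ 0` under `0` boundary conditions have probability
bounded away from `0`. -/
theorem crossing_nonneg :
    ∀ ρ : ℝ, 0 < ρ → ∃ c : ℝ, 0 < c ∧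
      ∀ n : ℕ, 1 ≤ n → ∀ D : Set V, IsEvenDomain D → Lam2 ⌊ρ * n⌋ (n : ℤ) ⊆ D →
        c ≤ pr (Hom0 D) {h | HCross adj ⌊ρ * n⌋ (n : ℤ) fun v => 0 ≤ h v} := by
  intro ρ hρ
  obtain ⟨c, hc, hbound⟩ := crossing_nonneg_general ρ hρ
  exact ⟨c, hc, fun n hn D hD => hbound n hn D hD.1.1 hD.2⟩

end SquareIce
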